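/- arXiv:2203.04620 — 3 statements merged into one kernel-verified Lean document; each statement's English description precedes it below -/
import Mathlib

section
/- Suppose that every irreducible Gorenstein polytope of dimension d and degree s with d ≥ 3s is a lattice pyramid. Then every Gorenstein polytope of dimension d and degree s with d ≥ 3s is a lattice pyramid. -/
open Pointwise

/-- A point of `ℝ^d` is a lattice point if all its coordinates are integers. -/
def IsLatticePt {d : ℕ} (x : Fin d → ℝ) : Prop := ∀ i, ∃ z : ℤ, x i = (z : ℝ)

/-- A lattice polytope is the (non-empty) convex hull of finitely many lattice points. -/
def IsLatticePolytope {d : ℕ} (P : Set (Fin d → ℝ)) : Prop :=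
  ∃ V : Finset (Fin d → ℝ), V.Nonempty ∧ (∀ v ∈ V, IsLatticePt v) ∧
    P = convexHull ℝ (V : Set (Fin d → ℝ))

/-- The dimension of a polytope: the dimension of the direction of its affine hull. -/
noncomputable def polyDim {d : ℕ} (P : Set (Fin d → ℝ)) : ℕ :=
  Module.finrank ℝ (affineSpan ℝ P).direction

/-- A polytope is hollow if its relative interior contains no lattice point. -/
def IsHollow {d : ℕ} (P : Set (Fin d → ℝ)) : Prop :=
  ∀ x ∈ intrinsicInterior ℝ P, ¬ IsLatticePt x

/-- A facet of `P`: a non-empty exposed face of dimension `dim P - 1`. -/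
def IsFacet {d : ℕ} (P F : Set (Fin d → ℝ)) : Prop :=
  IsExposed ℝ P F ∧ F.Nonempty ∧ polyDim F + 1 = polyDim P

/-- An affine functional is integral on `P` if it takes integer values on all
lattice points of the affine hull of `P`. -/
def IsIntegralOn {d : ℕ} (P : Set (Fin d → ℝ)) (u : (Fin d → ℝ) →ᵃ[ℝ] ℝ) : Prop :=
  ∀ y ∈ affineSpan ℝ P, IsLatticePt y → ∃ z : ℤ, u y = (z : ℝ)

/-- `P` is reflexive: there is a lattice point `x` in the relative interior of `P`
such that every facet of `P` has lattice distance one from `x`, i.e. for every facet `F`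
there is an integral affine functional that is constant on `F` and exceeds its value
at `x` by exactly `1`. -/
def IsReflexivePolytope {d : ℕ} (P : Set (Fin d → ℝ)) : Prop :=
  ∃ x ∈ intrinsicInterior ℝ P, IsLatticePt x ∧
    ∀ F : Set (Fin d → ℝ), IsFacet P F →
      ∃ u : (Fin d → ℝ) →ᵃ[ℝ] ℝ, IsIntegralOn P u ∧ ∀ f ∈ F, u f = u x + 1

/-- `P` is Gorenstein if some positive integer multiple `r • P` is reflexive. -/
def IsGorenstein {d : ℕ} (P : Set (Fin d → ℝ)) : Prop :=
  ∃ r : ℕ, 0 < r ∧ IsReflexivePolytope ((r : ℝ) • P)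

/-- `P` is Gorenstein of codegree `r` if `r • P` is reflexive (`r` positive). -/
def IsGorensteinOfCodeg {d : ℕ} (P : Set (Fin d → ℝ)) (r : ℕ) : Prop :=
  0 < r ∧ IsReflexivePolytope ((r : ℝ) • P)

/-- The codegree of `P`: the smallest positive integer `r` such that `r • P` is not hollow. -/
noncomputable def polyCodeg {d : ℕ} (P : Set (Fin d → ℝ)) : ℕ :=
  sInf {r : ℕ | 0 < r ∧ ¬ IsHollow ((r : ℝ) • P)}

/-- The degree of `P`: `dim P + 1 - codeg P`. -/
noncomputable def polyDeg {d : ℕ} (P : Set (Fin d → ℝ)) : ℕ :=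
  polyDim P + 1 - polyCodeg P

/-- Unimodular equivalence of lattice polytopes: an affine map carrying `P` onto `Q`,
with an affine inverse on affine hulls, such that both maps preserve lattice points of
the affine hulls. -/
def LatticeIso {d e : ℕ} (P : Set (Fin d → ℝ)) (Q : Set (Fin e → ℝ)) : Prop :=
  ∃ (f : (Fin d → ℝ) →ᵃ[ℝ] (Fin e → ℝ)) (g : (Fin e → ℝ) →ᵃ[ℝ] (Fin d → ℝ)),
    f '' P = Q ∧ g '' Q = P ∧
    (∀ x ∈ affineSpan ℝ P, g (f x) = x) ∧ (∀ y ∈ affineSpan ℝ Q, f (g y) = y) ∧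
    (∀ x ∈ affineSpan ℝ P, IsLatticePt x → IsLatticePt (f x)) ∧
    (∀ y ∈ affineSpan ℝ Q, IsLatticePt y → IsLatticePt (g y))

/-- The lattice pyramid `conv(P' × {0}, (0,1))` over `P' ⊆ ℝ^m`. -/
def pyramidOver {m : ℕ} (P' : Set (Fin m → ℝ)) : Set (Fin (m + 1) → ℝ) :=
  convexHull ℝ ((fun x => Fin.snoc x (0 : ℝ)) '' P' ∪ {Fin.snoc (0 : Fin m → ℝ) (1 : ℝ)})

/-- `P` is a lattice pyramid if it is a single lattice point or is isomorphic to a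
lattice pyramid over a lattice polytope. -/
def IsLatticePyramid {d : ℕ} (P : Set (Fin d → ℝ)) : Prop :=
  (∃ x : Fin d → ℝ, IsLatticePt x ∧ P = {x}) ∨
  ∃ (m : ℕ) (P' : Set (Fin m → ℝ)), IsLatticePolytope P' ∧ LatticeIso P (pyramidOver P')

/-- The Cayley polytope `P_1 * ⋯ * P_l ⊆ ℝ^{n+l}` of `P_1, …, P_l ⊆ ℝ^n`:
the convex hull of the sets `P_i × {e_i}`. -/
def cayley {n l : ℕ} (P : Fin l → Set (Fin n → ℝ)) : Set (Fin (n + l) → ℝ) :=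
  convexHull ℝ (⋃ i : Fin l, (fun x => Fin.append x (Pi.single i (1 : ℝ))) '' P i)

/-- The Cayley polytope `F * G ⊆ ℝ^{n+2}` of two polytopes `F, G ⊆ ℝ^n`. -/
def cayleyTwo {n : ℕ} (F G : Set (Fin n → ℝ)) : Set (Fin (n + 2) → ℝ) :=
  convexHull ℝ
    ((fun x => Fin.append x ![(1 : ℝ), 0]) '' F ∪ (fun x => Fin.append x ![(0 : ℝ), 1]) '' G)

/-- `P` is a Cayley join of `F` and `G` if `P ≅ F * G` and `dim F + dim G = dim P - 1`. -/
def IsCayleyJoin {d n : ℕ} (P : Set (Fin d → ℝ)) (F G : Set (Fin n → ℝ)) : Prop :=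
  LatticeIso P (cayleyTwo F G) ∧ polyDim F + polyDim G + 1 = polyDim P

/-- `P` is reducible with factors `F` and `G`: a Cayley join with
`codeg F + codeg G = codeg P`. -/
def IsReducibleWith {d n : ℕ} (P : Set (Fin d → ℝ)) (F G : Set (Fin n → ℝ)) : Prop :=
  IsCayleyJoin P F G ∧ polyCodeg F + polyCodeg G = polyCodeg P

/-- `P` is reducible: it is a single lattice point (by convention) or is reducible
with some factors `F` and `G` which are lattice polytopes. -/
def IsReducible {d : ℕ} (P : Set (Fin d → ℝ)) : Prop :=
  (∃ x : Fin d → ℝ, IsLatticePt x ∧ P = {x}) ∨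
  ∃ (n : ℕ) (F G : Set (Fin n → ℝ)), IsLatticePolytope F ∧ IsLatticePolytope G ∧
    IsReducibleWith P F G

/-- `P` is a Cayley polytope: a single lattice point, or isomorphic to a Cayley polytope
of `l > 1` lattice polytopes. -/
def IsCayleyPolytope {d : ℕ} (P : Set (Fin d → ℝ)) : Prop :=
  (∃ x : Fin d → ℝ, IsLatticePt x ∧ P = {x}) ∨
  ∃ (n l : ℕ) (Q : Fin l → Set (Fin n → ℝ)), 1 < l ∧ (∀ i, IsLatticePolytope (Q i)) ∧
    LatticeIso P (cayley Q)

/-- `P` is IDP if for every `k ≥ 2` every lattice point of `k • P` is a sum of `k`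
lattice points of `P`. -/
def IsIDP {d : ℕ} (P : Set (Fin d → ℝ)) : Prop :=
  ∀ k : ℕ, 2 ≤ k → ∀ x : Fin d → ℝ, IsLatticePt x → x ∈ (k : ℝ) • P →
    ∃ p : Fin k → (Fin d → ℝ), (∀ i, p i ∈ P ∧ IsLatticePt (p i)) ∧ x = ∑ i, p i

/-- The standard simplex `Δ_s = conv(0, e_1, …, e_s) ⊆ ℝ^s`. -/
def stdSimplexLP (s : ℕ) : Set (Fin s → ℝ) :=
  convexHull ℝ (insert 0 (Set.range fun i : Fin s => Pi.single i (1 : ℝ)))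

/-- The product of `F ⊆ ℝ^m` and `G ⊆ ℝ^n` inside `ℝ^{m+n}`. -/
def prodPoly {m n : ℕ} (F : Set (Fin m → ℝ)) (G : Set (Fin n → ℝ)) : Set (Fin (m + n) → ℝ) :=
  (fun p : (Fin m → ℝ) × (Fin n → ℝ) => Fin.append p.1 p.2) '' (F ×ˢ G)

/-- The free join `conv(F × 0 × {0} ∪ 0 × G × {1}) ⊆ ℝ^m × ℝ^n × ℝ`. -/
def freeJoin {m n : ℕ} (F : Set (Fin m → ℝ)) (G : Set (Fin n → ℝ)) :
    Set (Fin (m + n + 1) → ℝ) :=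
  convexHull ℝ
    ((fun x => Fin.snoc (Fin.append x (0 : Fin n → ℝ)) (0 : ℝ)) '' F ∪
     (fun y => Fin.snoc (Fin.append (0 : Fin m → ℝ) y) (1 : ℝ)) '' G)

section General
variable {E : Type*} [NormedAddCommGroup E] [NormedSpace ℝ E]

theorem ri_iff_metric {P : Set E} {x : E} :
    x ∈ intrinsicInterior ℝ P ↔
      x ∈ P ∧ ∃ ε > 0, ∀ y ∈ affineSpan ℝ P, dist y x < ε → y ∈ P := by
  rw [mem_intrinsicInterior]
  constructor
  · rintro ⟨y, hy, rfl⟩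
    refine ⟨(interior_subset hy : y ∈ Subtype.val ⁻¹' P), ?_⟩
    rw [mem_interior_iff_mem_nhds, Metric.mem_nhds_iff] at hy
    obtain ⟨ε, hε, h⟩ := hy
    exact ⟨ε, hε, fun z hz hd => h (show (⟨z, hz⟩ : affineSpan ℝ P) ∈ _ from hd)⟩
  · rintro ⟨hx, ε, hε, h⟩
    refine ⟨⟨x, subset_affineSpan ℝ P hx⟩, ?_, rfl⟩
    rw [mem_interior_iff_mem_nhds, Metric.mem_nhds_iff]
    exact ⟨ε, hε, fun z hz => h z z.2 hz⟩

theorem ri_iff_alg [FiniteDimensional ℝ E] {P : Set E} (hP : Convex ℝ P) {x : E} :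
    x ∈ intrinsicInterior ℝ P ↔
      x ∈ P ∧ ∀ y ∈ P, ∃ ε > (0 : ℝ), x + ε • (x - y) ∈ P := by
  constructor
  · intro h
    obtain ⟨hx, ε, hε, h⟩ := ri_iff_metric.1 h
    refine ⟨hx, fun y hy => ?_⟩
    have hpos : 0 < ‖x - y‖ + 1 := by positivity
    refine ⟨ε / (‖x - y‖ + 1), by positivity, h _ ?_ ?_⟩
    · have := AffineMap.lineMap_mem (-(ε / (‖x - y‖ + 1))) (subset_affineSpan ℝ P hx)
        (subset_affineSpan ℝ P hy)
      rw [AffineMap.lineMap_apply] at this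
      convert this using 1
      simp only [vsub_eq_sub, vadd_eq_add]
      module
    · rw [dist_eq_norm, add_sub_cancel_left, norm_smul, Real.norm_of_nonneg (by positivity),
        div_mul_eq_mul_div, div_lt_iff₀ hpos]
      nlinarith [norm_nonneg (x - y)]
  · rintro ⟨hx, h⟩
    obtain ⟨y, hy⟩ := Set.Nonempty.intrinsicInterior hP ⟨x, hx⟩
    obtain ⟨hyP, δ, hδ, hb⟩ := ri_iff_metric.1 hy
    obtain ⟨ε, hε, hz⟩ := h y hyP
    rw [ri_iff_metric]
    refine ⟨hx, δ * (ε / (1 + ε)), by positivity, fun w hw hd => ?_⟩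
    set z := x + ε • (x - y) with hzdef
    set y' := y + ((1 + ε) / ε) • (w - x) with hy'
    have hy'P : y' ∈ P := by
      apply hb
      · have h1 : w - x ∈ (affineSpan ℝ P).direction :=
          AffineSubspace.vsub_mem_direction hw (subset_affineSpan ℝ P hx)
        have := AffineSubspace.vadd_mem_of_mem_direction
          (Submodule.smul_mem _ ((1 + ε) / ε) h1) (subset_affineSpan ℝ P hyP)
        rwa [vadd_eq_add, add_comm] at this
      · rw [dist_eq_norm, hy', add_sub_cancel_left, norm_smul, Real.norm_of_nonneg (by positivity),
          ← dist_eq_norm]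
        calc (1 + ε) / ε * dist w x < (1 + ε) / ε * (δ * (ε / (1 + ε))) := by gcongr
          _ = δ := by field_simp
    have hw' : w = (1 / (1 + ε)) • z + (ε / (1 + ε)) • y' := by
      rw [hy', hzdef]
      match_scalars <;> field_simp <;> ring
    rw [hw']
    exact hP hz hy'P (by positivity) (by positivity) (by field_simp)

theorem mem_smul_hull {ι : Type*} [Fintype ι] (p : ι → E) {r : ℝ} (hr : 0 < r) {x : E} :
    x ∈ r • convexHull ℝ (Set.range p) ↔
      ∃ c : ι → ℝ, (∀ i, 0 ≤ c i) ∧ ∑ i, c i = r ∧ ∑ i, c i • p i = x := by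
  classical
  have key : convexHull ℝ (Set.range p) =
      (Fintype.linearCombination ℝ p) '' stdSimplex ℝ ι := by
    rw [← convexHull_rangle_single_eq_stdSimplex, LinearMap.image_convexHull, ← Set.range_comp]
    congr 2
    ext i
    simp [Fintype.linearCombination_apply]
  rw [key]
  constructor
  · rintro ⟨y, ⟨c, hc, rfl⟩, rfl⟩
    refine ⟨fun i => r * c i, fun i => mul_nonneg hr.le (hc.1 i), ?_, ?_⟩
    · rw [← Finset.mul_sum, hc.2, mul_one]
    · simp [Fintype.linearCombination_apply, Finset.smul_sum, mul_smul]
  · rintro ⟨c, hc, hs, rfl⟩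
    refine ⟨_, ⟨fun i => c i / r, ⟨fun i => div_nonneg (hc i) hr.le, ?_⟩, rfl⟩, ?_⟩
    · rw [← Finset.sum_div, hs, div_self hr.ne']
    · simp only [Fintype.linearCombination_apply, Finset.smul_sum, smul_smul]
      refine Finset.sum_congr rfl fun i _ => ?_
      rw [mul_div_cancel₀ _ hr.ne']

theorem ri_smul_hull [FiniteDimensional ℝ E] {ι : Type*} [Fintype ι] [Nonempty ι] (p : ι → E)
    {r : ℝ} (hr : 0 < r) {x : E} :
    x ∈ intrinsicInterior ℝ (r • convexHull ℝ (Set.range p)) ↔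
      ∃ c : ι → ℝ, (∀ i, 0 < c i) ∧ ∑ i, c i = r ∧ ∑ i, c i • p i = x := by
  have hconv : Convex ℝ (r • convexHull ℝ (Set.range p)) := (convex_convexHull ℝ _).smul r
  have hcard : (0 : ℝ) < Fintype.card ι := by exact_mod_cast Fintype.card_pos
  rw [ri_iff_alg hconv]
  constructor
  · rintro ⟨hx, h⟩
    obtain ⟨ε, hε, hz⟩ := h (∑ i, (r / Fintype.card ι) • p i)
      ((mem_smul_hull p hr).2 ⟨fun _ => r / Fintype.card ι, fun _ => by positivity,
        by simp; field_simp, rfl⟩)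
    obtain ⟨c, hc, hs, he⟩ := (mem_smul_hull p hr).1 hz
    refine ⟨fun i => (1 / (1 + ε)) * (c i + ε * (r / Fintype.card ι)), fun i => ?_, ?_, ?_⟩
    · have := hc i
      positivity
    · rw [← Finset.mul_sum, Finset.sum_add_distrib, hs]
      simp
      field_simp
    · simp only [mul_smul, add_smul, ← Finset.smul_sum, Finset.sum_add_distrib]
      rw [he]
      simp only [← Finset.smul_sum]
      match_scalars <;> field_simp <;> ring
  · rintro ⟨c, hc, hs, rfl⟩
    refine ⟨(mem_smul_hull p hr).2 ⟨c, fun i => (hc i).le, hs, rfl⟩, fun y hy => ?_⟩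
    obtain ⟨d, hd, hds, rfl⟩ := (mem_smul_hull p hr).1 hy
    obtain ⟨i0, hi0⟩ := Finite.exists_min c
    have hdr : ∀ i, d i ≤ r := fun i => by
      rw [← hds]; exact Finset.single_le_sum (fun j _ => hd j) (Finset.mem_univ i)
    refine ⟨c i0 / r, div_pos (hc i0) hr, (mem_smul_hull p hr).2
      ⟨fun i => c i + c i0 / r * (c i - d i), fun i => ?_, ?_, ?_⟩⟩
    · have h1 : c i0 / r * d i ≤ c i0 := by
        rw [div_mul_eq_mul_div, div_le_iff₀ hr]
        exact mul_le_mul_of_nonneg_left (hdr i) (hc i0).le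
      have h2 : 0 < c i0 / r * c i := mul_pos (div_pos (hc i0) hr) (hc i)
      have := hi0 i
      nlinarith
    · rw [Finset.sum_add_distrib, ← Finset.mul_sum, Finset.sum_sub_distrib, hs, hds]; ring
    · simp only [add_smul, mul_smul, sub_smul, Finset.sum_add_distrib, ← Finset.smul_sum,
        Finset.sum_sub_distrib]

theorem exists_support [FiniteDimensional ℝ E] {Q : Set E} (hQ : Convex ℝ Q) {z : E}
    (hz : z ∈ Q) (hz' : z ∉ intrinsicInterior ℝ Q) :
    ∃ l : E →ₗ[ℝ] ℝ, (∀ q ∈ Q, l q ≤ l z) ∧ ∃ q ∈ Q, l q < l z := by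
  set D := (affineSpan ℝ Q).direction with hD
  let S : Set D := {w | z + (w : E) ∈ Q}
  have hzA := subset_affineSpan ℝ Q hz
  have hS : Convex ℝ S := by
    intro a ha b hb s t hs ht hst
    have := hQ ha hb hs ht hst
    show z + ((s • a + t • b : D) : E) ∈ Q
    convert this using 1
    push_cast
    have : z = (s + t) • z := by rw [hst, one_smul]
    nth_rw 1 [this]
    module
  obtain ⟨y, hy⟩ := Set.Nonempty.intrinsicInterior hQ ⟨z, hz⟩
  obtain ⟨hyQ, δ, hδ, hb⟩ := ri_iff_metric.1 hy
  have hyz : y - z ∈ D := AffineSubspace.vsub_mem_direction (subset_affineSpan ℝ Q hyQ) hzA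
  have hw0 : (⟨y - z, hyz⟩ : D) ∈ interior S := by
    rw [mem_interior_iff_mem_nhds, Metric.mem_nhds_iff]
    refine ⟨δ, hδ, fun w hw => hb _ ?_ ?_⟩
    · have := AffineSubspace.vadd_mem_of_mem_direction w.2 hzA
      rwa [vadd_eq_add, add_comm] at this
    · rw [Metric.mem_ball, Subtype.dist_eq, dist_eq_norm] at hw
      rw [dist_eq_norm]
      convert hw using 2
      simp only
      abel
  have h0 : (0 : D) ∉ interior S := by
    intro h
    apply hz'
    rw [mem_interior_iff_mem_nhds, Metric.mem_nhds_iff] at h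
    obtain ⟨ε, hε, h⟩ := h
    refine ri_iff_metric.2 ⟨hz, ε, hε, fun w hw hd => ?_⟩
    have hwD : w - z ∈ D := AffineSubspace.vsub_mem_direction hw hzA
    have : (⟨w - z, hwD⟩ : D) ∈ S := h (by
      rw [Metric.mem_ball, Subtype.dist_eq, dist_eq_norm]
      rw [dist_eq_norm] at hd
      simpa using hd)
    have h2 : z + (w - z) ∈ Q := this
    simpa using h2
  obtain ⟨f, hf⟩ := geometric_hahn_banach_open_point hS.interior isOpen_interior h0
  obtain ⟨l, hl⟩ := LinearMap.exists_extend (f : D →ₗ[ℝ] ℝ)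
  have hlf : ∀ w : D, l w = f w := fun w => by
    have := LinearMap.congr_fun hl w
    simpa using this
  refine ⟨l, fun q hq => ?_, y, hyQ, ?_⟩
  · have hqD : q - z ∈ D := AffineSubspace.vsub_mem_direction (subset_affineSpan ℝ Q hq) hzA
    have hqS : (⟨q - z, hqD⟩ : D) ∈ S := by
      show z + (q - z) ∈ Q
      simpa using hq
    have hcl : (⟨q - z, hqD⟩ : D) ∈ closure (interior S) := by
      rw [hS.closure_interior_eq_closure_of_nonempty_interior ⟨_, hw0⟩]
      exact subset_closure hqS
    have : (⟨q - z, hqD⟩ : D) ∈ {w : D | f w ≤ 0} :=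
      closure_minimal (fun a ha => by simpa using (hf a ha).le)
        (isClosed_le f.continuous continuous_const) hcl
    have h3 : f ⟨q - z, hqD⟩ ≤ 0 := this
    rw [← hlf] at h3
    simp only [map_sub] at h3
    linarith
  · have := hf _ hw0
    rw [← hlf, map_zero] at this
    simp only [map_sub] at this
    linarith

/-- an affine function vanishing on a codimension one subset and at one more point vanishes -/
theorem affine_vanish [FiniteDimensional ℝ E] {A P : Set E} (hne : A.Nonempty) (hAP : A ⊆ affineSpan ℝ P)
    (hd : Module.finrank ℝ (affineSpan ℝ A).direction + 1
      = Module.finrank ℝ (affineSpan ℝ P).direction)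
    {x : E} (hx : x ∈ affineSpan ℝ P) (hxA : x ∉ affineSpan ℝ A) {φ ψ : E →ᵃ[ℝ] ℝ}
    (h1 : ∀ a ∈ A, φ a = ψ a) (h2 : φ x = ψ x) : ∀ y ∈ affineSpan ℝ P, φ y = ψ y := by
  have hle : affineSpan ℝ (insert x A) ≤ affineSpan ℝ P :=
    affineSpan_le.2 (Set.insert_subset hx hAP)
  have hlt : affineSpan ℝ A < affineSpan ℝ (insert x A) := by
    refine lt_of_le_of_ne (affineSpan_mono ℝ (Set.subset_insert _ _)) fun h => hxA ?_
    rw [h]; exact subset_affineSpan ℝ _ (Set.mem_insert _ _)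
  have hlt' := AffineSubspace.direction_lt_of_nonempty hlt ((affineSpan_nonempty ℝ).2 hne)
  have h3 := Submodule.finrank_lt_finrank_of_lt hlt'
  have h4 := AffineSubspace.direction_le hle
  have h5 := Submodule.finrank_mono h4
  have h6 := Submodule.eq_of_le_of_finrank_eq h4 (by omega)
  have h7 := AffineSubspace.eq_of_direction_eq_of_nonempty_of_le h6
    ((affineSpan_nonempty ℝ).2 ⟨x, Set.mem_insert _ _⟩) hle
  intro y hy
  rw [← h7] at hy
  refine AffineMap.eqOn_affineSpan (s := insert x A) ?_ hy
  rintro z (rfl | hz)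
  exacts [h2, h1 z hz]

end General

theorem polyDim_eq {N : ℕ} (s : Set (Fin N → ℝ)) :
    polyDim s = Module.finrank ℝ (vectorSpan ℝ s) := by
  unfold polyDim
  rw [direction_affineSpan]

theorem exists_facet {N : ℕ} {ι : Type*} [Fintype ι] (p : ι → Fin N → ℝ)
    {z : Fin N → ℝ} (hz : z ∈ convexHull ℝ (Set.range p))
    (hz' : z ∉ intrinsicInterior ℝ (convexHull ℝ (Set.range p))) :
    ∃ Φ, IsFacet (convexHull ℝ (Set.range p)) Φ ∧ z ∈ Φ := by
  classical
  set Q := convexHull ℝ (Set.range p) with hQ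
  have hpQ : ∀ i, p i ∈ Q := fun i => subset_convexHull ℝ _ ⟨i, rfl⟩
  have hbd : ∀ (l : (Fin N → ℝ) →ₗ[ℝ] ℝ) (c : ℝ), (∀ i, l (p i) ≤ c) → ∀ q ∈ Q, l q ≤ c := by
    intro l c h q hq
    have : Q ⊆ {q | l q ≤ c} :=
      convexHull_min (by rintro _ ⟨i, rfl⟩; exact h i) (convex_halfSpace_le l.isLinear c)
    exact this hq
  let S : Set ((Fin N → ℝ) →ₗ[ℝ] ℝ) := {l | (∀ i, l (p i) ≤ l z) ∧ ∃ i, l (p i) < l z}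
  have hSne : S.Nonempty := by
    obtain ⟨l, hl, q, hq, hlt⟩ := exists_support (convex_convexHull ℝ _) hz hz'
    refine ⟨l, fun i => hl _ (hpQ i), ?_⟩
    by_contra! hcon
    have := hbd (-l) (-l z) (fun i => by simpa using hcon i) q hq
    simp at this
    linarith
  let m : ((Fin N → ℝ) →ₗ[ℝ] ℝ) → ℕ := fun l => (Finset.univ.filter fun i => l (p i) = l z).card
  have hmax : ∃ l ∈ S, ∀ l' ∈ S, m l' ≤ m l := by
    have hfin : (m '' S).Finite := (Set.finite_Iic (Fintype.card ι)).subset (by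
      rintro _ ⟨l, -, rfl⟩; exact Finset.card_le_univ _)
    obtain ⟨l, hl, hm⟩ := Set.exists_max_image (m '' S) id hfin (hSne.image m)
    obtain ⟨l0, hl0, rfl⟩ := hl
    exact ⟨l0, hl0, fun l' hl' => hm _ ⟨l', hl', rfl⟩⟩
  obtain ⟨l, ⟨hl1, i0, hi0⟩, hlmax⟩ := hmax
  let Φ : Set (Fin N → ℝ) := {q | q ∈ Q ∧ l q = l z}
  have hzΦ : z ∈ Φ := ⟨hz, rfl⟩
  have hΦQ : Φ ⊆ Q := fun q hq => hq.1
  refine ⟨Φ, ⟨?_, ⟨z, hzΦ⟩, ?_⟩, hzΦ⟩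
  · intro _
    refine ⟨LinearMap.toContinuousLinearMap l, ?_⟩
    ext q
    constructor
    · rintro ⟨hq, he⟩
      exact ⟨hq, fun y hy => by
        simpa [he] using hbd l _ hl1 y hy⟩
    · rintro ⟨hq, he⟩
      exact ⟨hq, le_antisymm (hbd l _ hl1 q hq) (by simpa using he z hz)⟩
  · rw [polyDim_eq, polyDim_eq]
    have hins : vectorSpan ℝ (insert (p i0) Φ) ≤ vectorSpan ℝ Q :=
      vectorSpan_mono ℝ (Set.insert_subset (hpQ i0) hΦQ)
    have hlt : vectorSpan ℝ Φ < vectorSpan ℝ (insert (p i0) Φ) := by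
      refine lt_of_le_of_ne (vectorSpan_mono ℝ (Set.subset_insert _ _)) fun h => ?_
      have h1 : p i0 - z ∈ vectorSpan ℝ Φ := by
        rw [h]
        exact vsub_mem_vectorSpan ℝ (Set.mem_insert _ _) (Set.mem_insert_of_mem _ hzΦ)
      have h2 : vectorSpan ℝ Φ ≤ LinearMap.ker l := by
        rw [vectorSpan_def, Submodule.span_le]
        rintro _ ⟨a, ha, b, hb, rfl⟩
        simp [ha.2, hb.2]
      have := h2 h1
      simp at this
      linarith
    have h1 := Submodule.finrank_lt_finrank_of_lt hlt
    have h2 := finrank_vectorSpan_insert_le_set ℝ Φ (p i0)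
    have h3 := Submodule.finrank_mono hins
    by_contra hne
    have hlt2 : vectorSpan ℝ (insert (p i0) Φ) < vectorSpan ℝ Q := by
      refine lt_of_le_of_ne hins fun h => hne ?_
      rw [← h]; omega
    obtain ⟨w, hwQ, hw⟩ := SetLike.exists_of_lt hlt2
    obtain ⟨f, hfw, hf⟩ := Submodule.exists_le_ker_of_notMem hw
    have hfΦ : ∀ a ∈ insert (p i0) Φ, f a = f z := fun a ha => by
      have := hf (vsub_mem_vectorSpan ℝ ha (Set.mem_insert_of_mem _ hzΦ))
      simp at this
      linarith
    have hex : ∃ i, f (p i) ≠ f z := by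
      by_contra! hcon
      have h4 : vectorSpan ℝ Q ≤ LinearMap.ker f := by
        rw [vectorSpan_def, Submodule.span_le]
        have hc : ∀ q ∈ Q, f q = f z := fun q hq => le_antisymm
          (hbd f _ (fun i => (hcon i).le) q hq)
          (by have := hbd (-f) (-f z) (fun i => by simp [hcon i]) q hq
              simpa using this)
        rintro _ ⟨a, ha, b, hb, rfl⟩
        simp [hc a ha, hc b hb]
      exact hfw (h4 hwQ)
    obtain ⟨g, hgΦ, i1, hi1⟩ : ∃ g : (Fin N → ℝ) →ₗ[ℝ] ℝ, (∀ a ∈ insert (p i0) Φ, g a = g z) ∧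
        ∃ i, g z < g (p i) := by
      obtain ⟨i, hi⟩ := hex
      rcases lt_or_gt_of_ne hi with h | h
      · exact ⟨-f, fun a ha => by simp [hfΦ a ha], i, by simpa using h⟩
      · exact ⟨f, hfΦ, i, h⟩
    have hgl : ∀ i, g z < g (p i) → l (p i) < l z := fun i hi =>
      lt_of_le_of_ne (hl1 i) fun h => hi.ne' (hgΦ _ (Set.mem_insert_of_mem _ ⟨hpQ i, h⟩))
    obtain ⟨j, hj, hjm⟩ := Finset.exists_min_image (Finset.univ.filter fun i => g z < g (p i))
      (fun i => (l z - l (p i)) / (g (p i) - g z)) ⟨i1, by simpa using hi1⟩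
    have hj : g z < g (p j) := by simpa using hj
    set t := (l z - l (p j)) / (g (p j) - g z) with ht
    have htpos : 0 < t := div_pos (by linarith [hgl j hj]) (by linarith)
    have htj : t * (g (p j) - g z) = l z - l (p j) := by
      rw [ht]; field_simp [(by linarith : g (p j) - g z ≠ 0)]
    have hmem : l + t • g ∈ S := by
      refine ⟨fun i => ?_, i0, ?_⟩
      · simp only [LinearMap.add_apply, LinearMap.smul_apply, smul_eq_mul]
        rcases le_or_gt (g (p i)) (g z) with h | h
        · nlinarith [hl1 i]
        · have := hjm i (by simpa using h)
          rw [le_div_iff₀ (by linarith)] at this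
          linarith
      · simp only [LinearMap.add_apply, LinearMap.smul_apply, smul_eq_mul]
        rw [hgΦ (p i0) (Set.mem_insert _ _)]
        linarith
    have hle := hlmax _ hmem
    refine absurd hle (not_le.2 (Finset.card_lt_card ?_))
    rw [Finset.ssubset_iff_of_subset]
    · refine ⟨j, ?_, ?_⟩
      · simp only [Finset.mem_filter, Finset.mem_univ, true_and, LinearMap.add_apply,
          LinearMap.smul_apply, smul_eq_mul]
        linarith
      · simpa using (hgl j hj).ne
    · intro i hi
      simp only [Finset.mem_filter, Finset.mem_univ, true_and, LinearMap.add_apply,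
          LinearMap.smul_apply, smul_eq_mul] at hi ⊢
      rw [hgΦ (p i) (Set.mem_insert_of_mem _ ⟨hpQ i, hi⟩), hi]

theorem facet_lt {N : ℕ} {Q Φ : Set (Fin N → ℝ)} (hconv : Convex ℝ Q) (hΦ : IsFacet Q Φ)
    {x y : Fin N → ℝ} (hx : x ∈ Q) (hy : y ∈ intrinsicInterior ℝ Q)
    {u : (Fin N → ℝ) →ᵃ[ℝ] ℝ} (hu : ∀ f ∈ Φ, u f = u x + 1) : u y < u x + 1 := by
  obtain ⟨hexp, hne, hdim⟩ := hΦ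
  obtain ⟨l, hl⟩ := hexp hne
  obtain ⟨a, ha⟩ := hne
  have hΦQ : Φ ⊆ Q := fun q hq => by rw [hl] at hq; exact hq.1
  have hlq : ∀ q ∈ Q, l q ≤ l a := by
    have := ha; rw [hl] at this; exact this.2
  have hla : ∀ b ∈ Φ, l b = l a := fun b hb => by
    refine le_antisymm (hlq b (hΦQ hb)) ?_
    rw [hl] at hb
    exact hb.2 a (hΦQ ha)
  have hxΦ : x ∉ affineSpan ℝ Φ := by
    intro h
    have := AffineMap.eqOn_affineSpan (s := Φ) (f := u) (g := AffineMap.const ℝ _ (u x + 1))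
      (fun b hb => by simpa using hu b hb) h
    simp at this
  have hlx : l x < l a := by
    refine lt_of_le_of_ne (hlq x hx) fun h => hxΦ (subset_affineSpan ℝ _ ?_)
    rw [hl]
    exact ⟨hx, fun q hq => by rw [h]; exact hlq q hq⟩
  have hprop := affine_vanish ⟨a, ha⟩ (hΦQ.trans (subset_affineSpan ℝ Q)) hdim
    (subset_affineSpan ℝ _ hx) hxΦ
    (φ := (l a - l x) • (u - AffineMap.const ℝ _ (u x + 1)))
    (ψ := (l : (Fin N → ℝ) →ₗ[ℝ] ℝ).toAffineMap - AffineMap.const ℝ _ (l a))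
    (fun b hb => by simp [hu b hb, hla b hb]) (by simp)
  have hle : ∀ q ∈ Q, u q ≤ u x + 1 := fun q hq => by
    have h1 := hprop q (subset_affineSpan ℝ _ hq)
    simp at h1
    have h2 := hlq q hq
    by_contra hcon
    have : 0 < (l a - l x) * (u q - (u x + 1)) := mul_pos (by linarith) (by linarith)
    linarith
  have hyQ := intrinsicInterior_subset hy
  refine lt_of_le_of_ne (hle y hyQ) fun h => ?_
  obtain ⟨ε, hε, hz⟩ := ((ri_iff_alg hconv).1 hy).2 x hx
  have h1 := hle _ hz
  have h2 : u (y + ε • (y - x)) = u y + ε * (u y - u x) := by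
    have := u.map_vadd y (ε • (y - x))
    rw [vadd_eq_add, add_comm] at this
    rw [this, map_smul, smul_eq_mul, vadd_eq_add, ← vsub_eq_sub y x, AffineMap.linearMap_vsub,
      vsub_eq_sub, add_comm]
  rw [h2, h] at h1
  linarith

theorem reflexive_unique {N : ℕ} {ι : Type*} [Fintype ι] (p : ι → Fin N → ℝ)
    {x y : Fin N → ℝ} (hx : x ∈ intrinsicInterior ℝ (convexHull ℝ (Set.range p)))
    (hxl : IsLatticePt x)
    (hF : ∀ F : Set (Fin N → ℝ), IsFacet (convexHull ℝ (Set.range p)) F →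
      ∃ u : (Fin N → ℝ) →ᵃ[ℝ] ℝ, IsIntegralOn (convexHull ℝ (Set.range p)) u ∧
        ∀ f ∈ F, u f = u x + 1)
    (hy : y ∈ intrinsicInterior ℝ (convexHull ℝ (Set.range p))) (hyl : IsLatticePt y) :
    y = x := by
  by_contra hne
  set Q := convexHull ℝ (Set.range p) with hQ
  have hconv : Convex ℝ Q := convex_convexHull ℝ _
  have hcpt : IsCompact Q := (Set.finite_range p).isCompact_convexHull ℝ
  have hxQ := intrinsicInterior_subset hx
  have hyQ := intrinsicInterior_subset hy
  let T : Set ℝ := (fun t : ℝ => x + t • (y - x)) ⁻¹' Q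
  have hTc : IsClosed T := hcpt.isClosed.preimage (by fun_prop)
  have h1T : (1 : ℝ) ∈ T := by show x + (1 : ℝ) • (y - x) ∈ Q; simpa using hyQ
  have hTb : BddAbove T := by
    obtain ⟨R, hR⟩ := hcpt.isBounded.exists_norm_le
    have hpos : 0 < ‖y - x‖ := norm_pos_iff.2 (sub_ne_zero.2 hne)
    refine ⟨(R + ‖x‖) / ‖y - x‖, fun t ht => ?_⟩
    rw [le_div_iff₀ hpos]
    have h1 := hR _ ht
    have h2 : ‖t • (y - x)‖ ≤ ‖x + t • (y - x)‖ + ‖x‖ := by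
      have := norm_sub_le (x + t • (y - x)) x
      rwa [add_sub_cancel_left] at this
    rw [norm_smul, Real.norm_eq_abs] at h2
    have := mul_le_mul_of_nonneg_right (le_abs_self t) hpos.le
    linarith
  set t0 := sSup T with ht0
  have ht0T : t0 ∈ T := hTc.csSup_mem ⟨1, h1T⟩ hTb
  have h1t0 : 1 ≤ t0 := le_csSup hTb h1T
  have hzri : x + t0 • (y - x) ∉ intrinsicInterior ℝ Q := by
    intro h
    obtain ⟨ε, hε, hz⟩ := ((ri_iff_alg hconv).1 h).2 x hxQ
    have : t0 * (1 + ε) ∈ T := by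
      show x + (t0 * (1 + ε)) • (y - x) ∈ Q
      convert hz using 1
      module
    have := le_csSup hTb this
    nlinarith
  obtain ⟨Φ, hΦ, hzΦ⟩ := exists_facet p ht0T hzri
  obtain ⟨u, hui, hu⟩ := hF Φ hΦ
  have hlt := facet_lt hconv hΦ hxQ hy hu
  obtain ⟨a, ha⟩ := hui x (subset_affineSpan ℝ _ hxQ) hxl
  obtain ⟨b, hb⟩ := hui y (subset_affineSpan ℝ _ hyQ) hyl
  have hle : u y ≤ u x := by
    rw [ha, hb] at hlt ⊢
    have : b < a + 1 := by exact_mod_cast hlt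
    exact_mod_cast (by omega : b ≤ a)
  have h1 := hu _ hzΦ
  have h2 : u (x + t0 • (y - x)) = u x + t0 * (u y - u x) := by
    have := u.map_vadd x (t0 • (y - x))
    rw [vadd_eq_add, add_comm] at this
    rw [this, map_smul, smul_eq_mul, vadd_eq_add, ← vsub_eq_sub y x, AffineMap.linearMap_vsub,
      vsub_eq_sub, add_comm]
  rw [h2] at h1
  nlinarith

theorem IsLatticePt.add {d : ℕ} {x y : Fin d → ℝ} (hx : IsLatticePt x) (hy : IsLatticePt y) :
    IsLatticePt (x + y) := fun i => by
  obtain ⟨a, ha⟩ := hx i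
  obtain ⟨b, hb⟩ := hy i
  exact ⟨a + b, by simp [ha, hb]⟩

theorem IsLatticePt.sub {d : ℕ} {x y : Fin d → ℝ} (hx : IsLatticePt x) (hy : IsLatticePt y) :
    IsLatticePt (x - y) := fun i => by
  obtain ⟨a, ha⟩ := hx i
  obtain ⟨b, hb⟩ := hy i
  exact ⟨a - b, by simp [ha, hb]⟩

theorem IsLatticePt.nsmul {d : ℕ} {x : Fin d → ℝ} (hx : IsLatticePt x) (n : ℕ) :
    IsLatticePt ((n : ℝ) • x) := fun i => by
  obtain ⟨a, ha⟩ := hx i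
  exact ⟨n * a, by simp [ha]⟩

theorem IsLatticePt.sum {d : ℕ} {ι : Type*} (s : Finset ι) {x : ι → Fin d → ℝ}
    (hx : ∀ i, IsLatticePt (x i)) : IsLatticePt (∑ i ∈ s, x i) := by
  classical
  induction s using Finset.induction_on with
  | empty => intro i; exact ⟨0, by simp⟩
  | insert a s ha ih => rw [Finset.sum_insert ha]; exact (hx a).add ih

theorem lp_range {d : ℕ} {P : Set (Fin d → ℝ)} (h : IsLatticePolytope P) :
    ∃ (k : ℕ) (p : Fin (k + 1) → Fin d → ℝ), (∀ i, IsLatticePt (p i)) ∧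
      P = convexHull ℝ (Set.range p) := by
  obtain ⟨V, hne, hl, rfl⟩ := h
  obtain ⟨k, hk⟩ : ∃ k, V.card = k + 1 := ⟨V.card - 1, by have := hne.card_pos; omega⟩
  let e := V.equivFinOfCardEq hk
  refine ⟨k, fun i => (e.symm i : Fin d → ℝ), fun i => hl _ (e.symm i).2, ?_⟩
  congr 1
  ext x
  constructor
  · intro hx
    exact ⟨e ⟨x, hx⟩, by simp⟩
  · rintro ⟨i, rfl⟩
    exact (e.symm i).2

theorem lp_of_range {d : ℕ} {ι : Type*} [Finite ι] [Nonempty ι] (p : ι → Fin d → ℝ)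
    (hp : ∀ i, IsLatticePt (p i)) : IsLatticePolytope (convexHull ℝ (Set.range p)) := by
  classical
  have hf := Set.finite_range p
  refine ⟨hf.toFinset, ?_, ?_, by simp⟩
  · rw [Set.Finite.toFinset_nonempty]; exact Set.range_nonempty p
  · intro v hv
    rw [Set.Finite.mem_toFinset] at hv
    obtain ⟨i, rfl⟩ := hv
    exact hp i

theorem smul_sub_mem {d : ℕ} {P : Set (Fin d → ℝ)} {r : ℝ} {x p0 : Fin d → ℝ}
    (hx : x ∈ r • (affineSpan ℝ P : Set (Fin d → ℝ))) (hp : p0 ∈ affineSpan ℝ P) :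
    x - r • p0 ∈ (affineSpan ℝ P).direction := by
  obtain ⟨q, hq, rfl⟩ := hx
  show r • q - r • p0 ∈ _
  rw [← smul_sub]
  exact Submodule.smul_mem _ _ (AffineSubspace.vsub_mem_direction hq hp)

theorem add_mem_span {d : ℕ} {P : Set (Fin d → ℝ)} {x p0 : Fin d → ℝ}
    (hx : x ∈ (affineSpan ℝ P).direction) (hp : p0 ∈ affineSpan ℝ P) :
    x + p0 ∈ affineSpan ℝ P :=
  AffineSubspace.vadd_mem_of_mem_direction hx hp

theorem LatticeIso.symm {d e : ℕ} {P : Set (Fin d → ℝ)} {Q : Set (Fin e → ℝ)}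
    (h : LatticeIso P Q) : LatticeIso Q P := by
  obtain ⟨f, g, h1, h2, h3, h4, h5, h6⟩ := h
  exact ⟨g, f, h2, h1, h4, h3, h6, h5⟩

theorem LatticeIso.dim_le {d e : ℕ} {P : Set (Fin d → ℝ)} {Q : Set (Fin e → ℝ)}
    (h : LatticeIso P Q) : polyDim Q ≤ polyDim P := by
  obtain ⟨f, g, h1, h2, h3, h4, h5, h6⟩ := h
  unfold polyDim
  rw [← h1, ← AffineSubspace.map_span, AffineSubspace.map_direction]
  exact Submodule.finrank_map_le _ _

theorem LatticeIso.dim_eq {d e : ℕ} {P : Set (Fin d → ℝ)} {Q : Set (Fin e → ℝ)}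
    (h : LatticeIso P Q) : polyDim P = polyDim Q := le_antisymm h.symm.dim_le h.dim_le

theorem affine_sum {d e : ℕ} {ι : Type*} [Fintype ι] (f : (Fin d → ℝ) →ᵃ[ℝ] (Fin e → ℝ))
    (p : ι → Fin d → ℝ) (c : ι → ℝ) (i0 : ι) :
    ∑ i, c i • f (p i) =
      f ((∑ i, c i • p i - (∑ i, c i) • p i0) + p i0) + ((∑ i, c i) - 1) • f (p i0) := by
  have h1 : ∀ y v, f (v + y) = f.linear v + f y := fun y v => f.map_vadd y v
  rw [h1]
  have h2 : ∀ i, f (p i) = f.linear (p i) - f.linear (p i0) + f (p i0) := fun i => by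
    rw [← map_sub, ← h1]; simp
  rw [Finset.sum_congr rfl fun i _ => by rw [h2 i]]
  simp only [smul_add, smul_sub, Finset.sum_add_distrib, Finset.sum_sub_distrib, map_sub, map_sum,
    map_smul, ← Finset.sum_smul, sub_smul, one_smul]
  abel

theorem LatticeIso.not_hollow {d e : ℕ} {P : Set (Fin d → ℝ)} {Q : Set (Fin e → ℝ)}
    (h : LatticeIso P Q) (hP : IsLatticePolytope P) {r : ℕ} (hr : 0 < r)
    (hn : ¬ IsHollow ((r : ℝ) • P)) : ¬ IsHollow ((r : ℝ) • Q) := by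
  obtain ⟨f, g, h1, h2, h3, h4, h5, h6⟩ := h
  obtain ⟨k, p, hp, rfl⟩ := lp_range hP
  have hr' : (0 : ℝ) < r := by exact_mod_cast hr
  unfold IsHollow at hn ⊢
  push Not at hn ⊢
  obtain ⟨x, hx, hxl⟩ := hn
  have hxP := intrinsicInterior_subset hx
  rw [ri_smul_hull p hr'] at hx
  obtain ⟨c, hc, hs, rfl⟩ := hx
  rw [AffineMap.image_convexHull, ← Set.range_comp] at h1
  refine ⟨∑ i, c i • f (p i), ?_, ?_⟩
  · rw [← h1, ri_smul_hull _ hr']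
    exact ⟨c, hc, hs, rfl⟩
  · have hpm : ∀ i, p i ∈ affineSpan ℝ (convexHull ℝ (Set.range p)) := fun i =>
      subset_affineSpan ℝ _ (subset_convexHull ℝ _ ⟨i, rfl⟩)
    rw [affine_sum f p c 0, hs]
    obtain ⟨r', rfl⟩ : ∃ r', r = r' + 1 := ⟨r - 1, by omega⟩
    refine IsLatticePt.add (h5 _ (add_mem_span (smul_sub_mem ?_ (hpm 0)) (hpm 0)) ?_) ?_
    · exact Set.smul_set_mono (subset_affineSpan ℝ _) hxP
    · exact (hxl.sub ((hp 0).nsmul _)).add (hp 0)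
    · push_cast
      rw [add_sub_cancel_right]
      exact (h5 _ (hpm 0) (hp 0)).nsmul _

theorem LatticeIso.codeg_eq {d e : ℕ} {P : Set (Fin d → ℝ)} {Q : Set (Fin e → ℝ)}
    (h : LatticeIso P Q) (hP : IsLatticePolytope P) (hQ : IsLatticePolytope Q) :
    polyCodeg P = polyCodeg Q := by
  unfold polyCodeg
  congr 1
  ext r
  exact ⟨fun ⟨a, b⟩ => ⟨a, h.not_hollow hP a b⟩, fun ⟨a, b⟩ => ⟨a, h.symm.not_hollow hQ a b⟩⟩

theorem codeg_spec {d : ℕ} {P : Set (Fin d → ℝ)} (hP : IsLatticePolytope P) :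
    0 < polyCodeg P ∧ ∃ x ∈ intrinsicInterior ℝ ((polyCodeg P : ℝ) • P), IsLatticePt x := by
  have hne : {r : ℕ | 0 < r ∧ ¬ IsHollow ((r : ℝ) • P)}.Nonempty := by
    obtain ⟨k, p, hp, rfl⟩ := lp_range hP
    refine ⟨k + 1, by omega, fun h => ?_⟩
    refine h (∑ i, p i) ?_ (IsLatticePt.sum _ hp)
    rw [ri_smul_hull p (by positivity)]
    exact ⟨fun _ => 1, fun _ => one_pos, by simp, by simp⟩
  have := Nat.sInf_mem hne
  refine ⟨this.1, ?_⟩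
  have h2 := this.2
  change ¬ IsHollow ((polyCodeg P : ℝ) • P) at h2
  unfold IsHollow at h2
  push Not at h2
  exact h2

theorem polyDim_smul {d : ℕ} {c : ℝ} (hc : c ≠ 0) (S : Set (Fin d → ℝ)) :
    polyDim (c • S) = polyDim S := by
  have key : ∀ (c : ℝ) (S : Set (Fin d → ℝ)), polyDim (c • S) ≤ polyDim S := fun c S => by
    unfold polyDim
    have : c • S = (c • LinearMap.id : (Fin d → ℝ) →ₗ[ℝ] (Fin d → ℝ)).toAffineMap '' S := by
      ext x; simp [Set.mem_smul_set]
    rw [this, ← AffineSubspace.map_span, AffineSubspace.map_direction]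
    exact Submodule.finrank_map_le _ _
  refine le_antisymm (key c S) ?_
  have := key c⁻¹ (c • S)
  rwa [inv_smul_smul₀ hc] at this

theorem IsFacet.smul {d : ℕ} {P Φ : Set (Fin d → ℝ)} (h : IsFacet P Φ) {c : ℝ} (hc : 0 < c) :
    IsFacet (c • P) (c • Φ) := by
  obtain ⟨h1, h2, h3⟩ := h
  refine ⟨fun _ => ?_, h2.smul_set, by rw [polyDim_smul hc.ne', polyDim_smul hc.ne', h3]⟩
  obtain ⟨l, rfl⟩ := h1 h2
  refine ⟨l, ?_⟩
  ext x
  constructor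
  · rintro ⟨q, ⟨hq, hq'⟩, rfl⟩
    refine ⟨⟨q, hq, rfl⟩, ?_⟩
    rintro _ ⟨y, hy, rfl⟩
    simpa using mul_le_mul_of_nonneg_left (hq' y hy) hc.le
  · rintro ⟨⟨q, hq, rfl⟩, hx⟩
    refine ⟨q, ⟨hq, fun y hy => ?_⟩, rfl⟩
    have := hx (c • y) ⟨y, hy, rfl⟩
    simp only [map_smul, smul_eq_mul] at this
    exact le_of_mul_le_mul_left this hc

theorem pyramid_of {d : ℕ} {P : Set (Fin d → ℝ)} {ι : Type*} [Finite ι] [Nonempty ι]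
    (b : ι → Fin d → ℝ) (hb : ∀ i, IsLatticePt (b i)) (v : Fin d → ℝ) (hv : IsLatticePt v)
    (hP : P = convexHull ℝ (Set.range b ∪ {v})) (u : (Fin d → ℝ) →ᵃ[ℝ] ℝ)
    (hu : IsIntegralOn P u) (hub : ∀ i, u (b i) = 0) (huv : u v = 1) : IsLatticePyramid P := by
  right
  refine ⟨d, convexHull ℝ (Set.range fun i => b i - v), lp_of_range _ fun i => (hb i).sub hv, ?_⟩
  let s : (Fin d → ℝ) →ᵃ[ℝ] (Fin (d + 1) → ℝ) :=
    { toFun := fun x => Fin.snoc x (0 : ℝ)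
      linear :=
      { toFun := fun x => Fin.snoc x (0 : ℝ)
        map_add' := fun x y => by
          ext i; refine Fin.lastCases ?_ (fun j => ?_) i <;> simp
        map_smul' := fun c x => by
          ext i; refine Fin.lastCases ?_ (fun j => ?_) i <;> simp }
      map_vadd' := fun x y => by
          ext i; refine Fin.lastCases ?_ (fun j => ?_) i <;> simp }
  have hpyr : pyramidOver (convexHull ℝ (Set.range fun i => b i - v)) =
      convexHull ℝ ((Set.range fun i => (Fin.snoc (b i - v) (0 : ℝ) : Fin (d + 1) → ℝ)) ∪
        {Fin.snoc (0 : Fin d → ℝ) (1 : ℝ)}) := by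
    unfold pyramidOver
    have h1 := s.image_convexHull (Set.range fun i => b i - v)
    have h2 : (fun x : Fin d → ℝ => (Fin.snoc x (0 : ℝ) : Fin (d + 1) → ℝ)) ''
      (convexHull ℝ (Set.range fun i => b i - v)) = _ := h1
    rw [h2, convexHull_convexHull_union_left, ← Set.range_comp]
    rfl
  let e1 : Fin d → (Fin (d + 1) → ℝ) := fun i => Pi.single (Fin.castSucc i) 1
  let f : (Fin d → ℝ) →ᵃ[ℝ] (Fin (d + 1) → ℝ) :=
    { toFun := fun x => Fin.snoc (x - v) (u x)
      linear :=
      { toFun := fun x => Fin.snoc x (u.linear x)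
        map_add' := fun x y => by
          ext i; refine Fin.lastCases ?_ (fun j => ?_) i <;> simp
        map_smul' := fun c x => by
          ext i; refine Fin.lastCases ?_ (fun j => ?_) i <;> simp }
      map_vadd' := fun x y => by
          have := u.map_vadd x y
          ext i; refine Fin.lastCases ?_ (fun j => ?_) i
          · simpa using this
          · simp; ring }
  let g : (Fin (d + 1) → ℝ) →ᵃ[ℝ] (Fin d → ℝ) :=
    { toFun := fun y => (fun i => y (Fin.castSucc i)) + v
      linear :=
      { toFun := fun y => (fun i => y (Fin.castSucc i))
        map_add' := fun x y => rfl
        map_smul' := fun c x => rfl }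
      map_vadd' := fun x y => by
          ext i; simp; ring }
  have hfb : ∀ i, f (b i) = Fin.snoc (b i - v) (0 : ℝ) := fun i => by
    show (Fin.snoc (b i - v) (u (b i)) : Fin (d + 1) → ℝ) = _; rw [hub]
  have hfv : f v = Fin.snoc (0 : Fin d → ℝ) (1 : ℝ) := by
    show (Fin.snoc (v - v) (u v) : Fin (d + 1) → ℝ) = _; rw [huv, sub_self]
  have hgf : ∀ x, g (f x) = x := fun x => by
    show (fun i => (Fin.snoc (x - v) (u x) : Fin (d + 1) → ℝ) (Fin.castSucc i)) + v = x
    ext i; simp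
  have hfP : f '' P = pyramidOver (convexHull ℝ (Set.range fun i => b i - v)) := by
    rw [hpyr, hP, f.image_convexHull, Set.image_union, Set.image_singleton, hfv, ← Set.range_comp]
    congr 3
    funext i
    exact hfb i
  refine ⟨f, g, hfP, ?_, fun x _ => hgf x, ?_, ?_, ?_⟩
  · rw [← hfP, ← Set.image_comp]
    simp [hgf]
  · intro y hy
    have := AffineMap.eqOn_affineSpan (f := f.comp g) (g := AffineMap.id ℝ _)
      (s := pyramidOver (convexHull ℝ (Set.range fun i => b i - v))) (by
        rw [← hfP]
        rintro _ ⟨x, -, rfl⟩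
        simp [hgf]) hy
    simpa using this
  · intro x hx hxl i
    show ∃ z : ℤ, (Fin.snoc (x - v) (u x) : Fin (d + 1) → ℝ) i = z
    refine Fin.lastCases ?_ (fun j => ?_) i
    · simpa using hu x hx hxl
    · simpa using (hxl.sub hv) j
  · intro y hy hyl
    exact IsLatticePt.add (fun i => hyl _) hv

theorem of_pyramid {d : ℕ} {P : Set (Fin d → ℝ)} (h : IsLatticePyramid P) :
    (∃ x, IsLatticePt x ∧ P = {x}) ∨
    ∃ (k : ℕ) (b : Fin (k + 1) → Fin d → ℝ) (v : Fin d → ℝ) (u : (Fin d → ℝ) →ᵃ[ℝ] ℝ),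
      (∀ i, IsLatticePt (b i)) ∧ IsLatticePt v ∧ P = convexHull ℝ (Set.range b ∪ {v}) ∧
      IsIntegralOn P u ∧ (∀ i, u (b i) = 0) ∧ u v = 1 := by
  refine h.imp id ?_
  rintro ⟨m, P', hP', f, g, h1, h2, h3, h4, h5, h6⟩
  obtain ⟨k, p, hp, rfl⟩ := lp_range hP'
  set Q := pyramidOver (convexHull ℝ (Set.range p)) with hQ
  have hbQ : ∀ i, (Fin.snoc (p i) (0 : ℝ) : Fin (m + 1) → ℝ) ∈ Q := fun i =>
    subset_convexHull ℝ _ (Or.inl ⟨p i, subset_convexHull ℝ _ ⟨i, rfl⟩, rfl⟩)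
  have hvQ : (Fin.snoc (0 : Fin m → ℝ) (1 : ℝ) : Fin (m + 1) → ℝ) ∈ Q :=
    subset_convexHull ℝ _ (Or.inr rfl)
  let s : (Fin m → ℝ) →ᵃ[ℝ] (Fin (m + 1) → ℝ) :=
    { toFun := fun x => Fin.snoc x (0 : ℝ)
      linear :=
      { toFun := fun x => Fin.snoc x (0 : ℝ)
        map_add' := fun x y => by
          ext i; refine Fin.lastCases ?_ (fun j => ?_) i <;> simp
        map_smul' := fun c x => by
          ext i; refine Fin.lastCases ?_ (fun j => ?_) i <;> simp }
      map_vadd' := fun x y => by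
          ext i; refine Fin.lastCases ?_ (fun j => ?_) i <;> simp }
  have hpyr : Q = convexHull ℝ ((Set.range fun i => (Fin.snoc (p i) (0 : ℝ) : Fin (m + 1) → ℝ)) ∪
        {Fin.snoc (0 : Fin m → ℝ) (1 : ℝ)}) := by
    rw [hQ]
    unfold pyramidOver
    have h1 := s.image_convexHull (Set.range p)
    have h2 : (fun x : Fin m → ℝ => (Fin.snoc x (0 : ℝ) : Fin (m + 1) → ℝ)) ''
      (convexHull ℝ (Set.range p)) = _ := h1
    rw [h2, convexHull_convexHull_union_left, ← Set.range_comp]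
    rfl
  refine ⟨k, fun i => g (Fin.snoc (p i) (0 : ℝ)), g (Fin.snoc (0 : Fin m → ℝ) (1 : ℝ)),
    (LinearMap.proj (Fin.last m) : (Fin (m + 1) → ℝ) →ₗ[ℝ] ℝ).toAffineMap.comp f, ?_, ?_, ?_, ?_,
      ?_, ?_⟩
  · intro i
    refine h6 _ (subset_affineSpan ℝ _ (hbQ i)) fun j => ?_
    refine Fin.lastCases ?_ (fun j => ?_) j
    · exact ⟨0, by simp⟩
    · simpa using hp i j
  · refine h6 _ (subset_affineSpan ℝ _ hvQ) fun j => ?_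
    refine Fin.lastCases ?_ (fun j => ?_) j
    · exact ⟨1, by simp⟩
    · exact ⟨0, by simp⟩
  · rw [← h2, hpyr, g.image_convexHull, Set.image_union, Set.image_singleton, ← Set.range_comp]
    rfl
  · intro y hy hyl
    exact h5 y hy hyl (Fin.last m)
  · intro i
    have := h4 _ (subset_affineSpan ℝ _ (hbQ i))
    simp [this]
  · have := h4 _ (subset_affineSpan ℝ _ hvQ)
    simp [this]

theorem union_dim {d : ℕ} {A B : Set (Fin d → ℝ)} (hA : A.Nonempty) (hB : B.Nonempty)
    {α : (Fin d → ℝ) →ᵃ[ℝ] ℝ} (h1 : ∀ a ∈ A, α a = 1) (h0 : ∀ b ∈ B, α b = 0) :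
    polyDim (convexHull ℝ (A ∪ B)) = Module.finrank ℝ
      ((affineSpan ℝ A).direction ⊔ (affineSpan ℝ B).direction : Submodule ℝ (Fin d → ℝ)) + 1 := by
  obtain ⟨a, ha⟩ := hA
  obtain ⟨b, hb⟩ := hB
  unfold polyDim
  rw [affineSpan_convexHull, AffineSubspace.span_union,
    AffineSubspace.direction_sup (subset_affineSpan ℝ A ha) (subset_affineSpan ℝ B hb)]
  apply Submodule.finrank_sup_span_singleton
  intro hmem
  have hle : (affineSpan ℝ A).direction ⊔ (affineSpan ℝ B).direction ≤ LinearMap.ker α.linear := by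
    rw [direction_affineSpan, direction_affineSpan, vectorSpan_def, vectorSpan_def, sup_le_iff,
      Submodule.span_le, Submodule.span_le]
    constructor
    · rintro _ ⟨x, hx, y, hy, rfl⟩
      simp only [SetLike.mem_coe, LinearMap.mem_ker, AffineMap.linearMap_vsub, h1 x hx, h1 y hy,
        vsub_self]
    · rintro _ ⟨x, hx, y, hy, rfl⟩
      simp only [SetLike.mem_coe, LinearMap.mem_ker, AffineMap.linearMap_vsub, h0 x hx, h0 y hy,
        vsub_self]
  have := hle hmem
  rw [LinearMap.mem_ker, AffineMap.linearMap_vsub, h1 a ha, h0 b hb] at this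
  norm_num at this

theorem facet_lift {d : ℕ} {P F G Φ : Set (Fin d → ℝ)} (hFc : Convex ℝ F) (hGc : Convex ℝ G)
    (hG : G.Nonempty) (hP : P = convexHull ℝ (F ∪ G))
    {α : (Fin d → ℝ) →ᵃ[ℝ] ℝ} (h1 : ∀ a ∈ F, α a = 1) (h0 : ∀ b ∈ G, α b = 0)
    (hdim : polyDim F + polyDim G + 1 = polyDim P) (hΦ : IsFacet F Φ) :
    IsFacet P (convexHull ℝ (Φ ∪ G)) := by
  obtain ⟨hexp, hne, hΦd⟩ := hΦ
  obtain ⟨l, hl⟩ := hexp hne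
  obtain ⟨f0, hf0⟩ := hne
  obtain ⟨g0, hg0⟩ := hG
  have hΦF : Φ ⊆ F := fun q hq => by rw [hl] at hq; exact hq.1
  have hlq : ∀ q ∈ F, l q ≤ l f0 := by
    have := hf0; rw [hl] at this; exact this.2
  have hla : ∀ b ∈ Φ, l b = l f0 := fun b hb => by
    refine le_antisymm (hlq b (hΦF hb)) ?_
    rw [hl] at hb
    exact hb.2 f0 (hΦF hf0)
  have hFne : F.Nonempty := ⟨f0, hΦF hf0⟩
  set DF := (affineSpan ℝ F).direction with hDF
  set DG := (affineSpan ℝ G).direction with hDG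
  have hinf : DF ⊓ DG = ⊥ := by
    have e1 := union_dim hFne ⟨g0, hg0⟩ h1 h0
    have e2 := Submodule.finrank_sup_add_finrank_inf_eq DF DG
    rw [← hP] at e1
    have e1' : polyDim P = Module.finrank ℝ (DF ⊔ DG : Submodule ℝ (Fin d → ℝ)) + 1 := e1
    have e3 : Module.finrank ℝ DF + Module.finrank ℝ DG + 1 = polyDim P := hdim
    rw [← Submodule.finrank_eq_zero (R := ℝ)]
    omega
  obtain ⟨lam, hlamF, hlamG⟩ : ∃ lam : (Fin d → ℝ) →ₗ[ℝ] ℝ, (∀ w ∈ DF, lam w = l w) ∧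
      ∀ w ∈ DG, lam w = 0 := by
    have hker : LinearMap.ker (DG.mkQ ∘ₗ DF.subtype) = ⊥ := by
      rw [LinearMap.ker_eq_bot']
      intro m hm
      simp only [LinearMap.comp_apply, Submodule.subtype_apply, Submodule.mkQ_apply,
        Submodule.Quotient.mk_eq_zero] at hm
      have : (m : Fin d → ℝ) ∈ DF ⊓ DG := ⟨m.2, hm⟩
      rw [hinf, Submodule.mem_bot] at this
      exact Subtype.ext this
    obtain ⟨k, hk⟩ := LinearMap.exists_leftInverse_of_injective _ hker
    refine ⟨(l : (Fin d → ℝ) →ₗ[ℝ] ℝ) ∘ₗ DF.subtype ∘ₗ k ∘ₗ DG.mkQ, fun w hw => ?_, fun w hw => ?_⟩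
    · have := LinearMap.congr_fun hk ⟨w, hw⟩
      simp only [LinearMap.comp_apply, Submodule.subtype_apply, LinearMap.id_apply] at this
      simp [LinearMap.comp_apply, this] at this ⊢
    · have : DG.mkQ w = 0 := by simpa using hw
      simp only [LinearMap.comp_apply, this, map_zero]
  let ψ : (Fin d → ℝ) →ᵃ[ℝ] ℝ :=
    lam.toAffineMap - AffineMap.const ℝ _ (lam g0) - lam (f0 - g0) • α
  have hψ : ∀ y, ψ y = lam y - lam g0 - lam (f0 - g0) * α y := fun y => rfl
  have hψG : ∀ g ∈ G, ψ g = 0 := fun g hg => by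
    rw [hψ, h0 g hg, ← map_sub]
    rw [hlamG (g - g0) (AffineSubspace.vsub_mem_direction (subset_affineSpan ℝ _ hg)
      (subset_affineSpan ℝ _ hg0))]
    ring
  have hψF : ∀ f ∈ F, ψ f = l f - l f0 := fun f hf => by
    have := hlamF (f - f0) (AffineSubspace.vsub_mem_direction (subset_affineSpan ℝ _ hf)
      (subset_affineSpan ℝ _ (hΦF hf0)))
    simp only [map_sub] at this
    rw [hψ, h1 f hf, map_sub]
    linarith
  have hψP : ∀ p ∈ P, ψ p ≤ 0 := by
    have hc : Convex ℝ {p | ψ p ≤ 0} := (convex_Iic (0 : ℝ)).affine_preimage ψ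
    have hs : P ⊆ {p | ψ p ≤ 0} := by
      rw [hP]
      refine convexHull_min ?_ hc
      rintro x (hx | hx)
      · have := hlq x hx
        show ψ x ≤ 0
        rw [hψF x hx]; linarith
      · exact (hψG x hx).le
    exact hs
  have hψ0 : ∀ p ∈ convexHull ℝ (Φ ∪ G), ψ p = 0 := by
    intro p hp
    have := AffineMap.eqOn_affineSpan (s := Φ ∪ G) (f := ψ) (g := AffineMap.const ℝ _ 0) (by
      rintro x (hx | hx)
      · simp [hψF x (hΦF hx), hla x hx]
      · simp [hψG x hx]) (convexHull_subset_affineSpan _ hp)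
    simpa using this
  have hsub : convexHull ℝ (Φ ∪ G) ⊆ P := by
    rw [hP]; exact convexHull_mono (Set.union_subset_union_left _ hΦF)
  have hlin : ∀ x y, ψ.linear x - ψ.linear y = ψ x - ψ y := fun x y => by
    rw [← map_sub, ← vsub_eq_sub x y, AffineMap.linearMap_vsub, vsub_eq_sub]
  have hg0P : g0 ∈ P := by rw [hP]; exact subset_convexHull ℝ _ (Or.inr hg0)
  refine ⟨fun _ => ⟨LinearMap.toContinuousLinearMap ψ.linear, ?_⟩,
    ⟨g0, subset_convexHull ℝ _ (Or.inr hg0)⟩, ?_⟩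
  · ext x
    constructor
    · intro hx
      refine ⟨hsub hx, fun y hy => ?_⟩
      have e1 := hlin y x
      rw [hψ0 x hx] at e1
      have := hψP y hy
      simp only [LinearMap.coe_toContinuousLinearMap']
      linarith
    · rintro ⟨hx, hxm⟩
      have e1 := hxm g0 hg0P
      simp only [LinearMap.coe_toContinuousLinearMap'] at e1
      have e2 := hlin g0 x
      rw [hψG g0 hg0] at e2
      have e3 : ψ x = 0 := le_antisymm (hψP x hx) (by linarith)
      rw [hP, hFc.convexHull_union hGc hFne ⟨g0, hg0⟩, mem_convexJoin] at hx
      obtain ⟨f, hf, g, hg, s, t, hs, ht, hst, rfl⟩ := hx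
      rcases hs.eq_or_lt with rfl | hs
      · have : t = 1 := by linarith
        subst this
        have hgm : g ∈ convexHull ℝ (Φ ∪ G) := subset_convexHull ℝ _ (Or.inr hg)
        simpa using hgm
      · have e4 : ψ (s • f + t • g) = s * ψ f + t * ψ g := by
          have := Convex.combo_affine_apply (f := ψ) (x := f) (y := g) hst
          simpa using this
        rw [e4, hψG g hg, hψF f hf] at e3
        have e5 : l f = l f0 := by
          have : s * (l f - l f0) = 0 := by linarith
          rcases mul_eq_zero.1 this with h | h <;> linarith
        have hfΦ : f ∈ Φ := by
          rw [hl]; exact ⟨hf, fun y hy => by rw [e5]; exact hlq y hy⟩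
        exact (convex_convexHull ℝ (Φ ∪ G)) (subset_convexHull ℝ _ (Or.inl hfΦ))
          (subset_convexHull ℝ _ (Or.inr hg)) hs.le ht hst
  · rw [union_dim ⟨f0, hf0⟩ ⟨g0, hg0⟩ (fun a ha => h1 a (hΦF ha)) h0]
    have e2 := Submodule.finrank_sup_add_finrank_inf_eq (affineSpan ℝ Φ).direction DG
    have e3 : (affineSpan ℝ Φ).direction ⊓ DG = ⊥ := by
      rw [eq_bot_iff, ← hinf]
      exact inf_le_inf_right _ (AffineSubspace.direction_le (affineSpan_mono ℝ hΦF))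
    rw [e3, finrank_bot] at e2
    have e4 : polyDim Φ = Module.finrank ℝ (affineSpan ℝ Φ).direction := rfl
    have e5 : polyDim G = Module.finrank ℝ DG := rfl
    change Module.finrank ℝ ((affineSpan ℝ Φ).direction ⊔ DG : Submodule ℝ (Fin d → ℝ)) + 1 + 1 = _
    omega

theorem key_lemma {d : ℕ} {P F G : Set (Fin d → ℝ)} (hF : IsLatticePolytope F)
    (hG : IsLatticePolytope G) (hP : P = convexHull ℝ (F ∪ G))
    {α : (Fin d → ℝ) →ᵃ[ℝ] ℝ} (h1 : ∀ a ∈ F, α a = 1) (h0 : ∀ b ∈ G, α b = 0)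
    (hdim : polyDim F + polyDim G + 1 = polyDim P)
    (hcod : polyCodeg F + polyCodeg G = polyCodeg P) (hGor : IsGorenstein P)
    {xF : Fin d → ℝ} (hxF : xF ∈ intrinsicInterior ℝ ((polyCodeg F : ℝ) • F))
    (hxFl : IsLatticePt xF) {Φ : Set (Fin d → ℝ)} (hΦ : IsFacet F Φ) :
    ∃ (L : (Fin d → ℝ) →ₗ[ℝ] ℝ) (κ : ℝ),
      (∀ y ∈ (affineSpan ℝ P).direction, IsLatticePt y → ∃ z : ℤ, L y = z) ∧
      (∀ q ∈ Φ, L q = κ) ∧ (∀ g ∈ G, L g = κ) ∧ L xF = polyCodeg F * κ + 1 := by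
  obtain ⟨r, hr, x, hx, hxl, hfac⟩ := hGor
  obtain ⟨hb, xG, hxG, hxGl⟩ := codeg_spec hG
  have ha := (codeg_spec hF).1
  obtain ⟨kF, pF, hpF, hFr⟩ := lp_range hF
  obtain ⟨kG, pG, hpG, hGr⟩ := lp_range hG
  have hr' : (0 : ℝ) < r := by exact_mod_cast hr
  have ha' : (0 : ℝ) < polyCodeg F := by exact_mod_cast ha
  have hb' : (0 : ℝ) < polyCodeg G := by exact_mod_cast hb
  have hPr : P = convexHull ℝ (Set.range (Sum.elim pF pG)) := by
    rw [hP, hFr, hGr, convexHull_convexHull_union_left, convexHull_convexHull_union_right,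
      Set.Sum.elim_range]
  have hle : polyCodeg P ≤ r := Nat.sInf_le ⟨hr, fun h => h x hx hxl⟩
  have hrP : (r : ℝ) • P = convexHull ℝ (Set.range fun i => (r : ℝ) • Sum.elim pF pG i) := by
    rw [hPr, ← convexHull_smul, Set.smul_set_range]
  have hpl : ∀ i, IsLatticePt (Sum.elim pF pG i) := by
    rintro (i | i)
    exacts [hpF i, hpG i]
  have huniq : ∀ i, xF + xG + ((r - polyCodeg P : ℕ) : ℝ) • Sum.elim pF pG i = x := by
    intro i
    have hri : xF + xG + ((r - polyCodeg P : ℕ) : ℝ) • Sum.elim pF pG i ∈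
        intrinsicInterior ℝ ((r : ℝ) • P) := by
      obtain ⟨cF, hcF, hsF, heF⟩ : ∃ c : Fin (kF + 1) → ℝ, (∀ i, 0 < c i) ∧
          ∑ i, c i = polyCodeg F ∧ ∑ i, c i • pF i = xF := by
        rw [← ri_smul_hull pF ha', ← hFr]; exact hxF
      obtain ⟨cG, hcG, hsG, heG⟩ : ∃ c : Fin (kG + 1) → ℝ, (∀ i, 0 < c i) ∧
          ∑ i, c i = polyCodeg G ∧ ∑ i, c i • pG i = xG := by
        rw [← ri_smul_hull pG hb', ← hGr]; exact hxG
      rw [hPr, ← hPr, hPr, ri_smul_hull _ hr', ← hPr]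
      refine ⟨fun j => Sum.elim cF cG j +
        (if j = i then ((r - polyCodeg P : ℕ) : ℝ) else 0), fun j => ?_, ?_, ?_⟩
      · have h2 : (0 : ℝ) ≤ if j = i then ((r - polyCodeg P : ℕ) : ℝ) else 0 := by
          split_ifs <;> positivity
        have h3 : 0 < Sum.elim cF cG j := by
          rcases j with j | j
          exacts [hcF j, hcG j]
        linarith
      · rw [Finset.sum_add_distrib, Finset.sum_ite_eq' Finset.univ i]
        rw [Fintype.sum_sum_type]
        simp only [Sum.elim_inl, Sum.elim_inr, hsF, hsG, Finset.mem_univ, if_true]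
        rw [Nat.cast_sub hle, ← hcod]
        push_cast
        ring
      · simp only [add_smul, Finset.sum_add_distrib, ite_smul, zero_smul]
        rw [Finset.sum_ite_eq' Finset.univ i, Fintype.sum_sum_type]
        simp only [Sum.elim_inl, Sum.elim_inr, heF, heG, Finset.mem_univ, if_true]
    rw [hrP] at hri hx hfac
    exact reflexive_unique _ hx hxl hfac hri ((hxFl.add hxGl).add ((hpl i).nsmul _))
  have hF0 : pF 0 ∈ F := by rw [hFr]; exact subset_convexHull ℝ _ ⟨0, rfl⟩
  have hG0 : pG 0 ∈ G := by rw [hGr]; exact subset_convexHull ℝ _ ⟨0, rfl⟩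
  have hreq : r = polyCodeg P := by
    by_contra hne
    have e1 := (huniq (Sum.inl 0)).trans (huniq (Sum.inr 0)).symm
    have hpos : ((r - polyCodeg P : ℕ) : ℝ) ≠ 0 := by
      have : r - polyCodeg P ≠ 0 := by omega
      exact_mod_cast this
    have e2 : pF 0 = pG 0 := by
      have := add_left_cancel e1
      exact smul_right_injective _ hpos this
    have e3 := h1 _ hF0
    rw [e2, h0 _ hG0] at e3
    norm_num at e3
  have hxeq : xF + xG = x := by
    have := huniq (Sum.inl 0)
    simpa [← hreq] using this
  have hFc : Convex ℝ F := by rw [hFr]; exact convex_convexHull ℝ _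
  have hGc : Convex ℝ G := by rw [hGr]; exact convex_convexHull ℝ _
  have hlift := (facet_lift hFc hGc ⟨_, hG0⟩ hP h1 h0 hdim hΦ).smul hr'
  obtain ⟨u, hui, hu⟩ := hfac _ hlift
  have hlin : ∀ x y, u.linear x - u.linear y = u x - u y := fun x y => by
    rw [← map_sub, ← vsub_eq_sub x y, AffineMap.linearMap_vsub, vsub_eq_sub]
  have hconst : ∀ q ∈ Φ ∪ G, u.linear q = u.linear (pG 0) := by
    intro q hq
    have e1 := hu _ (Set.smul_mem_smul_set (a := (r : ℝ)) (subset_convexHull ℝ _ hq))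
    have e2 := hu _ (Set.smul_mem_smul_set (a := (r : ℝ)) (subset_convexHull ℝ _
      (Or.inr hG0 : pG 0 ∈ Φ ∪ G)))
    have e3 := hlin ((r : ℝ) • q) ((r : ℝ) • pG 0)
    rw [e1, e2, sub_self, map_smul, map_smul, smul_eq_mul, smul_eq_mul, ← mul_sub] at e3
    rcases mul_eq_zero.1 e3 with h | h <;> linarith
  have hG0P : pG 0 ∈ P := by rw [hP]; exact subset_convexHull ℝ _ (Or.inr hG0)
  refine ⟨-u.linear, -u.linear (pG 0), fun y hy hyl => ?_, fun q hq => ?_, fun q hq => ?_, ?_⟩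
  · have hm : (r : ℝ) • pG 0 ∈ affineSpan ℝ ((r : ℝ) • P) :=
      subset_affineSpan ℝ _ (Set.smul_mem_smul_set hG0P)
    have hm2 : y + (r : ℝ) • pG 0 ∈ affineSpan ℝ ((r : ℝ) • P) := by
      refine add_mem_span ?_ hm
      rw [direction_affineSpan] at hy ⊢
      have e1 : vectorSpan ℝ P ≤ vectorSpan ℝ ((r : ℝ) • P) := by
        rw [vectorSpan_def, Submodule.span_le]
        rintro _ ⟨a, ha, b, hb, rfl⟩
        have e2 := vsub_mem_vectorSpan ℝ (Set.smul_mem_smul_set (a := (r : ℝ)) ha)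
          (Set.smul_mem_smul_set (a := (r : ℝ)) hb)
        have e3 := Submodule.smul_mem _ (r : ℝ)⁻¹ e2
        rwa [vsub_eq_sub, ← smul_sub, inv_smul_smul₀ hr'.ne'] at e3
      exact e1 hy
    obtain ⟨z1, hz1⟩ := hui _ hm ((hpG 0).nsmul r)
    obtain ⟨z2, hz2⟩ := hui _ hm2 (hyl.add ((hpG 0).nsmul r))
    refine ⟨z1 - z2, ?_⟩
    have := hlin (y + (r : ℝ) • pG 0) ((r : ℝ) • pG 0)
    rw [map_add, add_sub_cancel_right, hz1, hz2] at this
    rw [LinearMap.neg_apply, this]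
    push_cast
    ring
  · rw [LinearMap.neg_apply, hconst q (Or.inl hq)]
  · rw [LinearMap.neg_apply, hconst q (Or.inr hq)]
  · obtain ⟨g, hg, hgx⟩ := intrinsicInterior_subset hxG
    have e1 : u.linear xG = polyCodeg G * u.linear (pG 0) := by
      rw [← hgx]
      show u.linear ((polyCodeg G : ℝ) • g) = _
      rw [map_smul, hconst g (Or.inr hg), smul_eq_mul]
    have e2 := hu _ (Set.smul_mem_smul_set (a := (r : ℝ)) (subset_convexHull ℝ _
      (Or.inr hG0 : pG 0 ∈ Φ ∪ G)))
    have e3 := hlin x ((r : ℝ) • pG 0)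
    rw [e2, ← hxeq, map_add, e1, map_smul, smul_eq_mul, hreq, ← hcod] at e3
    push_cast at e3
    rw [LinearMap.neg_apply]
    linarith

theorem factor_gorenstein {d : ℕ} {P F G : Set (Fin d → ℝ)} (hF : IsLatticePolytope F)
    (hG : IsLatticePolytope G) (hP : P = convexHull ℝ (F ∪ G))
    {α : (Fin d → ℝ) →ᵃ[ℝ] ℝ} (h1 : ∀ a ∈ F, α a = 1) (h0 : ∀ b ∈ G, α b = 0)
    (hdim : polyDim F + polyDim G + 1 = polyDim P)
    (hcod : polyCodeg F + polyCodeg G = polyCodeg P) (hGor : IsGorenstein P) :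
    IsGorenstein F := by
  obtain ⟨ha, xF, hxF, hxFl⟩ := codeg_spec hF
  have ha' : (0 : ℝ) < polyCodeg F := by exact_mod_cast ha
  refine ⟨polyCodeg F, ha, xF, hxF, hxFl, fun Φ' hΦ' => ?_⟩
  have hΦ := hΦ'.smul (inv_pos.2 ha')
  rw [inv_smul_smul₀ ha'.ne'] at hΦ
  obtain ⟨L, κ, hL, hLΦ, hLG, hLx⟩ := key_lemma hF hG hP h1 h0 hdim hcod hGor hxF hxFl hΦ
  have hFP : affineSpan ℝ F ≤ affineSpan ℝ P := by
    rw [hP, affineSpan_convexHull]; exact affineSpan_mono ℝ Set.subset_union_left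
  refine ⟨AffineMap.const ℝ _ (L xF) - L.toAffineMap, ?_, ?_⟩
  · intro y hy hyl
    have hmem : xF - y ∈ (affineSpan ℝ P).direction := by
      have e0 : xF - y ∈ (affineSpan ℝ ((polyCodeg F : ℝ) • F)).direction :=
        AffineSubspace.vsub_mem_direction
          (subset_affineSpan ℝ _ (intrinsicInterior_subset hxF)) hy
      refine AffineSubspace.direction_le hFP ?_
      rw [direction_affineSpan] at e0 ⊢
      have e1 : vectorSpan ℝ ((polyCodeg F : ℝ) • F) ≤ vectorSpan ℝ F := by
        rw [vectorSpan_def, Submodule.span_le]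
        rintro _ ⟨_, ⟨a, ha, rfl⟩, _, ⟨b, hb, rfl⟩, rfl⟩
        have e2 := Submodule.smul_mem _ (polyCodeg F : ℝ) (vsub_mem_vectorSpan ℝ ha hb)
        simpa [smul_sub] using e2
      exact e1 e0
    obtain ⟨z, hz⟩ := hL _ hmem (hxFl.sub hyl)
    exact ⟨z, by simpa using hz⟩
  · intro f hf
    have e1 := hLΦ _ (Set.smul_mem_smul_set (a := (polyCodeg F : ℝ)⁻¹) hf)
    rw [map_smul, smul_eq_mul] at e1
    have e2 : L f = polyCodeg F * κ := by rw [← e1]; field_simp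
    simp [hLx, e2]

theorem pyramid_lift {d : ℕ} {P F G : Set (Fin d → ℝ)} (hF : IsLatticePolytope F)
    (hG : IsLatticePolytope G) (hP : P = convexHull ℝ (F ∪ G))
    {α : (Fin d → ℝ) →ᵃ[ℝ] ℝ} (hα : IsIntegralOn P α)
    (h1 : ∀ a ∈ F, α a = 1) (h0 : ∀ b ∈ G, α b = 0)
    (hdim : polyDim F + polyDim G + 1 = polyDim P)
    (hcod : polyCodeg F + polyCodeg G = polyCodeg P) (hGor : IsGorenstein P)
    (hpyr : IsLatticePyramid F) : IsLatticePyramid P := by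
  obtain ⟨kG, pG, hpG, hGr⟩ := lp_range hG
  have hGm : ∀ i, pG i ∈ G := fun i => by rw [hGr]; exact subset_convexHull ℝ _ ⟨i, rfl⟩
  rcases of_pyramid hpyr with ⟨v, hv, rfl⟩ | ⟨k, b, v, h, hb, hv, hFr, hh, hhb, hhv⟩
  · refine pyramid_of pG hpG v hv ?_ α hα (fun i => h0 _ (hGm i)) (h1 v rfl)
    rw [hP, hGr, convexHull_convexHull_union_right, Set.union_comm]
  · obtain ⟨ha, xF, hxF, hxFl⟩ := codeg_spec hF
    have hvF : v ∈ F := by rw [hFr]; exact subset_convexHull ℝ _ (Or.inr rfl)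
    have hbF : ∀ i, b i ∈ F := fun i => by
      rw [hFr]; exact subset_convexHull ℝ _ (Or.inl ⟨i, rfl⟩)
    have hFP : F ⊆ P := by rw [hP]; exact Set.subset_union_left.trans (subset_convexHull ℝ _)
    have hGP : G ⊆ P := by rw [hP]; exact Set.subset_union_right.trans (subset_convexHull ℝ _)
    set Φ := convexHull ℝ (Set.range b) with hΦdef
    have hbΦ : ∀ i, b i ∈ Φ := fun i => subset_convexHull ℝ _ ⟨i, rfl⟩
    have hhΦ : ∀ y ∈ affineSpan ℝ (Set.range b), h y = 0 := by
      intro y hy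
      have := AffineMap.eqOn_affineSpan (s := Set.range b) (f := h)
        (g := AffineMap.const ℝ _ 0) (by rintro _ ⟨i, rfl⟩; simp [hhb]) hy
      simpa using this
    have hlin : ∀ x y, h.linear x - h.linear y = h x - h y := fun x y => by
      rw [← map_sub, ← vsub_eq_sub x y, AffineMap.linearMap_vsub, vsub_eq_sub]
    have hFjoin : F = convexJoin ℝ Φ {v} := by
      rw [hFr, convexHull_union (Set.range_nonempty b) (Set.singleton_nonempty v),
        convexHull_singleton]
    have hpt : ∀ q ∈ F, ∃ φ ∈ Φ, ∃ s t : ℝ, 0 ≤ s ∧ 0 ≤ t ∧ s + t = 1 ∧ s • φ + t • v = q ∧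
        h q = t := by
      intro q hq
      rw [hFjoin, mem_convexJoin] at hq
      obtain ⟨φ, hφ, w, rfl, s, t, hs, ht, hst, rfl⟩ := hq
      refine ⟨φ, hφ, s, t, hs, ht, hst, rfl, ?_⟩
      have e := Convex.combo_affine_apply (f := h) (x := φ) (y := w) hst
      rw [e, hhΦ φ (convexHull_subset_affineSpan _ hφ), hhv]
      simp
    have hdimΦ : polyDim Φ + 1 = polyDim F := by
      unfold polyDim
      rw [hFr, affineSpan_convexHull, affineSpan_convexHull, AffineSubspace.span_union,
        AffineSubspace.direction_sup (subset_affineSpan ℝ (Set.range b) (Set.mem_range_self 0))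
          (subset_affineSpan ℝ _ (Set.mem_singleton v)),
        direction_affineSpan ℝ {v}, vectorSpan_singleton, sup_bot_eq,
        Submodule.finrank_sup_span_singleton]
      intro hmem
      have e : v ∈ affineSpan ℝ (Set.range b) := by
        have := AffineSubspace.vadd_mem_of_mem_direction hmem
          (subset_affineSpan ℝ (Set.range b) ⟨0, rfl⟩)
        simpa using this
      have := hhΦ v e
      rw [hhv] at this
      norm_num at this
    have hfacet : IsFacet F Φ := by
      refine ⟨fun _ => ⟨LinearMap.toContinuousLinearMap (-h.linear), ?_⟩, ⟨_, hbΦ 0⟩, hdimΦ⟩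
      ext q
      constructor
      · intro hq
        have hqF : q ∈ F := by rw [hFr]; exact convexHull_mono Set.subset_union_left hq
        refine ⟨hqF, fun y hy => ?_⟩
        obtain ⟨_, _, s, t, _, ht, _, _, hyt⟩ := hpt y hy
        have e1 := hlin y q
        rw [hhΦ q (convexHull_subset_affineSpan _ hq), hyt] at e1
        simp only [LinearMap.coe_toContinuousLinearMap', LinearMap.neg_apply]
        linarith
      · rintro ⟨hq, hqm⟩
        obtain ⟨φ, hφ, s, t, _, ht, hst, hq', hqt⟩ := hpt q hq
        have e1 := hqm _ (hbF 0)
        simp only [LinearMap.coe_toContinuousLinearMap', LinearMap.neg_apply] at e1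
        have e2 := hlin q (b 0)
        rw [hqt, hhb] at e2
        have : t = 0 := by linarith
        subst this
        have : s = 1 := by linarith
        subst this
        rw [← hq']
        simpa using hφ
    obtain ⟨L, κ, hL, hLΦ, hLG, hLx⟩ := key_lemma hF hG hP h1 h0 hdim hcod hGor hxF hxFl hfacet
    have hLb := hLΦ _ (hbΦ 0)
    obtain ⟨c, hc⟩ : ∃ c : ℤ, L v - κ = c := by
      obtain ⟨c, hc⟩ := hL (v - b 0) (AffineSubspace.vsub_mem_direction
        (subset_affineSpan ℝ _ (hFP hvF)) (subset_affineSpan ℝ _ (hFP (hbF 0)))) (hv.sub (hb 0))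
      exact ⟨c, by rw [← hc, map_sub, hLb]⟩
    have hLF : ∀ q ∈ F, L q - κ = c * h q := by
      intro q hq
      obtain ⟨φ, hφ, s, t, _, ht, hst, hq', hqt⟩ := hpt q hq
      rw [hqt, ← hq', map_add, map_smul, map_smul, hLΦ φ hφ, ← hc, smul_eq_mul, smul_eq_mul]
      have : s = 1 - t := by linarith
      rw [this]; ring
    obtain ⟨m, hm⟩ : ∃ m : ℤ, (1 : ℝ) = c * m := by
      have hxF' := intrinsicInterior_subset hxF
      have hmem := smul_sub_mem (Set.smul_set_mono (subset_affineSpan ℝ F) hxF')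
        (subset_affineSpan ℝ F (hbF 0))
      obtain ⟨m, hm⟩ := hh _ (add_mem_span hmem (subset_affineSpan ℝ F (hbF 0)))
        ((hxFl.sub ((hb 0).nsmul _)).add (hb 0))
      refine ⟨m, ?_⟩
      obtain ⟨q, hq, hqx⟩ := hxF'
      have hqx : (polyCodeg F : ℝ) • q = xF := hqx
      have e1 := hlin (xF - (polyCodeg F : ℝ) • b 0 + b 0) (b 0)
      rw [map_add, add_sub_cancel_right, hm, hhb, sub_zero, ← hqx, ← smul_sub, map_smul, map_sub,
        hlin, hhb, sub_zero, smul_eq_mul] at e1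
      have e2 := hLF q hq
      rw [← hqx, map_smul, smul_eq_mul] at hLx
      have e3 : (polyCodeg F : ℝ) * (L q - κ) = 1 := by linarith
      rw [e2] at e3
      rw [← e1, ← e3]; ring
    have hcc : (c : ℝ) * c = 1 := by
      have e : (1 : ℤ) = c * m := by exact_mod_cast hm
      have e2 := Int.isUnit_iff.1 (IsUnit.of_mul_eq_one m e.symm)
      rcases e2 with rfl | rfl <;> norm_num
    refine pyramid_of (Sum.elim b pG) (by rintro (i | i); exacts [hb i, hpG i]) v hv ?_
      ((c : ℝ) • (L.toAffineMap - AffineMap.const ℝ _ κ)) ?_ ?_ ?_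
    · rw [hP, hFr, hGr, convexHull_convexHull_union_left, convexHull_convexHull_union_right,
        Set.Sum.elim_range]
      congr 1
      ext y; simp only [Set.mem_union]; tauto
    · intro y hy hyl
      have hG0 := subset_affineSpan ℝ _ (hGP (hGm 0))
      obtain ⟨z, hz⟩ := hL (y - pG 0) (AffineSubspace.vsub_mem_direction hy hG0) (hyl.sub (hpG 0))
      refine ⟨c * z, ?_⟩
      rw [map_sub, hLG _ (hGm 0)] at hz
      simp [hz]
    · rintro (i | i)
      · simp [hLΦ _ (hbΦ i)]
      · simp [hLG _ (hGm i)]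
    · have : (c : ℝ) * (L v - κ) = 1 := by rw [hc, hcc]
      simpa using this

/-- internal version of reducibility -/
theorem internalize {d n : ℕ} {P : Set (Fin d → ℝ)} {F G : Set (Fin n → ℝ)}
    (hF : IsLatticePolytope F) (hG : IsLatticePolytope G) (h : IsReducibleWith P F G) :
    ∃ (F1 G1 : Set (Fin d → ℝ)) (α : (Fin d → ℝ) →ᵃ[ℝ] ℝ), IsLatticePolytope F1 ∧
      IsLatticePolytope G1 ∧ P = convexHull ℝ (F1 ∪ G1) ∧ IsIntegralOn P α ∧
      (∀ a ∈ F1, α a = 1) ∧ (∀ b ∈ G1, α b = 0) ∧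
      polyDim F1 + polyDim G1 + 1 = polyDim P ∧
      polyCodeg F1 + polyCodeg G1 = polyCodeg P := by
  obtain ⟨⟨⟨f, g, h1, h2, h3, h4, h5, h6⟩, hdim⟩, hcod⟩ := h
  let ι : (Fin 2 → ℝ) → (Fin n → ℝ) →ᵃ[ℝ] (Fin (n + 2) → ℝ) := fun c =>
    { toFun := fun x => Fin.append x c
      linear :=
      { toFun := fun x => Fin.append x 0
        map_add' := fun x y => by
          ext i; refine Fin.addCases (fun j => ?_) (fun j => ?_) i <;> simp
        map_smul' := fun c x => by
          ext i; refine Fin.addCases (fun j => ?_) (fun j => ?_) i <;> simp }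
      map_vadd' := fun x y => by
          ext i; refine Fin.addCases (fun j => ?_) (fun j => ?_) i <;> simp }
  have hι : ∀ c x, ι c x = Fin.append x c := fun _ _ => rfl
  let π : (Fin (n + 2) → ℝ) →ᵃ[ℝ] (Fin n → ℝ) :=
    (LinearMap.funLeft ℝ ℝ (Fin.castAdd 2)).toAffineMap
  have hπι : ∀ c x, π (ι c x) = x := fun c x => by
    ext i
    simp [π, hι, LinearMap.funLeft_apply]
  set C := cayleyTwo F G with hC
  have hCF : ∀ x ∈ F, ι ![1, 0] x ∈ C := fun x hx => subset_convexHull ℝ _ (Or.inl ⟨x, hx, rfl⟩)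
  have hCG : ∀ x ∈ G, ι ![0, 1] x ∈ C := fun x hx => subset_convexHull ℝ _ (Or.inr ⟨x, hx, rfl⟩)
  have iso : ∀ (c : Fin 2 → ℝ) (A : Set (Fin n → ℝ)), IsLatticePt c → IsLatticePolytope A →
      (∀ x ∈ A, ι c x ∈ C) →
      IsLatticePolytope ((g.comp (ι c)) '' A) ∧ LatticeIso A ((g.comp (ι c)) '' A) := by
    intro c A hc hA hAC
    have hspan : ∀ x ∈ affineSpan ℝ A, ι c x ∈ affineSpan ℝ C := by
      intro x hx
      have e1 : (affineSpan ℝ A).map (ι c) ≤ affineSpan ℝ C := by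
        rw [AffineSubspace.map_span]
        refine affineSpan_mono ℝ ?_
        rintro _ ⟨y, hy, rfl⟩
        exact hAC y hy
      exact e1 ⟨x, hx, rfl⟩
    have hlat : ∀ x, IsLatticePt x → IsLatticePt (ι c x) := by
      intro x hx i
      rw [hι]
      refine Fin.addCases (fun j => ?_) (fun j => ?_) i
      · simpa using hx j
      · simpa using hc j
    have hinv : ∀ x ∈ affineSpan ℝ A, (π.comp f) ((g.comp (ι c)) x) = x := by
      intro x hx
      simp only [AffineMap.comp_apply]
      rw [h4 _ (hspan x hx), hπι]
    have hmapspan : ∀ y ∈ affineSpan ℝ ((g.comp (ι c)) '' A), ∃ x ∈ affineSpan ℝ A,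
        (g.comp (ι c)) x = y := by
      intro y hy
      rw [← AffineSubspace.map_span] at hy
      exact hy
    constructor
    · obtain ⟨k, p, hp, hAr⟩ := lp_range hA
      have hpA : ∀ i, p i ∈ A := fun i => by rw [hAr]; exact subset_convexHull ℝ _ ⟨i, rfl⟩
      nth_rw 1 [hAr]
      rw [AffineMap.image_convexHull, ← Set.range_comp]
      exact lp_of_range _ fun i => h6 _ (hspan _ (subset_affineSpan ℝ _ (hpA i))) (hlat _ (hp i))
    · refine ⟨g.comp (ι c), π.comp f, rfl, ?_, hinv, ?_, ?_, ?_⟩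
      · ext x
        constructor
        · rintro ⟨_, ⟨y, hy, rfl⟩, rfl⟩
          rwa [hinv y (subset_affineSpan ℝ _ hy)]
        · intro hx
          exact ⟨_, ⟨x, hx, rfl⟩, hinv x (subset_affineSpan ℝ _ hx)⟩
      · intro y hy
        obtain ⟨x, hx, rfl⟩ := hmapspan y hy
        rw [hinv x hx]
      · intro x hx hxl
        exact h6 _ (hspan x hx) (hlat x hxl)
      · intro y hy hyl
        obtain ⟨x, hx, rfl⟩ := hmapspan y hy
        have hyP : (g.comp (ι c)) x ∈ affineSpan ℝ P := by
          have e1 : (affineSpan ℝ C).map g ≤ affineSpan ℝ P := by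
            rw [AffineSubspace.map_span, h2]
          exact e1 ⟨_, hspan x hx, rfl⟩
        have := h5 _ hyP hyl
        intro i
        exact this (Fin.castAdd 2 i)
  obtain ⟨hF1, isoF⟩ := iso ![1, 0] F (by
    intro i; fin_cases i; exacts [⟨1, by simp⟩, ⟨0, by simp⟩]) hF hCF
  obtain ⟨hG1, isoG⟩ := iso ![0, 1] G (by
    intro i; fin_cases i; exacts [⟨0, by simp⟩, ⟨1, by simp⟩]) hG hCG
  refine ⟨_, _, (LinearMap.proj (Fin.natAdd n 0) : (Fin (n + 2) → ℝ) →ₗ[ℝ] ℝ).toAffineMap.comp f,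
    hF1, hG1, ?_, ?_, ?_, ?_, ?_, ?_⟩
  · rw [← h2, hC]
    unfold cayleyTwo
    rw [g.image_convexHull, Set.image_union, ← Set.image_comp, ← Set.image_comp]
    rfl
  · intro y hy hyl
    exact h5 y hy hyl _
  · rintro _ ⟨x, hx, rfl⟩
    have := h4 _ (subset_affineSpan ℝ _ (hCF x hx))
    simp only [AffineMap.comp_apply, this]
    simp [hι]
  · rintro _ ⟨x, hx, rfl⟩
    have := h4 _ (subset_affineSpan ℝ _ (hCG x hx))
    simp only [AffineMap.comp_apply, this]
    simp [hι]
  · rw [← isoF.dim_eq, ← isoG.dim_eq, hdim]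
  · rw [← isoF.codeg_eq hF hF1, ← isoG.codeg_eq hG hG1, hcod]

theorem step {d : ℕ} {P F G : Set (Fin d → ℝ)} (hF : IsLatticePolytope F)
    (hG : IsLatticePolytope G) (hP : P = convexHull ℝ (F ∪ G))
    {α : (Fin d → ℝ) →ᵃ[ℝ] ℝ} (hα : IsIntegralOn P α)
    (h1 : ∀ a ∈ F, α a = 1) (h0 : ∀ b ∈ G, α b = 0)
    (hdim : polyDim F + polyDim G + 1 = polyDim P)
    (hcod : polyCodeg F + polyCodeg G = polyCodeg P) (hGor : IsGorenstein P)
    (hdeg : 3 * polyDeg F ≤ polyDim F)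
    (IH : ∀ Q : Set (Fin d → ℝ), polyDim Q < polyDim P → IsLatticePolytope Q → IsGorenstein Q →
      3 * polyDeg Q ≤ polyDim Q → IsLatticePyramid Q) : IsLatticePyramid P :=
  pyramid_lift hF hG hP hα h1 h0 hdim hcod hGor
    (IH F (by omega) hF (factor_gorenstein hF hG hP h1 h0 hdim hcod hGor) hdeg)

/-- If every irreducible Gorenstein polytope of dimension `d` and degree `s` with
`d ≥ 3s` is a lattice pyramid, then every Gorenstein polytope of dimension `d` and
degree `s` with `d ≥ 3s` is a lattice pyramid. -/
theorem stmt6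
    (H : ∀ (N : ℕ) (P : Set (Fin N → ℝ)), IsLatticePolytope P → IsGorenstein P →
      ¬ IsReducible P → 3 * polyDeg P ≤ polyDim P → IsLatticePyramid P) :
    ∀ (N : ℕ) (P : Set (Fin N → ℝ)), IsLatticePolytope P → IsGorenstein P →
      3 * polyDeg P ≤ polyDim P → IsLatticePyramid P := by
  intro N P
  induction hn : polyDim P using Nat.strong_induction_on generalizing P with
  | _ n ih =>
    subst hn
    intro hL hGor hdeg
    have IH : ∀ Q : Set (Fin N → ℝ), polyDim Q < polyDim P → IsLatticePolytope Q →
        IsGorenstein Q → 3 * polyDeg Q ≤ polyDim Q → IsLatticePyramid Q :=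
      fun Q hQ => ih _ hQ Q rfl
    by_cases hred : IsReducible P
    · rcases hred with hpt | ⟨n, F0, G0, hF0, hG0, hr⟩
      · exact Or.inl hpt
      · obtain ⟨F, G, α, hF, hG, hP, hα, h1, h0, hdim, hcod⟩ := internalize hF0 hG0 hr
        have hor : 3 * polyDeg F ≤ polyDim F ∨ 3 * polyDeg G ≤ polyDim G := by
          unfold polyDeg at hdeg ⊢
          omega
        rcases hor with h | h
        · exact step hF hG hP hα h1 h0 hdim hcod hGor h IH
        · refine step (α := AffineMap.const ℝ _ 1 - α) hG hF (by rw [hP, Set.union_comm]) ?_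
            (fun a ha => by simp [h0 a ha]) (fun a ha => by simp [h1 a ha]) (by omega) (by omega)
            hGor h IH
          intro y hy hyl
          obtain ⟨z, hz⟩ := hα y hy hyl
          exact ⟨1 - z, by simp [hz]⟩
    · exact H N P hL hGor hred hdeg
end

section
/- Let s ≥ 1 and in ℝ^s set P_i := conv(0, e_i) for i = 1,…,s and P_{s+i} := conv(0, −e_i) for i = 1,…,s. Then P_1 + ⋯ + P_{2s} = [−1,1]^s is reflexive, and the Cayley polytope P_1 * ⋯ * P_{2s} is a Gorenstein polytope of dimension 3s−1 and degree s that is not a lattice pyramid. -/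
open Pointwise

/-- For `i < s`, the segment `conv(0, e_i) ⊆ ℝ^s`; for `s ≤ i < 2s`, the segment
`conv(0, -e_{i-s}) ⊆ ℝ^s`. -/
noncomputable def segPM (s : ℕ) (i : Fin (2 * s)) : Set (Fin s → ℝ) :=
  if h : (i : ℕ) < s then segment ℝ 0 (Pi.single (⟨(i : ℕ), h⟩ : Fin s) (1 : ℝ))
  else segment ℝ 0 (-(Pi.single (⟨(i : ℕ) - s, by have := i.isLt; omega⟩ : Fin s) (1 : ℝ)))


open Filter Topology in
lemma aux_eps {d : ℕ} {ι : Type*} [Finite ι] (l : ι → (Fin d → ℝ) →ᵃ[ℝ] ℝ) (x y : Fin d → ℝ)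
    (hx : ∀ j, 0 < l j x) :
    ∃ ε > 0, ∀ t : ℝ, |t| ≤ ε → ∀ j, 0 < l j (AffineMap.lineMap x y t) := by
  have h : ∀ᶠ t in 𝓝 (0 : ℝ), ∀ j, 0 < l j (AffineMap.lineMap x y t) := by
    rw [eventually_all]
    intro j
    have hc : Continuous fun t : ℝ => l j (AffineMap.lineMap x y t) :=
      (AffineMap.continuous_of_finiteDimensional (l j)).comp AffineMap.lineMap_continuous
    have := hc.tendsto 0
    simp only [AffineMap.lineMap_apply_zero] at this
    exact this.eventually (lt_mem_nhds (hx j))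
  obtain ⟨δ, hδ, h⟩ := Metric.eventually_nhds_iff.1 h
  refine ⟨δ / 2, by positivity, fun t ht => h ?_⟩
  rw [Real.dist_eq, sub_zero]
  linarith

lemma aux_span {d : ℕ} {ι : Type*} [Finite ι] (l : ι → (Fin d → ℝ) →ᵃ[ℝ] ℝ)
    (A : AffineSubspace ℝ (Fin d → ℝ)) (P : Set (Fin d → ℝ))
    (hP : ∀ y, y ∈ P ↔ y ∈ A ∧ ∀ j, 0 ≤ l j y) (x : Fin d → ℝ) (hxA : x ∈ A)
    (hx : ∀ j, 0 < l j x) : affineSpan ℝ P = A := by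
  apply le_antisymm
  · rw [affineSpan_le]
    intro y hy
    exact ((hP y).1 hy).1
  · intro y hy
    obtain ⟨ε, hε, h⟩ := aux_eps l x y hx
    have h1 : AffineMap.lineMap x y ε ∈ P :=
      (hP _).2 ⟨AffineMap.lineMap_mem _ hxA hy, fun j => (h ε (abs_of_pos hε).le j).le⟩
    have h2 : x ∈ P := (hP _).2 ⟨hxA, fun j => (hx j).le⟩
    have h3 : y = AffineMap.lineMap x (AffineMap.lineMap x y ε) (1 / ε) := by
      ext k
      simp [AffineMap.lineMap_apply]
      field_simp
      ring
    rw [h3]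
    exact AffineMap.lineMap_mem _ (subset_affineSpan ℝ _ h2) (subset_affineSpan ℝ _ h1)

lemma aux_int {d : ℕ} {ι : Type*} [Finite ι] (l : ι → (Fin d → ℝ) →ᵃ[ℝ] ℝ)
    (A : AffineSubspace ℝ (Fin d → ℝ)) (P : Set (Fin d → ℝ))
    (hP : ∀ y, y ∈ P ↔ y ∈ A ∧ ∀ j, 0 ≤ l j y) (x : Fin d → ℝ) (hxA : x ∈ A)
    (hx : ∀ j, 0 < l j x) : x ∈ intrinsicInterior ℝ P := by
  have hs := aux_span l A P hP x hxA hx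
  have hx' : x ∈ affineSpan ℝ P := hs ▸ hxA
  rw [mem_intrinsicInterior]
  refine ⟨⟨x, hx'⟩, ?_, rfl⟩
  rw [mem_interior]
  refine ⟨{z : affineSpan ℝ P | ∀ j, 0 < l j z}, ?_, ?_, hx⟩
  · intro z hz
    refine (hP _).2 ⟨hs ▸ z.2, fun j => (hz j).le⟩
  · have : {z : affineSpan ℝ P | ∀ j, 0 < l j z} = ⋂ j, {z : affineSpan ℝ P | 0 < l j z} := by
      ext; simp
    rw [this]
    exact isOpen_iInter_of_finite fun j => isOpen_lt continuous_const
      ((AffineMap.continuous_of_finiteDimensional (l j)).comp continuous_subtype_val)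

open Filter Topology in
lemma aux_int_conv {d : ℕ} (l : (Fin d → ℝ) →ᵃ[ℝ] ℝ) (P : Set (Fin d → ℝ))
    (hP : ∀ y ∈ P, 0 ≤ l y) (x : Fin d → ℝ) (hx : x ∈ intrinsicInterior ℝ P)
    (y : Fin d → ℝ) (hy : y ∈ P) (hly : 0 < l y) : 0 < l x := by
  rw [mem_intrinsicInterior] at hx
  obtain ⟨z, hz, rfl⟩ := hx
  have hm : ∀ t : ℝ, AffineMap.lineMap (z : Fin d → ℝ) y t ∈ affineSpan ℝ P := fun t =>
    AffineMap.lineMap_mem _ z.2 (subset_affineSpan ℝ _ hy)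
  have hc : Continuous fun t : ℝ => (⟨AffineMap.lineMap (z : Fin d → ℝ) y t, hm t⟩ : affineSpan ℝ P) :=
    Continuous.subtype_mk AffineMap.lineMap_continuous _
  have ht := hc.tendsto 0
  simp only [AffineMap.lineMap_apply_zero] at ht
  have h := ht.eventually (mem_interior_iff_mem_nhds.1 hz)
  obtain ⟨δ, hδ, h⟩ := Metric.eventually_nhds_iff.1 h
  have h1 := h (y := -(δ / 2)) (by rw [Real.dist_eq, sub_zero, abs_neg, abs_of_pos] <;> linarith)
  have h2 := hP _ h1
  simp only [AffineMap.apply_lineMap] at h2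
  simp only [AffineMap.lineMap_apply, vsub_eq_sub, smul_eq_mul, vadd_eq_add] at h2
  nlinarith

lemma aux_facet {d : ℕ} {ι : Type*} [Finite ι] (l : ι → (Fin d → ℝ) →ᵃ[ℝ] ℝ)
    (A : AffineSubspace ℝ (Fin d → ℝ)) (P : Set (Fin d → ℝ)) (hc : Convex ℝ P)
    (hP : ∀ y, y ∈ P ↔ y ∈ A ∧ ∀ j, 0 ≤ l j y) (F : Set (Fin d → ℝ)) (hF : IsFacet P F) :
    ∃ j, ∀ f ∈ F, l j f = 0 := by
  classical
  obtain ⟨hE, hN, hd⟩ := hF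
  have hFc : Convex ℝ F := hE.convex hc
  have hsub : F ⊆ P := hE.subset
  by_contra! hcon
  cases nonempty_fintype ι
  have key : ∀ S : Finset ι, ∃ f ∈ F, ∀ j ∈ S, 0 < l j f := by
    intro S
    induction S using Finset.induction_on with
    | empty => obtain ⟨f, hf⟩ := hN; exact ⟨f, hf, by simp⟩
    | insert a S _ ih =>
      obtain ⟨f, hf, hfS⟩ := ih
      obtain ⟨g, hg, hga⟩ := hcon a
      have hg0 : ∀ j, 0 ≤ l j g := ((hP g).1 (hsub hg)).2
      have hf0 : ∀ j, 0 ≤ l j f := ((hP f).1 (hsub hf)).2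
      refine ⟨midpoint ℝ f g, hFc.midpoint_mem hf hg, ?_⟩
      intro j hj
      rw [AffineMap.map_midpoint, midpoint_eq_smul_add]
      simp only [smul_eq_mul, invOf_eq_inv]
      rcases Finset.mem_insert.1 hj with rfl | hj
      · have := lt_of_le_of_ne (hg0 j) (Ne.symm hga)
        have := hf0 j
        nlinarith
      · have := hfS j hj
        have := hg0 j
        nlinarith
  obtain ⟨f, hf, hfp⟩ := key Finset.univ
  have hfp : ∀ j, 0 < l j f := fun j => hfp j (Finset.mem_univ j)
  obtain ⟨L, hL⟩ := hE hN
  have : F = P := by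
    apply subset_antisymm hsub
    intro y hy
    obtain ⟨ε, hε, h⟩ := aux_eps l f y hfp
    have h1 : AffineMap.lineMap f y (-ε) ∈ P :=
      (hP _).2 ⟨AffineMap.lineMap_mem _ ((hP f).1 (hsub hf)).1 ((hP y).1 hy).1,
        fun j => (h (-ε) (by rw [abs_neg, abs_of_pos hε]) j).le⟩
    have hf' := hf
    rw [hL] at hf'
    have h2 := hf'.2 _ h1
    rw [AffineMap.lineMap_apply] at h2
    simp only [vsub_eq_sub, vadd_eq_add, map_add, map_smul, map_sub, smul_eq_mul] at h2
    have h3 : L f ≤ L y := by nlinarith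
    rw [hL]
    exact ⟨hy, fun w hw => (hf'.2 w hw).trans h3⟩
  rw [this] at hd
  omega

/-- Generic reflexivity criterion. -/
lemma aux_refl {d : ℕ} {ι : Type*} [Finite ι] (l : ι → (Fin d → ℝ) →ᵃ[ℝ] ℝ)
    (A : AffineSubspace ℝ (Fin d → ℝ)) (P : Set (Fin d → ℝ)) (hc : Convex ℝ P)
    (hP : ∀ y, y ∈ P ↔ y ∈ A ∧ ∀ j, 0 ≤ l j y) (x : Fin d → ℝ) (hxA : x ∈ A)
    (hxl : IsLatticePt x) (hx : ∀ j, l j x = 1)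
    (hl : ∀ j y, IsLatticePt y → ∃ z : ℤ, l j y = z) : IsReflexivePolytope P := by
  refine ⟨x, aux_int l A P hP x hxA (fun j => by rw [hx]; exact one_pos), hxl, ?_⟩
  intro F hF
  obtain ⟨j, hj⟩ := aux_facet l A P hc hP F hF
  refine ⟨-(l j), ?_, ?_⟩
  · intro y _ hy
    obtain ⟨z, hz⟩ := hl j y hy
    exact ⟨-z, by simp [hz]⟩
  · intro f hf
    simp [hj f hf, hx j]

def kap {s : ℕ} (i : Fin (2 * s)) : Fin s :=
  if h : (i : ℕ) < s then ⟨i, h⟩ else ⟨(i : ℕ) - s, by have := i.isLt; omega⟩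

noncomputable def sg {s : ℕ} (i : Fin (2 * s)) : ℝ := if (i : ℕ) < s then 1 else -1

def lo {s : ℕ} (k : Fin s) : Fin (2 * s) := ⟨k, by omega⟩
def hi {s : ℕ} (k : Fin s) : Fin (2 * s) := ⟨s + k, by omega⟩

@[simp] lemma kap_lo {s : ℕ} (k : Fin s) : kap (lo k) = k := by simp [kap, lo]
@[simp] lemma kap_hi {s : ℕ} (k : Fin s) : kap (hi k) = k := by simp [kap, hi]
@[simp] lemma sg_lo {s : ℕ} (k : Fin s) : sg (lo k) = 1 := by simp [sg, lo]
@[simp] lemma sg_hi {s : ℕ} (k : Fin s) : sg (hi k) = -1 := by simp [sg, hi]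

lemma lohi {s : ℕ} (i : Fin (2 * s)) : i = lo (kap i) ∨ i = hi (kap i) := by
  by_cases h : (i : ℕ) < s
  · left; simp [kap, lo, h]
  · right; simp only [kap, hi, h, dif_neg, not_false_eq_true]; ext; simp; omega

lemma sum_lohi {s : ℕ} {M : Type*} [AddCommMonoid M] (F : Fin (2 * s) → M) :
    ∑ i, F i = ∑ k, (F (lo k) + F (hi k)) := by
  rw [← Equiv.sum_comp (finCongr (two_mul s).symm) F, Fin.sum_univ_add, Finset.sum_add_distrib]
  rfl

lemma sum_single {s : ℕ} (g : Fin (2 * s) → ℝ) (k : Fin s) :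
    ∑ i, (Pi.single (kap i) (g i) : Fin s → ℝ) k = g (lo k) + g (hi k) := by
  rw [sum_lohi]
  simp [Finset.sum_add_distrib, Pi.single_apply]

lemma mem_seg {s : ℕ} (i : Fin (2 * s)) (x : Fin s → ℝ) :
    x ∈ segPM s i ↔ ∃ t : ℝ, 0 ≤ t ∧ t ≤ 1 ∧ x = Pi.single (kap i) (t * sg i) := by
  have : segPM s i = segment ℝ 0 (Pi.single (kap i) (sg i)) := by
    unfold segPM kap sg
    split_ifs <;> simp [Pi.single_neg]
  rw [this, segment_eq_image]
  simp only [Set.mem_image, Set.mem_Icc, smul_zero, zero_add]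
  constructor
  · rintro ⟨t, ⟨h0, h1⟩, rfl⟩
    exact ⟨t, h0, h1, by rw [← Pi.single_smul]; rfl⟩
  · rintro ⟨t, h0, h1, rfl⟩
    exact ⟨t, ⟨h0, h1⟩, by rw [← Pi.single_smul]; rfl⟩

lemma part1 (s : ℕ) :
    (∑ i, segPM s i) = Set.pi Set.univ (fun _ : Fin s => Set.Icc (-1 : ℝ) 1) := by
  ext y
  rw [Set.mem_fintype_sum]
  constructor
  · rintro ⟨g, hg, rfl⟩
    have := fun i => (mem_seg i (g i)).1 (hg i)
    choose t h0 h1 ht using this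
    intro k _
    have : (∑ i, g i) k = t (lo k) * sg (lo k) + t (hi k) * sg (hi k) := by
      rw [← sum_single (fun i => t i * sg i) k, Finset.sum_apply]
      exact Finset.sum_congr rfl fun i _ => by rw [ht i]
    simp only [this, sg_lo, sg_hi, Set.mem_Icc]
    have := h0 (lo k); have := h1 (lo k); have := h0 (hi k); have := h1 (hi k)
    constructor <;> linarith
  · intro hy
    have hy : ∀ k, -1 ≤ y k ∧ y k ≤ 1 := fun k => hy k (Set.mem_univ k)
    refine ⟨fun i => Pi.single (kap i) (max (sg i * y (kap i)) 0 * sg i), fun i => ?_, ?_⟩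
    · refine (mem_seg i _).2 ⟨_, le_max_right _ _, ?_, rfl⟩
      have := hy (kap i)
      rcases lohi i with h | h <;> rw [h] <;> simp <;> linarith
    · ext k
      rw [Finset.sum_apply, sum_single]
      simp
      rcases le_total (y k) 0 with h | h
      · rw [max_eq_right h, max_eq_left (by linarith)]; ring
      · rw [max_eq_left h, max_eq_right (by linarith)]; ring

lemma part2 (s : ℕ) : IsReflexivePolytope (∑ i, segPM s i) := by
  rw [part1]
  refine aux_refl (ι := Fin (2 * s))
    (fun i => AffineMap.const ℝ _ 1 + (sg i • LinearMap.proj (R := ℝ) (kap i)).toAffineMap) ⊤ _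
    (convex_pi fun _ _ => convex_Icc _ _) ?_ 0 trivial (fun i => ⟨0, by simp⟩) ?_ ?_
  · intro y
    simp only [Set.mem_pi, Set.mem_univ, true_imp_iff, Set.mem_Icc, AffineSubspace.mem_top, true_and]
    constructor
    · intro h i
      have := h (kap i)
      rcases lohi i with h | h <;> rw [h] <;> simp <;> linarith
    · intro h k
      have h1 := h (lo k)
      have h2 := h (hi k)
      simp at h1 h2
      constructor <;> linarith
  · intro j; simp
  · intro j y hy
    obtain ⟨z, hz⟩ := hy (kap j)
    rcases lohi j with h | h <;> rw [h] 
    · exact ⟨1 + z, by simp [hz]⟩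
    · exact ⟨1 - z, by simp [hz]; ring⟩

/-! The Cayley polytope -/

noncomputable def phi (s : ℕ) : (Fin (s + 2 * s) → ℝ) →ₗ[ℝ] ℝ :=
  ∑ i : Fin (2 * s), LinearMap.proj (Fin.natAdd s i)

lemma phi_apply {s : ℕ} (y : Fin (s + 2 * s) → ℝ) : phi s y = ∑ i, y (Fin.natAdd s i) := by
  simp [phi]

noncomputable def ell {s : ℕ} : Fin (2 * s) ⊕ Fin (2 * s) → (Fin (s + 2 * s) → ℝ) →ₗ[ℝ] ℝ
  | .inl i => LinearMap.proj (Fin.natAdd s i)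
  | .inr i => LinearMap.proj (Fin.natAdd s i) - sg i • LinearMap.proj (Fin.castAdd (2 * s) (kap i))

lemma ell_inl {s : ℕ} (i : Fin (2 * s)) (y) : ell (.inl i) y = y (Fin.natAdd s i) := rfl
lemma ell_inr {s : ℕ} (i : Fin (2 * s)) (y) :
    ell (.inr i) y = y (Fin.natAdd s i) - sg i * y (Fin.castAdd (2 * s) (kap i)) := rfl

def x0 (s : ℕ) : Fin (s + 2 * s) → ℝ := Fin.append 0 1

lemma ell_x0 {s : ℕ} (j) : ell j (x0 s) = 1 := by
  rcases j with i | i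
  · simp [ell_inl, x0]
  · simp [ell_inr, x0]

lemma phi_x0 (s : ℕ) : phi s (x0 s) = 2 * s := by simp [phi_apply, x0]

noncomputable def AA (s : ℕ) (r : ℝ) : AffineSubspace ℝ (Fin (s + 2 * s) → ℝ) :=
  AffineSubspace.mk' ((r / (2 * s)) • x0 s) (LinearMap.ker (phi s))

lemma mem_AA {s : ℕ} (hs : 1 ≤ s) (r : ℝ) (y) : y ∈ AA s r ↔ phi s y = r := by
  have : (s : ℝ) ≠ 0 := by positivity
  rw [AA, AffineSubspace.mem_mk', LinearMap.mem_ker, vsub_eq_sub, map_sub, map_smul, phi_x0,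
    sub_eq_zero, smul_eq_mul, div_mul_cancel₀ _ (by positivity)]

lemma gen_mem {s : ℕ} (i : Fin (2 * s)) (t : ℝ) (h0 : 0 ≤ t) (h1 : t ≤ 1) :
    (Fin.append (Pi.single (kap i) (t * sg i)) (Pi.single i 1) : Fin (s + 2 * s) → ℝ) ∈
      ⋃ i : Fin (2 * s), (fun x => Fin.append x (Pi.single i (1 : ℝ))) '' segPM s i :=
  Set.mem_iUnion.2 ⟨i, _, (mem_seg i _).2 ⟨t, h0, h1, rfl⟩, rfl⟩

lemma mem_cayley {s : ℕ} (y : Fin (s + 2 * s) → ℝ) :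
    y ∈ cayley (segPM s) ↔ phi s y = 1 ∧ ∀ j, 0 ≤ ell j y := by
  constructor
  · intro hy
    have hcv : Convex ℝ {y : Fin (s + 2 * s) → ℝ | phi s y = 1 ∧ ∀ j, 0 ≤ ell j y} := by
      rintro a ⟨ha, ha'⟩ b ⟨hb, hb'⟩ p q hp hq hpq
      refine ⟨by simp [ha, hb, hpq], fun j => ?_⟩
      have := ha' j; have := hb' j
      simp only [map_add, map_smul, smul_eq_mul]
      positivity
    refine convexHull_min ?_ hcv hy
    intro v hv
    obtain ⟨i, x, hx, rfl⟩ := Set.mem_iUnion.1 hv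
    obtain ⟨t, h0, h1, rfl⟩ := (mem_seg i _).1 hx
    refine ⟨by simp [phi_apply], ?_⟩
    rintro (j | j)
    · simp only [ell_inl, Fin.append_right, Pi.single_apply]
      split_ifs <;> norm_num
    · simp only [ell_inr, Fin.append_right, Fin.append_left, Pi.single_apply]
      rcases lohi i with hi' | hi' <;> rcases lohi j with hj' | hj' <;>
      by_cases hk : kap j = kap i <;> rw [hi', hj'] <;> simp [hk] <;> (try split_ifs) <;> linarith
  · rintro ⟨hφ, hl⟩
    have hc : ∀ i, 0 ≤ y (Fin.natAdd s i) := fun i => hl (.inl i)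
    have hw : ∀ i, max (sg i * y (Fin.castAdd (2 * s) (kap i))) 0 ≤ y (Fin.natAdd s i) := by
      intro i
      have := hl (.inr i)
      rw [ell_inr] at this
      exact max_le (by linarith) (hc i)
    set w : Fin (2 * s) → ℝ := fun i => max (sg i * y (Fin.castAdd (2 * s) (kap i))) 0 with hwd
    have hw0 : ∀ i, 0 ≤ w i := fun i => le_max_right _ _
    have hcw : ∀ i, y (Fin.natAdd s i) * (w i / y (Fin.natAdd s i)) = w i := by
      intro i
      by_cases h : y (Fin.natAdd s i) = 0
      · have := hw i; have := hw0 i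
        rw [h, zero_mul]; apply le_antisymm <;> [assumption; (rw [← h]; exact hw i)]
      · field_simp
    have : y = ∑ i, y (Fin.natAdd s i) •
        (Fin.append (Pi.single (kap i) (w i / y (Fin.natAdd s i) * sg i)) (Pi.single i 1) :
          Fin (s + 2 * s) → ℝ) := by
      ext k
      rw [Finset.sum_apply]
      induction k using Fin.addCases with
      | left k =>
        have : ∀ i, (y (Fin.natAdd s i) •
          (Fin.append (Pi.single (kap i) (w i / y (Fin.natAdd s i) * sg i)) (Pi.single i 1) :
          Fin (s + 2 * s) → ℝ)) (Fin.castAdd _ k) = (Pi.single (kap i) (w i * sg i) : Fin s → ℝ) k := by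
          intro i
          simp only [Pi.smul_apply, Fin.append_left, Pi.single_apply, smul_eq_mul]
          split_ifs
          · rw [← mul_assoc, hcw]
          · simp
        rw [Finset.sum_congr rfl fun i _ => this i, sum_single]
        simp [hwd]
        rcases le_total (y (Fin.castAdd _ k)) 0 with h | h
        · rw [max_eq_right h, max_eq_left (by linarith)]; ring
        · rw [max_eq_left h, max_eq_right (by linarith)]; ring
      | right k => simp [Pi.single_apply]
    rw [this]
    refine (convex_convexHull ℝ _).sum_mem (fun i _ => hc i) (by rw [← phi_apply, hφ])
      fun i _ => subset_convexHull ℝ _ (gen_mem i _ ?_ ?_)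
    · exact div_nonneg (hw0 i) (hc i)
    · exact div_le_one_of_le₀ (hw i) (hc i)

lemma mem_smul_cayley {s : ℕ} (hs : 1 ≤ s) (r : ℝ) (hr : 0 < r) (y : Fin (s + 2 * s) → ℝ) :
    y ∈ r • cayley (segPM s) ↔ y ∈ AA s r ∧ ∀ j, 0 ≤ (ell j).toAffineMap y := by
  rw [Set.mem_smul_set_iff_inv_smul_mem₀ hr.ne', mem_cayley, mem_AA hs]
  simp only [map_smul, smul_eq_mul, LinearMap.coe_toAffineMap]
  refine and_congr ?_ (forall_congr' fun j => ?_)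
  · rw [inv_mul_eq_one₀ hr.ne', eq_comm]
  · exact mul_nonneg_iff_of_pos_left (inv_pos.2 hr)

lemma ell_int {s : ℕ} (j) (y : Fin (s + 2 * s) → ℝ) (hy : IsLatticePt y) :
    ∃ z : ℤ, ell j y = z := by
  rcases j with i | i
  · exact hy _
  · obtain ⟨a, ha⟩ := hy (Fin.natAdd s i)
    obtain ⟨b, hb⟩ := hy (Fin.castAdd (2 * s) (kap i))
    rw [ell_inr, ha, hb]
    rcases lohi i with h | h <;> rw [h] 
    · exact ⟨a - b, by simp⟩
    · exact ⟨a + b, by simp⟩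

lemma x0_lat (s : ℕ) : IsLatticePt (x0 s) := by
  intro k
  induction k using Fin.addCases with
  | left k => exact ⟨0, by simp [x0]⟩
  | right k => exact ⟨1, by simp [x0]⟩

lemma x0_mem {s : ℕ} (hs : 1 ≤ s) : x0 s ∈ AA s ((2 * s : ℕ) : ℝ) := by
  rw [mem_AA hs, phi_x0]; push_cast; rfl

lemma part3 {s : ℕ} (hs : 1 ≤ s) : IsGorenstein (cayley (segPM s)) := by
  refine ⟨2 * s, by omega, ?_⟩
  have hr : (0 : ℝ) < ((2 * s : ℕ) : ℝ) := by positivity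
  refine aux_refl (fun j => (ell j).toAffineMap) (AA s ((2 * s : ℕ) : ℝ)) _
    ((convex_convexHull ℝ _).smul _) (mem_smul_cayley hs _ hr) (x0 s) (x0_mem hs) (x0_lat s)
    ell_x0 ell_int

lemma part4 {s : ℕ} (hs : 1 ≤ s) : polyDim (cayley (segPM s)) = 3 * s - 1 := by
  have h1 : affineSpan ℝ (cayley (segPM s)) = AA s 1 := by
    refine aux_span (fun j => (ell j).toAffineMap) (AA s 1) _ ?_ ((1 / (2 * s) : ℝ) • x0 s) ?_ ?_
    · intro y
      rw [← mem_smul_cayley hs 1 one_pos, one_smul]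
    · exact AffineSubspace.self_mem_mk' _ _
    · intro j
      have : (0 : ℝ) < s := by positivity
      simp [ell_x0, this]
  have h2 : phi s ≠ 0 := by
    intro h
    have := phi_x0 s
    rw [h] at this
    have h3 : (0 : ℝ) < s := by positivity
    simp at this
    linarith
  have h3 := Module.Dual.finrank_ker_add_one_of_ne_zero (K := ℝ) (f := phi s) h2
  rw [polyDim, h1, AA, AffineSubspace.direction_mk']
  simp at h3
  omega

lemma part5a {s : ℕ} (hs : 1 ≤ s) : polyCodeg (cayley (segPM s)) = 2 * s := by
  apply IsLeast.csInf_eq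
  constructor
  · refine ⟨by omega, fun h => ?_⟩
    have hr : (0 : ℝ) < ((2 * s : ℕ) : ℝ) := by positivity
    exact h (x0 s) (aux_int (fun j => (ell j).toAffineMap) (AA s ((2 * s : ℕ) : ℝ)) _
      (mem_smul_cayley hs _ hr) (x0 s) (x0_mem hs)
      (fun j => by simp [ell_x0])) (x0_lat s)
  · rintro r ⟨hr, hh⟩
    have hr' : (0 : ℝ) < r := by exact_mod_cast hr
    have hs' : (0 : ℝ) < s := by positivity
    unfold IsHollow at hh
    push Not at hh
    obtain ⟨x, hx, hxl⟩ := hh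
    have hm := mem_smul_cayley hs r hr'
    have hxP := (hm x).1 (intrinsicInterior_subset hx)
    have hp : ∀ j, 0 < (ell j).toAffineMap (((r : ℝ) / (2 * s)) • x0 s) := by
      intro j
      simp only [LinearMap.coe_toAffineMap, map_smul, ell_x0]
      positivity
    have hge : ∀ i : Fin (2 * s), 1 ≤ x (Fin.natAdd s i) := by
      intro i
      have h := aux_int_conv ((ell (.inl i)).toAffineMap) _
        (fun y hy => ((hm y).1 hy).2 (.inl i)) x hx _
        ((hm _).2 ⟨AffineSubspace.self_mem_mk' _ _, fun j => (hp j).le⟩) (hp _)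
      simp only [LinearMap.coe_toAffineMap, ell_inl] at h
      obtain ⟨z, hz⟩ := hxl (Fin.natAdd s i)
      rw [hz] at h ⊢
      exact_mod_cast h
    have h1 := (mem_AA hs _ _).1 hxP.1
    rw [phi_apply] at h1
    have h2 := Finset.sum_le_sum (s := Finset.univ) fun i _ => hge i
    rw [h1] at h2
    simp at h2
    exact_mod_cast h2

lemma pyr {m : ℕ} (P' : Set (Fin m → ℝ)) (y : Fin (m + 1) → ℝ) (hy : y ∈ pyramidOver P') :
    0 ≤ y (Fin.last m) ∧ y (Fin.last m) ≤ 1 ∧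
      (y (Fin.last m) = 1 → y = Fin.snoc (0 : Fin m → ℝ) (1 : ℝ)) := by
  unfold pyramidOver at hy
  rcases P'.eq_empty_or_nonempty with he | hne
  · subst he
    simp at hy
    subst hy
    simp
  rw [Set.union_comm, Set.singleton_union, convexHull_insert (hne.image _)] at hy
  rw [convexJoin_singleton_left] at hy
  simp only [Set.mem_iUnion] at hy
  obtain ⟨p, hp, hy⟩ := hy
  have hp0 : p (Fin.last m) = 0 := by
    have hcv : Convex ℝ {p : Fin (m + 1) → ℝ | p (Fin.last m) = 0} := by
      intro a ha b hb c e _ _ _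
      simp only [Set.mem_ofPred_eq] at ha hb
      simp [ha, hb]
    refine convexHull_min ?_ hcv hp
    rintro _ ⟨x, _, rfl⟩
    simp
  rw [segment_eq_image] at hy
  obtain ⟨t, ⟨h0, h1⟩, rfl⟩ := hy
  simp only [Pi.add_apply, Pi.smul_apply, Fin.snoc_last, hp0, smul_eq_mul]
  refine ⟨by linarith, by linarith, fun h => ?_⟩
  have : t = 0 := by linarith
  subst this
  simp

lemma part6 {s : ℕ} (hs : 1 ≤ s) : ¬ IsLatticePyramid (cayley (segPM s)) := by
  let a : Fin (2 * s) → Fin (s + 2 * s) → ℝ := fun i => Fin.append 0 (Pi.single i 1)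
  let b : Fin (2 * s) → Fin (s + 2 * s) → ℝ :=
    fun i => Fin.append (Pi.single (kap i) (sg i)) (Pi.single i 1)
  have ha : ∀ i, a i ∈ cayley (segPM s) := fun i => subset_convexHull ℝ _ (by
    have := gen_mem i 0 le_rfl zero_le_one
    simpa using this)
  have hb : ∀ i, b i ∈ cayley (segPM s) := fun i => subset_convexHull ℝ _ (by
    have := gen_mem i 1 zero_le_one le_rfl
    simpa using this)
  have hsg : ∀ i : Fin (2 * s), ∃ z : ℤ, sg i = z ∧ sg i ≠ 0 := by
    intro i
    rcases lohi i with h | h <;> rw [h]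
    · exact ⟨1, by simp⟩
    · exact ⟨-1, by simp⟩
  have hlat1 : ∀ i j : Fin (2 * s), ∃ z : ℤ, (Pi.single i 1 : Fin (2 * s) → ℝ) j = z := by
    intro i j
    rw [Pi.single_apply]
    split_ifs
    · exact ⟨1, by simp⟩
    · exact ⟨0, by simp⟩
  have hal : ∀ i, IsLatticePt (a i) := by
    intro i k
    induction k using Fin.addCases with
    | left k => exact ⟨0, by simp [a]⟩
    | right k => simpa [a] using hlat1 i k
  have hbl : ∀ i, IsLatticePt (b i) := by
    intro i k
    induction k using Fin.addCases with
    | left k =>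
      obtain ⟨z, hz, _⟩ := hsg i
      simp only [b, Fin.append_left, Pi.single_apply, hz]
      split_ifs
      · exact ⟨z, rfl⟩
      · exact ⟨0, by simp⟩
    | right k => simpa [b] using hlat1 i k
  have hab : ∀ i j, a i ≠ b j := by
    intro i j h
    have := congrFun h (Fin.castAdd _ (kap j))
    simp [a, b] at this
    exact (hsg j).choose_spec.2 this.symm
  have hop : ∀ i : Fin (2 * s), ∃ i', a i + a i' = b i + b i' := by
    intro i
    have key : ∀ k : Fin s, a (lo k) + a (hi k) = b (lo k) + b (hi k) := by
      intro k
      ext j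
      induction j using Fin.addCases with
      | left j => simp [a, b, Pi.single_apply]; split_ifs <;> simp
      | right j => simp [a, b]
    rcases lohi i with h | h
    · exact ⟨hi (kap i), by rw [h]; simpa using key (kap i)⟩
    · refine ⟨lo (kap i), ?_⟩
      have := key (kap i)
      rw [← h] at this
      rw [add_comm (a i), add_comm (b i)]
      exact this
  rintro (⟨x, _, hx⟩ | ⟨m, P', -, f, g, hf, hg, hgf, hfg, hfl, hgl⟩)
  · have h1 := ha ⟨0, by omega⟩
    have h2 := hb ⟨0, by omega⟩
    rw [hx] at h1 h2
    exact hab _ _ (h1.trans h2.symm)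
  · set apex : Fin (m + 1) → ℝ := Fin.snoc (0 : Fin m → ℝ) (1 : ℝ) with hap
    let h : (Fin (s + 2 * s) → ℝ) →ᵃ[ℝ] ℝ := (LinearMap.proj (R := ℝ) (Fin.last m)).toAffineMap.comp f
    have hh : ∀ v, h v = f v (Fin.last m) := fun v => rfl
    have hvP : ∀ v ∈ cayley (segPM s), f v ∈ pyramidOver P' := fun v hv =>
      hf ▸ Set.mem_image_of_mem f hv
    have hone : ∀ v ∈ cayley (segPM s), h v = 1 → v = g apex := by
      intro v hv h1
      have := (pyr P' _ (hvP v hv)).2.2 h1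
      rw [hap, ← this, hgf v (subset_affineSpan ℝ _ hv)]
    have hdich : ∀ v ∈ cayley (segPM s), IsLatticePt v → h v = 0 ∨ h v = 1 := by
      intro v hv hvl
      obtain ⟨z, hz⟩ := hfl v (subset_affineSpan ℝ _ hv) hvl (Fin.last m)
      have h1 := pyr P' _ (hvP v hv)
      rw [hz] at h1
      have h2 : 0 ≤ z := by exact_mod_cast h1.1
      have h3 : z ≤ 1 := by exact_mod_cast h1.2.1
      rw [hh, hz]
      have : z = 0 ∨ z = 1 := by omega
      rcases this with rfl | rfl <;> simp
    have hdec : ∀ v, h v = h.linear v + h 0 := fun v => by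
      conv_lhs => rw [AffineMap.decomp h]
      rfl
    have hrel : ∀ i, ∃ i', h (a i) + h (a i') = h (b i) + h (b i') := by
      intro i
      obtain ⟨i', hi'⟩ := hop i
      refine ⟨i', ?_⟩
      have := congrArg h.linear hi'
      rw [map_add, map_add] at this
      rw [hdec (a i), hdec (a i'), hdec (b i), hdec (b i')]
      linarith
    have hnot : ∀ i j, h (a i) = 1 → h (b j) = 1 → False := fun i j h1 h2 =>
      hab i j ((hone _ (ha i) h1).trans (hone _ (hb j) h2).symm)
    have hz : ∀ i, h (a i) = 0 ∧ h (b i) = 0 := by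
      intro i
      obtain ⟨i', hi'⟩ := hrel i
      have d1 := hdich _ (ha i) (hal i)
      have d2 := hdich _ (ha i') (hal i')
      have d3 := hdich _ (hb i) (hbl i)
      have d4 := hdich _ (hb i') (hbl i')
      have n1 := hnot i i
      have n2 := hnot i i'
      have n3 := hnot i' i
      have n4 := hnot i' i'
      rcases d1 with d1 | d1 <;> rcases d3 with d3 | d3 <;> rcases d2 with d2 | d2 <;>
        rcases d4 with d4 | d4 <;>
        first
        | exact ⟨d1, d3⟩
        | exact (n1 d1 d3).elim
        | exact (n2 d1 d4).elim
        | exact (n3 d2 d3).elim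
        | exact (n4 d2 d4).elim
        | (exfalso; rw [d1, d2, d3, d4] at hi'; norm_num at hi')
    have hall : ∀ v ∈ cayley (segPM s), h v = 0 := by
      have hcv : Convex ℝ {v | h v = 0} := by
        have : {v | h v = 0} = h ⁻¹' {0} := rfl
        rw [this]
        exact (convex_singleton _).affine_preimage h
      intro v hv
      refine convexHull_min ?_ hcv hv
      intro v hv
      obtain ⟨i, x, hx, rfl⟩ := Set.mem_iUnion.1 hv
      obtain ⟨t, h0, h1, rfl⟩ := (mem_seg i _).1 hx
      have : (Fin.append (Pi.single (kap i) (t * sg i)) (Pi.single i 1) : Fin (s + 2 * s) → ℝ) =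
          AffineMap.lineMap (a i) (b i) t := by
        ext j
        induction j using Fin.addCases with
        | left j =>
          simp [a, b, AffineMap.lineMap_apply, Pi.single_apply]
        | right j => simp [a, b, AffineMap.lineMap_apply]
      simp only [Set.mem_ofPred_eq, this, AffineMap.apply_lineMap, hz]
      simp
    have hapm : apex ∈ pyramidOver P' := subset_convexHull ℝ _ (Or.inr rfl)
    rw [← hf] at hapm
    obtain ⟨v, hv, hva⟩ := hapm
    have := hall v hv
    rw [hh, hva, hap] at this
    simp at this

theorem stmt7 (s : ℕ) (hs : 1 ≤ s) :
    (∑ i, segPM s i) = Set.pi Set.univ (fun _ : Fin s => Set.Icc (-1 : ℝ) 1) ∧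
    IsReflexivePolytope (∑ i, segPM s i) ∧
    IsGorenstein (cayley (segPM s)) ∧
    polyDim (cayley (segPM s)) = 3 * s - 1 ∧
    polyDeg (cayley (segPM s)) = s ∧
    ¬ IsLatticePyramid (cayley (segPM s)) := by
  refine ⟨part1 s, part2 s, part3 hs, part4 hs, ?_, part6 hs⟩
  rw [polyDeg, part4 hs, part5a hs]
  omega
end

section
/- Let P be a Gorenstein polytope of dimension d and degree s. If d ≥ 2s, then P is isomorphic to a Cayley polytope P_1 * ⋯ * P_l of lattice polytopes P_1, …, P_l ⊂ ℝ^n with n ≤ 2s−1. -/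
open Pointwise

section CoreAbs
variable {W : Type} [AddCommGroup W] [Module ℝ W] {ι : Type} [Fintype ι]

/-- normalised dual cone slice -/
def dualSlice (v : ι → W) (x : W) : Set (Module.Dual ℝ W) :=
  {f | (∀ i, 0 ≤ f (v i)) ∧ f x = 1}

/-- facet functionals -/
def facetSet (v : ι → W) (x : W) : Set (Module.Dual ℝ W) :=
  {f | f ∈ dualSlice v x ∧
    ∀ h : Module.Dual ℝ W, (∀ i, f (v i) = 0 → h (v i) = 0) → h x = 0 → h = 0}

lemma slice_step (v : ι → W) (x : W) (f h : Module.Dual ℝ W) (hf : f ∈ dualSlice v x)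
    (hz : ∀ i, f (v i) = 0 → h (v i) = 0) (hx : h x = 0) (hneg : ∃ i, h (v i) < 0) :
    ∃ t : ℝ, 0 < t ∧ f + t • h ∈ dualSlice v x ∧
      (Finset.univ.filter fun i => (f + t • h) (v i) ≠ 0).card <
        (Finset.univ.filter fun i => f (v i) ≠ 0).card := by
  classical
  obtain ⟨hf0, hf1⟩ := hf
  have hne : (Finset.univ.filter fun i => h (v i) < 0).Nonempty := by
    obtain ⟨i, hi⟩ := hneg
    exact ⟨i, by simp [hi]⟩
  obtain ⟨i₀, hi₀, hmin⟩ := Finset.exists_min_image _ (fun i => f (v i) / (- h (v i))) hne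
  simp only [Finset.mem_filter, Finset.mem_univ, true_and] at hi₀ hmin
  have hfi : 0 < f (v i₀) := lt_of_le_of_ne (hf0 i₀) (fun e => by
    have := hz i₀ e.symm
    linarith)
  refine ⟨f (v i₀) / (- h (v i₀)), div_pos hfi (by linarith), ⟨fun i => ?_, ?_⟩, ?_⟩
  · simp only [LinearMap.add_apply, LinearMap.smul_apply, smul_eq_mul]
    by_cases hi : h (v i) < 0
    · have h1 := hmin i hi
      rw [le_div_iff₀ (by linarith)] at h1
      linarith
    · have : 0 ≤ f (v i₀) / (- h (v i₀)) * h (v i) :=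
        mul_nonneg (div_pos hfi (by linarith)).le (not_lt.1 hi)
      linarith [hf0 i]
  · simp [hx, hf1]
  · apply Finset.card_lt_card
    refine ⟨fun i hi => ?_, fun hsub => ?_⟩
    · simp only [Finset.mem_filter, Finset.mem_univ, true_and] at hi ⊢
      intro e
      apply hi
      simp [e, hz i e]
    · have := hsub (x := i₀) (by simp [hfi.ne'])
      simp only [Finset.mem_filter, Finset.mem_univ, true_and] at this
      apply this
      simp only [LinearMap.add_apply, LinearMap.smul_apply, smul_eq_mul]
      have hne0 := hi₀.ne
      field_simp
      ring

lemma slice_sub_hull (v : ι → W) (x : W)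
    (hint : ∀ h : Module.Dual ℝ W, (∀ i, 0 ≤ h (v i)) → h x = 0 → h = 0) :
    ∀ (n : ℕ) (f : Module.Dual ℝ W), f ∈ dualSlice v x →
      (Finset.univ.filter fun i => f (v i) ≠ 0).card < n →
      f ∈ convexHull ℝ (facetSet v x) := by
  intro n
  induction n with
  | zero => intro f _ h; simp at h
  | succ n ih =>
    intro f hf hc
    by_cases hF : f ∈ facetSet v x
    · exact subset_convexHull _ _ hF
    have : ∃ h : Module.Dual ℝ W, (∀ i, f (v i) = 0 → h (v i) = 0) ∧ h x = 0 ∧ h ≠ 0 := by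
      by_contra hcon
      push Not at hcon
      exact hF ⟨hf, hcon⟩
    obtain ⟨h, hz, hx, h0⟩ := this
    have hn1 : ∃ i, h (v i) < 0 := by
      by_contra hcon
      push Not at hcon
      exact h0 (hint h hcon hx)
    have hn2 : ∃ i, (-h) (v i) < 0 := by
      by_contra hcon
      push Not at hcon
      exact h0 (neg_eq_zero.1 (hint (-h) hcon (by simp [hx])))
    obtain ⟨t₁, ht₁, hs₁, hc₁⟩ := slice_step v x f h hf hz hx hn1
    obtain ⟨t₂, ht₂, hs₂, hc₂⟩ := slice_step v x f (-h) hf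
      (fun i hi => by simp [hz i hi]) (by simp [hx]) hn2
    have m₁ := ih _ hs₁ (by omega)
    have m₂ := ih _ hs₂ (by omega)
    have key := (convex_convexHull ℝ (facetSet v x)) m₁ m₂
      (a := t₂ / (t₁ + t₂)) (b := t₁ / (t₁ + t₂)) (by positivity) (by positivity)
      (by field_simp; ring)
    convert key using 1
    ext w
    simp only [LinearMap.add_apply, LinearMap.smul_apply, smul_eq_mul, LinearMap.neg_apply]
    field_simp
    ring

lemma core_abs [FiniteDimensional ℝ W] (v : ι → W) (x : W) (r : ℕ) (hr : 0 < r)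
    (ht : Module.Dual ℝ W) (htv : ∀ i, ht (v i) = 1) (htx : ht x = r)
    (hint : ∀ h : Module.Dual ℝ W, (∀ i, 0 ≤ h (v i)) → h x = 0 → h = 0)
    (hpos : ∀ h : Module.Dual ℝ W, (∀ i, 0 ≤ h (v i)) → 0 ≤ h x)
    (I : AddSubgroup (Module.Dual ℝ W)) (hI : facetSet v x ⊆ I) (hIt : ht ∈ I)
    (hIv : ∀ f ∈ I, ∀ i, ∃ z : ℤ, f (v i) = z) :
    ∃ (κ : Type) (_ : Fintype κ) (u : κ → Module.Dual ℝ W),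
      (∀ j, u j ∈ I) ∧ (∀ j i, 0 ≤ u j (v i)) ∧ (∀ j, u j ≠ 0) ∧ ∑ j, u j = ht ∧
      (Fintype.card κ = r ∨ 2 * r + 1 ≤ Fintype.card κ + Module.finrank ℝ W) := by
  classical
  have hr' : (0 : ℝ) < r := by exact_mod_cast hr
  have hmem : (r : ℝ)⁻¹ • ht ∈ convexHull ℝ (facetSet v x) := by
    refine slice_sub_hull v x hint _ _ ⟨fun i => ?_, ?_⟩ (Nat.lt_succ_self _)
    · simp [htv]
    · simp [htx, hr'.ne']
  obtain ⟨τ, _, z, w, hz, haff, hw, hw1, hwz⟩ := eq_pos_convex_span_of_mem_convexHull hmem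
  have hzf : ∀ i, z i ∈ facetSet v x := fun i => hz ⟨i, rfl⟩
  have hlin : LinearIndependent ℝ z := by
    rw [linearIndependent_iff']
    intro s g hg
    refine affineIndependent_iff.1 haff s g ?_ hg
    have := congrArg (fun f => f x) hg
    simpa [LinearMap.sum_apply, fun i => (hzf i).1.2] using this
  have hcard : Fintype.card τ ≤ Module.finrank ℝ W := by
    have := hlin.fintype_card_le_finrank
    rwa [Subspace.dual_finrank_eq] at this
  -- the coefficients
  set c : τ → ℕ := fun i => ⌊(r : ℝ) * w i⌋₊ with hc
  have hcle : ∀ i, (c i : ℝ) ≤ r * w i := fun i => Nat.floor_le (by have := hw i; positivity)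
  have hclt : ∀ i, (r : ℝ) * w i < c i + 1 := fun i => Nat.lt_floor_add_one _
  have hsum : ∑ i, ((r : ℝ) * w i) • z i = ht := by
    simp_rw [mul_smul]
    rw [← Finset.smul_sum, hwz, smul_smul, mul_inv_cancel₀ hr'.ne', one_smul]
  set q : Module.Dual ℝ W := ht - ∑ i, c i • z i with hq
  have hqI : q ∈ I := by
    refine I.sub_mem hIt (I.sum_mem fun i _ => I.nsmul_mem (hI (hzf i)) _)
  have hqe : q = ∑ i, ((r : ℝ) * w i - c i) • z i := by
    rw [hq, ← hsum, ← Finset.sum_sub_distrib]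
    refine Finset.sum_congr rfl fun i _ => ?_
    ext y
    simp
    ring
  have hqv : ∀ i, 0 ≤ q (v i) := by
    intro i
    rw [hqe, LinearMap.sum_apply]
    refine Finset.sum_nonneg fun j _ => ?_
    simp only [LinearMap.smul_apply, smul_eq_mul]
    exact mul_nonneg (by linarith [hcle j]) ((hzf j).1.1 i)
  have hcx : (∑ i, c i • z i) x = ((∑ i, c i : ℕ) : ℝ) := by
    rw [LinearMap.sum_apply]; push_cast
    refine Finset.sum_congr rfl fun i _ => ?_
    simp [(hzf i).1.2]
  have hz0 : ∀ i, z i ≠ 0 := by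
    intro i e
    have := (hzf i).1.2
    simp [e] at this
  -- the complementary element
  set q' : Module.Dual ℝ W := ∑ i, z i - q with hq'
  have hq'I : q' ∈ I := I.sub_mem (I.sum_mem fun i _ => hI (hzf i)) hqI
  have hq'v : ∀ i, 1 ≤ q' (v i) := by
    intro i
    have hpos' : 0 < q' (v i) := by
      have e : q' (v i) = ∑ j, (1 - ((r : ℝ) * w j - c j)) * z j (v i) := by
        rw [hq', hqe, ← Finset.sum_sub_distrib, LinearMap.sum_apply]
        refine Finset.sum_congr rfl fun j _ => ?_
        simp; ring
      rw [e]
      have hnn : ∀ j ∈ Finset.univ, 0 ≤ (1 - ((r : ℝ) * w j - c j)) * z j (v i) := fun j _ =>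
        mul_nonneg (by linarith [hclt j]) ((hzf j).1.1 i)
      refine lt_of_le_of_ne (Finset.sum_nonneg hnn) fun e0 => ?_
      have := (Finset.sum_eq_zero_iff_of_nonneg hnn).1 e0.symm
      have hzz : ∀ j, z j (v i) = 0 := by
        intro j
        rcases mul_eq_zero.1 (this j (Finset.mem_univ _)) with h | h
        · linarith [hclt j]
        · exact h
      have h1 := htv i
      rw [← hsum, LinearMap.sum_apply] at h1
      simp [hzz] at h1
    obtain ⟨m, hm⟩ := hIv q' hq'I i
    rw [hm] at hpos' ⊢
    exact_mod_cast (Int.cast_pos.1 hpos' : 0 < m)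
  have hfinal : 2 * r ≤ (∑ i, c i) + Fintype.card τ := by
    have h1 := hpos (q' - ht) (fun i => by simp [htv]; linarith [hq'v i])
    simp only [hq', hq, LinearMap.sub_apply, htx, hcx] at h1
    have h2 : (∑ i, z i) x = Fintype.card τ := by
      rw [LinearMap.sum_apply]
      simp [fun i => (hzf i).1.2]
    rw [h2] at h1
    push_cast at h1
    have : (2 * r : ℝ) ≤ ((∑ i, c i : ℕ) : ℝ) + Fintype.card τ := by push_cast; linarith
    exact_mod_cast this
  by_cases hq0 : q = 0
  · refine ⟨Σ i : τ, Fin (c i), inferInstance, fun p => z p.1, fun j => hI (hzf _),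
      fun j i => (hzf _).1.1 i, fun j => hz0 _, ?_, Or.inl ?_⟩
    · rw [Fintype.sum_sigma]
      simp
      exact (sub_eq_zero.1 hq0).symm
    · simp only [Fintype.card_sigma, Fintype.card_fin]
      have := congrArg (fun f => f x) (sub_eq_zero.1 hq0)
      simp only [hcx, htx] at this
      exact_mod_cast this.symm
  · refine ⟨Option (Σ i : τ, Fin (c i)), inferInstance, fun p => p.elim q (fun p => z p.1),
      ?_, ?_, ?_, ?_, Or.inr ?_⟩
    · rintro (_ | j)
      exacts [hqI, hI (hzf _)]
    · rintro (_ | j) i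
      exacts [hqv i, (hzf _).1.1 i]
    · rintro (_ | j)
      exacts [hq0, hz0 _]
    · rw [Fintype.sum_option]
      simp only [Option.elim]
      rw [Fintype.sum_sigma]
      simp [hq]
    · simp only [Fintype.card_option, Fintype.card_sigma, Fintype.card_fin]
      omega
end CoreAbs

section CayleyPart

/-- the integer lattice as a submodule -/
def latZ (N : ℕ) : Submodule ℤ (Fin N → ℝ) where
  carrier := {x | IsLatticePt x}
  add_mem' := by
    intro a b ha hb i
    obtain ⟨z, hz⟩ := ha i
    obtain ⟨w, hw⟩ := hb i
    exact ⟨z + w, by simp [hz, hw]⟩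
  zero_mem' := fun i => ⟨0, by simp⟩
  smul_mem' := by
    intro c a ha i
    obtain ⟨z, hz⟩ := ha i
    exact ⟨c * z, by simp [hz]⟩

lemma mem_latZ {N : ℕ} {x : Fin N → ℝ} : x ∈ latZ N ↔ IsLatticePt x := Iff.rfl

lemma lattice_basis {N : ℕ} (K : Submodule ℤ (Fin N → ℝ)) (hK : K ≤ latZ N) :
    ∃ (n : ℕ) (b : Fin n → (Fin N → ℝ)), LinearIndependent ℝ b ∧ (∀ j, b j ∈ K) ∧
      ∀ x ∈ K, ∃ m : Fin n → ℤ, x = ∑ j, (m j : ℝ) • b j := by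
  have hdisc : DiscreteTopology K := by
    refine discreteTopology_iff_isOpen_singleton_zero.mpr ⟨Metric.ball 0 1, Metric.isOpen_ball, ?_⟩
    ext x
    rw [Set.mem_preimage, mem_ball_zero_iff, pi_norm_lt_iff zero_lt_one, Set.mem_singleton_iff]
    simp_rw [← Submodule.coe_eq_zero, funext_iff, Pi.zero_apply, Real.norm_eq_abs]
    refine forall_congr' (fun i => ?_)
    obtain ⟨y, hy⟩ := hK x.2 i
    rw [hy, ← Int.cast_abs, ← Int.cast_one, Int.cast_lt, Int.abs_lt_one_iff, Int.cast_eq_zero]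
  let B := Module.finBasis ℤ K
  have hspan : Submodule.span ℤ (Set.range fun j => (B j : Fin N → ℝ)) = K := by
    have h1 : (Set.range fun j => (B j : Fin N → ℝ)) = K.subtype '' Set.range B := by
      rw [← Set.range_comp]; rfl
    rw [h1, Submodule.span_image, B.span_eq, Submodule.map_top, Submodule.range_subtype]
  refine ⟨_, fun j => (B j : Fin N → ℝ), ?_, fun j => (B j).2, ?_⟩
  · rw [linearIndependent_iff_card_eq_finrank_span]
    have hd : DiscreteTopology
        (Submodule.span ℤ (Set.range fun j => (B j : Fin N → ℝ))) := by
      rw [hspan]; exact hdisc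
    have := Real.finrank_eq_int_finrank_of_discrete hd
    rw [this]
    unfold Set.finrank
    rw [hspan]
    simp
  · intro x hx
    refine ⟨fun j => B.repr ⟨x, hx⟩ j, ?_⟩
    have := B.sum_repr ⟨x, hx⟩
    have h2 := congrArg K.subtype this
    rw [map_sum] at h2
    simp only [Submodule.subtype_apply, Submodule.coe_smul] at h2
    refine h2.symm.trans ?_
    exact Finset.sum_congr rfl fun j _ => (Int.cast_smul_eq_zsmul ℝ _ _).symm

/-- appending as a linear map -/
def appendL (n k : ℕ) : ((Fin n → ℝ) × (Fin k → ℝ)) →ₗ[ℝ] (Fin (n + k) → ℝ) where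
  toFun p := Fin.append p.1 p.2
  map_add' := by
    intro p q
    ext i
    refine Fin.addCases (fun i => ?_) (fun i => ?_) i <;> simp
  map_smul' := by
    intro c p
    ext i
    refine Fin.addCases (fun i => ?_) (fun i => ?_) i <;> simp

lemma cayley_of_decomp {N k : ℕ} (V : Finset (Fin N → ℝ)) (hVne : V.Nonempty)
    (hVl : ∀ v ∈ V, IsLatticePt v) (u : Fin k → ((Fin N → ℝ) →ᵃ[ℝ] ℝ))
    (hint : ∀ i, IsIntegralOn (convexHull ℝ (V : Set (Fin N → ℝ))) (u i))
    (hnn : ∀ i, ∀ v ∈ V, 0 ≤ u i v) (hsum : ∀ v ∈ V, ∑ i, u i v = 1)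
    (hne : ∀ i, ∃ v ∈ V, u i v ≠ 0) :
    ∃ (n : ℕ) (Q : Fin k → Set (Fin n → ℝ)),
      n + k ≤ polyDim (convexHull ℝ (V : Set (Fin N → ℝ))) + 1 ∧
      (∀ i, IsLatticePolytope (Q i)) ∧
      LatticeIso (convexHull ℝ (V : Set (Fin N → ℝ))) (cayley Q) := by
  classical
  unfold polyDim LatticeIso
  unfold IsIntegralOn at hint
  rw [affineSpan_convexHull] at *
  set A := affineSpan ℝ (V : Set (Fin N → ℝ)) with hA
  have hVA : ∀ v ∈ V, v ∈ A := fun v hv => subset_affineSpan ℝ _ hv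
  -- values are 0 / 1
  have h01 : ∀ v ∈ V, ∀ i, u i v ≠ 0 → u i v = 1 ∧ ∀ j, j ≠ i → u j v = 0 := by
    intro v hv i hi
    have hge : 1 ≤ u i v := by
      obtain ⟨z, hz⟩ := hint i v (hVA v hv) (hVl v hv)
      have h1 := lt_of_le_of_ne (hnn i v hv) hi.symm
      rw [hz] at h1 ⊢
      exact_mod_cast (Int.cast_pos.1 h1 : 0 < z)
    have hs := hsum v hv
    rw [← Finset.add_sum_erase _ _ (Finset.mem_univ i)] at hs
    have hrest : ∀ j ∈ Finset.univ.erase i, 0 ≤ u j v := fun j _ => hnn j v hv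
    have h0 := Finset.sum_nonneg hrest
    refine ⟨by linarith, fun j hj => ?_⟩
    exact (Finset.sum_eq_zero_iff_of_nonneg hrest).1 (by linarith) j (by simp [hj])
  choose p hpV hp using hne
  have hup : ∀ i j, u j (p i) = if j = i then 1 else 0 := by
    intro i j
    split_ifs with h
    · subst h; exact (h01 _ (hpV j) j (hp j)).1
    · exact (h01 _ (hpV i) i (hp i)).2 j h
  have hpA : ∀ i, p i ∈ A := fun i => hVA _ (hpV i)
  have hsumA : ∀ y ∈ A, ∑ i, u i y = 1 := by
    intro y hy
    let su : (Fin N → ℝ) →ᵃ[ℝ] ℝ :=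
      (Fintype.linearCombination ℝ (fun _ : Fin k => (1 : ℝ))).toAffineMap.comp (AffineMap.pi u)
    have hsu : ∀ y, su y = ∑ i, u i y := by
      intro y; simp [su, Fintype.linearCombination_apply]
    have h1 : Set.EqOn su
        (AffineMap.const ℝ (Fin N → ℝ) (1 : ℝ)) A := by
      apply AffineMap.eqOn_affineSpan
      intro v hv
      rw [hsu]; exact hsum v hv
    rw [← hsu]; exact h1 hy
  obtain ⟨v₀, hv₀⟩ := hVne
  have hk : 0 < k := by
    rcases Nat.eq_zero_or_pos k with h | h
    · subst h
      have := hsum v₀ hv₀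
      simp at this
    · exact h
  let i₀ : Fin k := ⟨0, hk⟩
  -- residual
  have hres : ∀ y ∈ A, y - ∑ i, u i y • p i =
      (y - p i₀) - ∑ i, u i y • (p i - p i₀) := by
    intro y hy
    simp only [smul_sub, Finset.sum_sub_distrib, ← Finset.sum_smul, hsumA y hy, one_smul]
    abel
  have hresA : ∀ y ∈ A, y - ∑ i, u i y • p i ∈ A.direction := by
    intro y hy
    rw [hres y hy]
    refine Submodule.sub_mem _ (AffineSubspace.vsub_mem_direction hy (hpA i₀))
      (Submodule.sum_mem _ fun i _ => Submodule.smul_mem _ _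
        (AffineSubspace.vsub_mem_direction (hpA i) (hpA i₀)))
  have hlin : ∀ i (a b : Fin N → ℝ), (u i).linear (a - b) = u i a - u i b := by
    intro i a b
    exact (u i).linearMap_vsub a b
  have hres0 : ∀ y ∈ A, ∀ j, (u j).linear (y - ∑ i, u i y • p i) = 0 := by
    intro y hy j
    rw [hres y hy, map_sub, map_sum, hlin]
    simp only [map_smul, hlin, hup, smul_eq_mul, mul_sub, Finset.sum_sub_distrib,
      ← Finset.sum_mul, hsumA y hy]
    simp
  -- the kernel lattice
  let R : Submodule ℝ (Fin N → ℝ) := A.direction ⊓ ⨅ i, LinearMap.ker (u i).linear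
  have hRmem : ∀ x, x ∈ R ↔ x ∈ A.direction ∧ ∀ i, (u i).linear x = 0 := by
    intro x; simp [R, Submodule.mem_iInf]
  let K : Submodule ℤ (Fin N → ℝ) := latZ N ⊓ R.restrictScalars ℤ
  obtain ⟨n, b, hbl, hbK, hbspan⟩ := lattice_basis K inf_le_left
  have hKy : ∀ y ∈ A, IsLatticePt y → y - ∑ i, u i y • p i ∈ K := by
    intro y hy hyl
    refine ⟨?_, (hRmem _).2 ⟨hresA y hy, hres0 y hy⟩⟩
    refine (latZ N).sub_mem hyl ((latZ N).sum_mem fun i _ => ?_)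
    obtain ⟨z, hz⟩ := hint i y hy hyl
    rw [hz, Int.cast_smul_eq_zsmul]
    exact (latZ N).smul_mem z (hVl _ (hpV i))
  -- dimension count
  have hdim : n + k ≤ Module.finrank ℝ A.direction + 1 := by
    have hbR : n ≤ Module.finrank ℝ R := by
      have : LinearIndependent ℝ (fun j => (⟨b j, (hbK j).2⟩ : R)) :=
        LinearIndependent.of_comp R.subtype hbl
      simpa using this.fintype_card_le_finrank
    let Ψ : A.direction →ₗ[ℝ] (Fin k → ℝ) :=
      (LinearMap.pi fun i => (u i).linear) ∘ₗ A.direction.subtype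
    have h1 := LinearMap.finrank_range_add_finrank_ker Ψ
    have h2 : Module.finrank ℝ R ≤ Module.finrank ℝ (LinearMap.ker Ψ) := by
      let e : R →ₗ[ℝ] LinearMap.ker Ψ := LinearMap.codRestrict _
        (LinearMap.codRestrict A.direction R.subtype (fun x => ((hRmem _).1 x.2).1))
        (fun x => by
          rw [LinearMap.mem_ker]
          ext i
          exact ((hRmem _).1 x.2).2 i)
      refine LinearMap.finrank_le_finrank_of_injective (f := e) ?_
      intro x y hxy
      have := congrArg (fun z : LinearMap.ker Ψ => ((z : A.direction) : Fin N → ℝ)) hxy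
      exact Subtype.ext this
    have h3 : LinearMap.range Ψ ⊔ Submodule.span ℝ {(Pi.single i₀ 1 : Fin k → ℝ)} = ⊤ := by
      rw [eq_top_iff, ← (Pi.basisFun ℝ (Fin k)).span_eq, Submodule.span_le]
      rintro _ ⟨i, rfl⟩
      have e : (Pi.basisFun ℝ (Fin k)) i = Ψ ⟨p i - p i₀,
          AffineSubspace.vsub_mem_direction (hpA i) (hpA i₀)⟩ + Pi.single i₀ 1 := by
        ext j
        have e1 : Ψ ⟨p i - p i₀, AffineSubspace.vsub_mem_direction (hpA i) (hpA i₀)⟩ j =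
          u j (p i) - u j (p i₀) := hlin j (p i) (p i₀)
        rw [Pi.add_apply, e1]
        simp [hup, Pi.single_apply]
      rw [e]
      exact Submodule.add_mem_sup ⟨_, rfl⟩ (Submodule.mem_span_singleton_self _)
    have h4 := Submodule.finrank_add_le_finrank_add_finrank (LinearMap.range Ψ)
      (Submodule.span ℝ {(Pi.single i₀ 1 : Fin k → ℝ)})
    rw [h3, finrank_top, Module.finrank_fin_fun] at h4
    have h5 : Module.finrank ℝ (Submodule.span ℝ {(Pi.single i₀ 1 : Fin k → ℝ)}) ≤ 1 :=
      (finrank_span_le_card _).trans (by simp)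
    omega
  -- the coordinate map
  obtain ⟨c, hc⟩ := LinearMap.exists_leftInverse_of_injective (Fintype.linearCombination ℝ b)
    (LinearMap.ker_eq_bot.2 (linearIndependent_iff_injective_fintypeLinearCombination.1 hbl))
  have hcb : ∀ a : Fin n → ℝ, c (∑ j, a j • b j) = a := by
    intro a
    have := LinearMap.congr_fun hc a
    simpa [Fintype.linearCombination_apply] using this
  have hcK : ∀ x ∈ K, IsLatticePt (c x) := by
    intro x hx
    obtain ⟨m, hm⟩ := hbspan x hx
    rw [hm, hcb fun j => (m j : ℝ)]
    exact fun j => ⟨m j, rfl⟩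
  have hcK' : ∀ x ∈ K, ∑ j, c x j • b j = x := by
    intro x hx
    obtain ⟨m, hm⟩ := hbspan x hx
    rw [hm, hcb fun j => (m j : ℝ)]
  let h : (Fin N → ℝ) →ᵃ[ℝ] (Fin N → ℝ) := AffineMap.id ℝ _ -
    (Fintype.linearCombination ℝ p).toAffineMap.comp (AffineMap.pi u)
  have hh : ∀ y, h y = y - ∑ i, u i y • p i := by
    intro y; simp [h, Fintype.linearCombination_apply]
  let f : (Fin N → ℝ) →ᵃ[ℝ] (Fin (n + k) → ℝ) :=
    (appendL n k).toAffineMap.comp ((c.toAffineMap.comp h).prod (AffineMap.pi u))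
  have hf : ∀ y, f y = Fin.append (c (y - ∑ i, u i y • p i)) (fun i => u i y) := by
    intro y
    rw [← hh]; rfl
  let g : (Fin (n + k) → ℝ) →ₗ[ℝ] (Fin N → ℝ) :=
    Fintype.linearCombination ℝ (Fin.append b p)
  have hg : ∀ a t, g (Fin.append a t) = ∑ j, a j • b j + ∑ i, t i • p i := by
    intro a t
    simp [g, Fintype.linearCombination_apply, Fin.sum_univ_add]
  have hgfV : ∀ v ∈ V, g (f v) = v := by
    intro v hv
    rw [hf, hg, hcK' _ (hKy v (hVA v hv) (hVl v hv))]
    abel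
  have hgf : ∀ x ∈ A, g (f x) = x := by
    intro x hx
    have h1 : Set.EqOn (g.toAffineMap.comp f) (AffineMap.id ℝ _) A := by
      apply AffineMap.eqOn_affineSpan
      intro v hv
      exact hgfV v hv
    exact h1 hx
  -- the factors
  let S : Fin k → Finset (Fin n → ℝ) := fun i =>
    (V.filter fun v => u i v ≠ 0).image fun v => c (v - p i)
  have hfS : ∀ v ∈ V, ∀ i, u i v ≠ 0 → f v = Fin.append (c (v - p i)) (Pi.single i 1) := by
    intro v hv i hi
    obtain ⟨h1, h2⟩ := h01 v hv i hi
    have e : (fun j => u j v) = Pi.single i 1 := by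
      ext j
      by_cases hj : j = i
      · subst hj; simp [h1]
      · simp [hj, h2 j hj]
    have e2 : ∑ j, u j v • p j = p i := by
      rw [Finset.sum_eq_single i]
      · simp [h1]
      · intro j _ hj; simp [h2 j hj]
      · simp
    rw [hf, e, e2]
  let Q : Fin k → Set (Fin n → ℝ) := fun i => convexHull ℝ (S i : Set (Fin n → ℝ))
  have hcay : f '' convexHull ℝ (V : Set (Fin N → ℝ)) = cayley Q := by
    rw [AffineMap.image_convexHull]
    apply Set.Subset.antisymm
    · refine convexHull_min ?_ (convex_convexHull ℝ _)
      rintro _ ⟨v, hv, rfl⟩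
      have : ∃ i, u i v ≠ 0 := by
        by_contra hcon
        push Not at hcon
        have := hsum v hv
        simp [hcon] at this
      obtain ⟨i, hi⟩ := this
      apply subset_convexHull
      refine Set.mem_iUnion.2 ⟨i, c (v - p i), ?_, (hfS v hv i hi).symm⟩
      apply subset_convexHull
      exact Finset.mem_coe.2 (Finset.mem_image.2 ⟨v, Finset.mem_filter.2 ⟨hv, hi⟩, rfl⟩)
    · refine convexHull_min ?_ (convex_convexHull ℝ _)
      refine Set.iUnion_subset fun i => ?_
      let ap : (Fin n → ℝ) →ᵃ[ℝ] (Fin (n + k) → ℝ) :=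
        (appendL n k).toAffineMap.comp ((AffineMap.id ℝ _).prod
          (AffineMap.const ℝ _ (Pi.single i (1 : ℝ))))
      have hap : (fun x : Fin n → ℝ => Fin.append x (Pi.single i (1 : ℝ))) = ap := by
        ext x; rfl
      rw [hap, AffineMap.image_convexHull]
      apply convexHull_mono
      rintro _ ⟨x, hx, rfl⟩
      obtain ⟨v, hv, rfl⟩ := Finset.mem_image.1 (Finset.mem_coe.1 hx)
      obtain ⟨hv, hi⟩ := Finset.mem_filter.1 hv
      exact ⟨v, hv, hfS v hv i hi⟩
  have hPA : convexHull ℝ (V : Set (Fin N → ℝ)) ⊆ A := convexHull_subset_affineSpan _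
  have hspanQ : affineSpan ℝ (cayley Q) = A.map f := by
    rw [← hcay, ← AffineSubspace.map_span, affineSpan_convexHull]
  refine ⟨n, Q, hdim, ?_, f, g.toAffineMap, hcay, ?_, hgf, ?_, ?_, ?_⟩
  · intro i
    refine ⟨S i, ?_, ?_, rfl⟩
    · exact ⟨_, Finset.mem_image.2 ⟨p i, Finset.mem_filter.2 ⟨hpV i, hp i⟩, rfl⟩⟩
    · intro x hx
      obtain ⟨v, hv, rfl⟩ := Finset.mem_image.1 hx
      obtain ⟨hv, hi⟩ := Finset.mem_filter.1 hv
      have h1 := hKy v (hVA v hv) (hVl v hv)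
      obtain ⟨h1', h2'⟩ := h01 v hv i hi
      have e2 : ∑ j, u j v • p j = p i := by
        rw [Finset.sum_eq_single i]
        · simp [h1']
        · intro j _ hj; simp [h2' j hj]
        · simp
      rw [e2] at h1
      exact hcK _ h1
  · rw [← hcay, Set.image_image]
    ext x
    constructor
    · rintro ⟨y, hy, rfl⟩
      change g (f y) ∈ _
      rw [hgf y (hPA hy)]; exact hy
    · intro hx
      exact ⟨x, hx, hgf x (hPA hx)⟩
  · intro y hy
    rw [hspanQ] at hy
    obtain ⟨x, hx, rfl⟩ := hy
    change f (g (f x)) = f x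
    rw [hgf x hx]
  · intro x hx hxl i
    rw [hf]
    refine Fin.addCases (fun j => ?_) (fun j => ?_) i
    · rw [Fin.append_left]
      exact hcK _ (hKy x hx hxl) j
    · rw [Fin.append_right]
      exact hint j x hx hxl
  · intro y _ hyl
    change g y ∈ latZ N
    have : g y = ∑ i, y i • (Fin.append b p) i := Fintype.linearCombination_apply ..
    rw [this]
    refine (latZ N).sum_mem fun i _ => ?_
    obtain ⟨z, hz⟩ := hyl i
    rw [hz, Int.cast_smul_eq_zsmul]
    refine (latZ N).smul_mem z ?_
    refine Fin.addCases (fun j => ?_) (fun j => ?_) i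
    · rw [Fin.append_left]; exact (hbK j).1
    · rw [Fin.append_right]; exact hVl _ (hpV j)

end CayleyPart

section Bridge

lemma finrank_span_lift {N : ℕ} (S : Set (Fin N → ℝ)) (hS : S.Nonempty) (t : ℝ) (ht : t ≠ 0) :
    Module.finrank ℝ (Submodule.span ℝ ((fun y => (y, t)) '' S)) =
      Module.finrank ℝ (affineSpan ℝ S).direction + 1 := by
  obtain ⟨y₀, hy₀⟩ := hS
  let W := Submodule.span ℝ ((fun y : Fin N → ℝ => (y, t)) '' S)
  let D := (affineSpan ℝ S).direction
  have hD : D = vectorSpan ℝ S := direction_affineSpan ℝ S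
  -- forward map
  have key : ∀ w ∈ W, w.1 - (w.2 / t) • y₀ ∈ D := by
    intro w hw
    refine Submodule.span_induction ?_ ?_ ?_ ?_ hw
    · rintro _ ⟨y, hy, rfl⟩
      simp only [div_self ht, one_smul]
      rw [hD]
      exact vsub_mem_vectorSpan ℝ hy hy₀
    · simp
    · intro a b _ _ ha hb
      have := D.add_mem ha hb
      convert this using 1
      simp only [Prod.fst_add, Prod.snd_add, add_div, add_smul]
      abel
    · intro c a _ ha
      have := D.smul_mem c ha
      convert this using 1
      simp only [Prod.smul_fst, Prod.smul_snd, smul_sub, smul_smul, smul_eq_mul, mul_div_assoc]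
  have key2 : ∀ x ∈ D, (x, (0 : ℝ)) ∈ W := by
    intro x hx
    rw [hD, vectorSpan_def] at hx
    refine Submodule.span_induction ?_ ?_ ?_ ?_ hx
    · rintro _ ⟨a, ha, b, hb, rfl⟩
      have := W.sub_mem (Submodule.subset_span ⟨a, ha, rfl⟩) (Submodule.subset_span ⟨b, hb, rfl⟩)
      simpa using this
    · exact W.zero_mem
    · intro a b _ _ ha hb
      simpa using W.add_mem ha hb
    · intro c a _ ha
      simpa using W.smul_mem c ha
  have key3 : (y₀, t) ∈ W := Submodule.subset_span ⟨y₀, hy₀, rfl⟩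
  let T : (D × ℝ) →ₗ[ℝ] W := LinearMap.codRestrict W
    ((LinearMap.inl ℝ (Fin N → ℝ) ℝ ∘ₗ D.subtype).coprod
      (LinearMap.toSpanSingleton ℝ ((Fin N → ℝ) × ℝ) (y₀, t)))
    (fun p => by
      simp only [LinearMap.coprod_apply]
      exact W.add_mem (key2 _ p.1.2) (W.smul_mem _ key3))
  have hT : ∀ p, ((T p : W) : (Fin N → ℝ) × ℝ) = ((p.1 : Fin N → ℝ) + p.2 • y₀, p.2 * t) := by
    intro p; simp [T]
  have hTb : Function.Bijective T := by
    constructor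
    · intro p q hpq
      have h1 := congrArg (fun z : W => (z : (Fin N → ℝ) × ℝ)) hpq
      simp only [hT, Prod.mk.injEq] at h1
      have h2 : p.2 = q.2 := mul_right_cancel₀ ht h1.2
      have h3 := h1.1
      rw [h2] at h3
      exact Prod.ext (Subtype.ext (add_right_cancel h3)) h2
    · intro w
      refine ⟨(⟨_, key w w.2⟩, (w : (Fin N → ℝ) × ℝ).2 / t), Subtype.ext ?_⟩
      rw [hT]
      ext1
      · simp
      · simp [ht]
  have := (LinearEquiv.ofBijective T hTb).finrank_eq
  rw [Module.finrank_prod, Module.finrank_self] at this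
  exact this.symm

lemma intr_step {N : ℕ} (P : Set (Fin N → ℝ)) (x y : Fin N → ℝ)
    (hx : x ∈ intrinsicInterior ℝ P) (hy : y ∈ P) :
    ∃ ε : ℝ, 0 < ε ∧ x + ε • (x - y) ∈ P := by
  obtain ⟨x', hx', rfl⟩ := mem_intrinsicInterior.1 hx
  let y' : affineSpan ℝ P := ⟨y, subset_affineSpan ℝ P hy⟩
  have hmem : ∀ t : ℝ, (x' : Fin N → ℝ) + t • ((x' : Fin N → ℝ) - y) ∈ affineSpan ℝ P := by
    intro t
    have := AffineSubspace.smul_vsub_vadd_mem (affineSpan ℝ P) t x'.2 y'.2 x'.2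
    rw [vadd_eq_add, vsub_eq_sub, add_comm] at this
    exact this
  let γ : ℝ → affineSpan ℝ P := fun t => ⟨_, hmem t⟩
  have hγ : Continuous γ := by
    refine Continuous.subtype_mk ?_ _
    fun_prop
  have h0 : γ 0 = x' := by
    apply Subtype.ext; simp [γ]
  have hev : ∀ᶠ t in nhds (0 : ℝ), γ t ∈ interior ((↑) ⁻¹' P : Set (affineSpan ℝ P)) := by
    apply hγ.continuousAt.eventually_mem
    rw [h0]
    exact isOpen_interior.mem_nhds hx'
  obtain ⟨ε, hε, hb⟩ := Metric.eventually_nhds_iff.1 hev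
  refine ⟨ε / 2, by positivity, ?_⟩
  have := interior_subset (hb (y := ε / 2) (by
    rw [Real.dist_eq, sub_zero, abs_of_pos (by positivity)]; linarith))
  exact this

lemma decomp {N : ℕ} (V : Finset (Fin N → ℝ)) (hVne : V.Nonempty)
    (hVl : ∀ v ∈ V, IsLatticePt v) (r : ℕ) (hr : 0 < r)
    (hrefl : IsReflexivePolytope ((r : ℝ) • convexHull ℝ (V : Set (Fin N → ℝ))))
    (hd : 0 < polyDim (convexHull ℝ (V : Set (Fin N → ℝ)))) :
    ∃ (k : ℕ) (u : Fin k → ((Fin N → ℝ) →ᵃ[ℝ] ℝ)),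
      (∀ i, IsIntegralOn (convexHull ℝ (V : Set (Fin N → ℝ))) (u i)) ∧
      (∀ i, ∀ v ∈ V, 0 ≤ u i v) ∧ (∀ v ∈ V, ∑ i, u i v = 1) ∧
      (∀ i, ∃ v ∈ V, u i v ≠ 0) ∧
      (k = r ∨ 2 * r ≤ k + polyDim (convexHull ℝ (V : Set (Fin N → ℝ)))) := by
  classical
  have hr' : (0 : ℝ) < r := by exact_mod_cast hr
  set P := convexHull ℝ (V : Set (Fin N → ℝ)) with hPdef
  have hPspan : affineSpan ℝ P = affineSpan ℝ (V : Set (Fin N → ℝ)) := affineSpan_convexHull _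
  have hdirr : (affineSpan ℝ ((r : ℝ) • P)).direction = (affineSpan ℝ P).direction := by
    rw [← AffineSubspace.smul_span, AffineSubspace.direction_smul hr'.ne']
  obtain ⟨x₀, hx₀, hx₀l, hfac⟩ := hrefl
  let W := Submodule.span ℝ ((fun y : Fin N → ℝ => (y, (1 : ℝ))) '' (V : Set (Fin N → ℝ)))
  have hWdim : Module.finrank ℝ W = polyDim P + 1 := by
    rw [finrank_span_lift _ hVne 1 one_ne_zero, polyDim, hPspan]
  have hWA : ∀ y ∈ affineSpan ℝ P, (y, (1 : ℝ)) ∈ W := by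
    intro y hy
    rw [hPspan] at hy
    refine affineSpan_induction hy (fun y hy => Submodule.subset_span ⟨y, hy, rfl⟩) ?_
    intro c a b w ha hb hw
    have := W.add_mem (W.smul_mem c (W.sub_mem ha hb)) hw
    simpa using this
  have hPA : P ⊆ affineSpan ℝ P := subset_affineSpan ℝ P
  have hWr : ∀ y ∈ (r : ℝ) • P, (y, (r : ℝ)) ∈ W := by
    rintro _ ⟨p, hp, rfl⟩
    have := W.smul_mem (r : ℝ) (hWA p (hPA hp))
    simpa using this
  obtain ⟨e, he⟩ := W.subtype.exists_leftInverse_of_injective W.ker_subtype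
  have heW : ∀ w : W, e w = w := fun w => LinearMap.congr_fun he w
  have hVP : ∀ v ∈ V, v ∈ P := fun v hv => subset_convexHull ℝ _ hv
  let v : V → W := fun i => ⟨((i : Fin N → ℝ), 1), hWA _ (hPA (hVP _ i.2))⟩
  have hev : ∀ i : V, e ((i : Fin N → ℝ), 1) = v i := fun i => heW (v i)
  have hx₀P : x₀ ∈ (r : ℝ) • P := intrinsicInterior_subset hx₀
  let x : W := ⟨(x₀, r), hWr _ hx₀P⟩
  have hex : e (x₀, r) = x := heW x
  -- nonnegativity on the cone
  have hcone : ∀ f : Module.Dual ℝ W, (∀ i, 0 ≤ f (v i)) → ∀ p ∈ P, 0 ≤ f (e (p, 1)) := by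
    intro f hf p hp
    have hconv : Convex ℝ {p : Fin N → ℝ | 0 ≤ f (e (p, 1))} := by
      intro a ha b hb s t hs ht hst
      have e1 : ((s • a + t • b, 1) : (Fin N → ℝ) × ℝ) = s • (a, 1) + t • (b, 1) := by
        simp [hst]
      simp only [Set.mem_setOf_eq] at ha hb ⊢
      rw [e1, map_add, map_add, map_smul, map_smul, map_smul, map_smul, smul_eq_mul, smul_eq_mul]
      positivity
    refine convexHull_min ?_ hconv hp
    intro a ha
    have := hf ⟨a, ha⟩
    rw [← hev] at this
    exact this
  have hsc : ∀ p : Fin N → ℝ, e ((r : ℝ) • p, (r : ℝ)) = (r : ℝ) • e (p, 1) := by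
    intro p
    rw [← map_smul]; simp
  have hconer : ∀ f : Module.Dual ℝ W, (∀ i, 0 ≤ f (v i)) → ∀ y ∈ (r : ℝ) • P,
      0 ≤ f (e (y, r)) := by
    rintro f hf _ ⟨p, hp, rfl⟩
    change 0 ≤ f (e ((r : ℝ) • p, (r : ℝ)))
    rw [hsc, map_smul]
    exact mul_nonneg hr'.le (hcone f hf p hp)
  have hpos : ∀ h : Module.Dual ℝ W, (∀ i, 0 ≤ h (v i)) → 0 ≤ h x := by
    intro h hh
    have := hconer h hh x₀ hx₀P
    rwa [hex] at this
  have hzero : ∀ h : Module.Dual ℝ W, (∀ i, h (v i) = 0) → h = 0 := by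
    intro h hh
    have h1 : Set.EqOn (h ∘ₗ e) (0 : ((Fin N → ℝ) × ℝ) →ₗ[ℝ] ℝ) W := by
      apply LinearMap.eqOn_span
      rintro _ ⟨a, ha, rfl⟩
      have := hh ⟨a, ha⟩
      rw [← hev] at this
      simpa using this
    ext w
    have := h1 w.2
    simp only [LinearMap.comp_apply, heW] at this
    simpa using this
  have hint : ∀ h : Module.Dual ℝ W, (∀ i, 0 ≤ h (v i)) → h x = 0 → h = 0 := by
    intro h hh hx
    apply hzero
    intro i
    obtain ⟨ε, hε, hmem⟩ := intr_step _ x₀ ((r : ℝ) • (i : Fin N → ℝ)) hx₀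
      ⟨i, hVP _ i.2, rfl⟩
    have h1 := hconer h hh _ hmem
    have e1 : ((x₀ + ε • (x₀ - (r : ℝ) • (i : Fin N → ℝ)), (r : ℝ)) : (Fin N → ℝ) × ℝ) =
        (1 + ε) • (x₀, (r : ℝ)) - (ε * r) • ((i : Fin N → ℝ), (1 : ℝ)) := by
      ext1
      · simp only [Prod.fst_sub, Prod.smul_fst]
        module
      · simp; ring
    rw [e1, map_sub, map_sub, map_smul, map_smul, map_smul, map_smul, hex, hev, hx] at h1
    simp only [smul_eq_mul, mul_zero, zero_sub] at h1
    have h2 : 0 < ε * r := by positivity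
    have h3 := hh i
    nlinarith
  -- integral functionals
  let I : AddSubgroup (Module.Dual ℝ W) :=
    { carrier := {f | ∀ y ∈ affineSpan ℝ P, IsLatticePt y → ∃ z : ℤ, f (e (y, 1)) = z}
      add_mem' := by
        intro a b ha hb y hy hl
        obtain ⟨z, hz⟩ := ha y hy hl
        obtain ⟨w, hw⟩ := hb y hy hl
        exact ⟨z + w, by simp [hz, hw]⟩
      zero_mem' := fun y _ _ => ⟨0, by simp⟩
      neg_mem' := by
        intro a ha y hy hl
        obtain ⟨z, hz⟩ := ha y hy hl
        exact ⟨-z, by simp [hz]⟩ }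
  let ht : Module.Dual ℝ W := LinearMap.snd ℝ _ _ ∘ₗ W.subtype
  have hIt : ht ∈ I := by
    intro y hy _
    refine ⟨1, ?_⟩
    have : e (y, 1) = ⟨(y, 1), hWA y hy⟩ := heW ⟨(y, 1), hWA y hy⟩
    rw [this]; simp [ht]
  have hIv : ∀ f ∈ I, ∀ i, ∃ z : ℤ, f (v i) = z := by
    intro f hf i
    have := hf i (hPA (hVP _ i.2)) (hVl _ i.2)
    rwa [hev] at this
  have hI : facetSet v x ⊆ I := by
    rintro f ⟨⟨hf0, hf1⟩, hfu⟩
    let F : Set (Fin N → ℝ) := {y | y ∈ (r : ℝ) • P ∧ f (e (y, r)) = 0}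
    -- dimension of the zero set
    let Zw : Submodule ℝ W := Submodule.span ℝ (v '' {i | f (v i) = 0})
    have hann : Zw.dualAnnihilator = Submodule.span ℝ {f} := by
      apply le_antisymm
      · intro h hh
        rw [Submodule.mem_dualAnnihilator] at hh
        have := hfu (h - h x • f) (fun i hi => by
          simp [hi, hh _ (Submodule.subset_span ⟨i, hi, rfl⟩)]) (by simp [hf1])
        rw [sub_eq_zero] at this
        rw [this]
        exact Submodule.smul_mem _ _ (Submodule.mem_span_singleton_self f)
      · rw [Submodule.span_le, Set.singleton_subset_iff]
        rw [SetLike.mem_coe, Submodule.mem_dualAnnihilator]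
        intro w hw
        have : Zw ≤ LinearMap.ker f := by
          rw [Submodule.span_le]
          rintro _ ⟨i, hi, rfl⟩
          exact hi
        exact this hw
    have hf00 : f ≠ 0 := by
      intro h; simp [h] at hf1
    have hZdim : Module.finrank ℝ Zw + 1 = Module.finrank ℝ W := by
      rw [← Subspace.finrank_add_finrank_dualAnnihilator_eq Zw, hann, finrank_span_singleton hf00]
    have hZmap : Zw.map W.subtype = Submodule.span ℝ ((fun y : Fin N → ℝ => (y, (r : ℝ))) '' F) := by
      apply le_antisymm
      · rw [Submodule.map_span, Submodule.span_le]
        rintro _ ⟨_, ⟨i, hi, rfl⟩, rfl⟩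
        have hmem : (r : ℝ) • (i : Fin N → ℝ) ∈ F := by
          refine ⟨⟨i, hVP _ i.2, rfl⟩, ?_⟩
          rw [hsc, hev, map_smul]
          rw [Set.mem_setOf_eq] at hi
          simp [hi]
        have := Submodule.smul_mem _ ((r : ℝ)⁻¹)
          (Submodule.subset_span (R := ℝ) ⟨_, hmem, rfl⟩ :
            ((r : ℝ) • (i : Fin N → ℝ), (r : ℝ)) ∈
              Submodule.span ℝ ((fun y : Fin N → ℝ => (y, (r : ℝ))) '' F))
        simpa [smul_smul, hr'.ne'] using this
      · rw [Submodule.span_le]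
        rintro _ ⟨_, ⟨⟨p, hp, rfl⟩, hp0⟩, rfl⟩
        change f (e ((r : ℝ) • p, (r : ℝ))) = 0 at hp0
        rw [hsc, map_smul, smul_eq_mul, mul_eq_zero] at hp0
        have hp0' := hp0.resolve_left hr'.ne'
        rw [hPdef, Finset.convexHull_eq] at hp
        obtain ⟨w, hw0, hw1, rfl⟩ := hp
        rw [Finset.centerMass_eq_of_sum_1 _ _ hw1] at hp0' ⊢
        have e1 : ((∑ y ∈ V, w y • id y, (1 : ℝ)) : (Fin N → ℝ) × ℝ) =
            ∑ y ∈ V, w y • (y, (1 : ℝ)) := by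
          ext1
          · simp [Prod.fst_sum]
          · simp [Prod.snd_sum, hw1]
        have e2 : (((r : ℝ) • ∑ y ∈ V, w y • id y, (r : ℝ)) : (Fin N → ℝ) × ℝ) =
            (r : ℝ) • ∑ y ∈ V, w y • (y, (1 : ℝ)) := by
          rw [← e1]; simp
        rw [e1, map_sum, map_sum] at hp0'
        have hterm : ∀ y ∈ V, 0 ≤ f (e (w y • (y, (1 : ℝ)))) := by
          intro y hy
          rw [map_smul, map_smul]
          exact mul_nonneg (hw0 y hy) (hcone f hf0 y (hVP y hy))
        have hz := (Finset.sum_eq_zero_iff_of_nonneg hterm).1 hp0'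
        change ((r : ℝ) • ∑ y ∈ V, w y • id y, (r : ℝ)) ∈ Zw.map W.subtype
        rw [e2]
        refine Submodule.smul_mem _ _ (Submodule.sum_mem _ fun y hy => ?_)
        have h1 := hz y hy
        rw [map_smul, map_smul, smul_eq_mul, mul_eq_zero] at h1
        rcases h1 with h1 | h1
        · rw [h1, zero_smul]; exact Submodule.zero_mem _
        · refine Submodule.smul_mem _ _ ⟨v ⟨y, hy⟩, Submodule.subset_span ⟨⟨y, hy⟩, ?_, rfl⟩, rfl⟩
          have h2 : e (y, 1) = v ⟨y, hy⟩ := hev ⟨y, hy⟩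
          rw [Set.mem_setOf_eq, ← h2]
          exact h1
    -- a zero vertex
    obtain ⟨i₀, hi₀⟩ : ∃ i, f (v i) = 0 := by
      by_contra hcon
      have : {i | f (v i) = 0} = ∅ := by
        ext i; simp only [Set.mem_setOf_eq, Set.mem_empty_iff_false, iff_false]
        exact fun h => hcon ⟨i, h⟩
      have hz : Module.finrank ℝ Zw = 0 := by
        have hZb : Zw = ⊥ := by
          change Submodule.span ℝ (v '' {i | f (v i) = 0}) = ⊥
          rw [this, Set.image_empty, Submodule.span_empty]
        rw [hZb, finrank_bot]
      omega
    have hVF : ∀ i : V, f (v i) = 0 → (r : ℝ) • (i : Fin N → ℝ) ∈ F := by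
      intro i hi
      refine ⟨⟨i, hVP _ i.2, rfl⟩, ?_⟩
      rw [hsc, hev, map_smul, hi, smul_zero]
    have hFne : F.Nonempty := ⟨_, hVF i₀ hi₀⟩
    have hFfacet : IsFacet ((r : ℝ) • P) F := by
      refine ⟨fun _ => ?_, hFne, ?_⟩
      · let l : (Fin N → ℝ) →ₗ[ℝ] ℝ := - (f ∘ₗ e ∘ₗ LinearMap.inl ℝ _ _)
        have hl : ∀ y, l y = f (e (0, (r : ℝ))) - f (e (y, (r : ℝ))) := by
          intro y
          rw [← map_sub, ← map_sub]
          simp [l, ← map_neg]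
        refine ⟨LinearMap.toContinuousLinearMap l, ?_⟩
        ext y
        simp only [F, Set.mem_setOf_eq, LinearMap.coe_toContinuousLinearMap', hl]
        constructor
        · rintro ⟨hy, hy0⟩
          refine ⟨hy, fun z hz => ?_⟩
          have := hconer f hf0 z hz
          linarith
        · rintro ⟨hy, hy0⟩
          refine ⟨hy, ?_⟩
          have h1 := hy0 _ (hVF i₀ hi₀).1
          have h2 := (hVF i₀ hi₀).2
          have h3 := hconer f hf0 y hy
          linarith
      · have h1 := finrank_span_lift F hFne (r : ℝ) hr'.ne'
        rw [← hZmap, Submodule.finrank_map_subtype_eq] at h1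
        have h2 : polyDim ((r : ℝ) • P) = polyDim P := by
          unfold polyDim; rw [hdirr]
        rw [h2]
        unfold polyDim at hWdim ⊢
        omega
    obtain ⟨u, hui, huF⟩ := hfac F hFfacet
    -- the functional
    let L : ((Fin N → ℝ) × ℝ) →ₗ[ℝ] ℝ := (-u.linear).coprod
      (LinearMap.toSpanSingleton ℝ ℝ ((u x₀ + 1 - u 0) / r))
    have hL : ∀ y t, L (y, t) = - u.linear y + t * ((u x₀ + 1 - u 0) / r) := by
      intro y t; simp [L]
    have hu0 : ∀ y, u y = u.linear y + u 0 := by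
      intro y; exact congrFun (AffineMap.decomp u) y
    have hLr : ∀ y, L (y, r) = u x₀ + 1 - u y := by
      intro y
      rw [hL, mul_div_cancel₀ _ hr'.ne', hu0 y]; ring
    have hfL : f = L ∘ₗ W.subtype := by
      rw [← sub_eq_zero]
      apply hfu
      · intro i hi
        have h1 := hLr ((r : ℝ) • (i : Fin N → ℝ))
        rw [huF _ (hVF i hi), sub_self] at h1
        have h2 : (((r : ℝ) • (i : Fin N → ℝ), (r : ℝ)) : (Fin N → ℝ) × ℝ) =
          (r : ℝ) • ((i : Fin N → ℝ), (1 : ℝ)) := by simp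
        rw [h2, map_smul, smul_eq_mul, mul_eq_zero] at h1
        have h3 := h1.resolve_left hr'.ne'
        rw [LinearMap.sub_apply, hi, LinearMap.comp_apply]
        change 0 - L ((i : Fin N → ℝ), (1 : ℝ)) = 0
        rw [h3, sub_zero]
      · rw [LinearMap.sub_apply, hf1, LinearMap.comp_apply]
        change 1 - L (x₀, (r : ℝ)) = 0
        rw [hLr]; ring
    intro y hy hyl
    have hyf : f (e (y, 1)) = L (y, 1) := by
      have h1 : e (y, 1) = ⟨(y, 1), hWA y hy⟩ := heW ⟨(y, 1), hWA y hy⟩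
      rw [h1, hfL]; rfl
    have hif : L ((i₀ : Fin N → ℝ), (1 : ℝ)) = 0 := by
      have h1 := hi₀
      rw [hfL] at h1
      exact h1
    have hdiff : L (y, 1) = u x₀ - u (x₀ + (y - (i₀ : Fin N → ℝ))) := by
      rw [hL] at hif ⊢
      rw [hu0 (x₀ + (y - (i₀ : Fin N → ℝ))), hu0 x₀, map_add, map_sub]
      rw [hu0 x₀] at hif
      linarith
    have hmemA : x₀ + (y - (i₀ : Fin N → ℝ)) ∈ affineSpan ℝ ((r : ℝ) • P) := by
      have h1 : y - (i₀ : Fin N → ℝ) ∈ (affineSpan ℝ ((r : ℝ) • P)).direction := by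
        rw [hdirr]
        exact AffineSubspace.vsub_mem_direction hy (hPA (hVP _ i₀.2))
      have := AffineSubspace.vadd_mem_of_mem_direction h1 (subset_affineSpan ℝ _ hx₀P)
      rwa [vadd_eq_add, add_comm] at this
    obtain ⟨z₁, hz₁⟩ := hui x₀ (subset_affineSpan ℝ _ hx₀P) hx₀l
    obtain ⟨z₂, hz₂⟩ := hui _ hmemA ((latZ N).add_mem hx₀l ((latZ N).sub_mem hyl (hVl _ i₀.2)))
    exact ⟨z₁ - z₂, by rw [hyf, hdiff, hz₁, hz₂]; simp⟩
  obtain ⟨κ, _, u, hu1, hu2, hu3, hu4, hu5⟩ := core_abs v x r hr ht (fun i => by simp [ht, v])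
    (by simp [ht, x]) hint hpos I hI hIt hIv
  let eq := (Fintype.equivFin κ).symm
  let hat : (Fin N → ℝ) →ᵃ[ℝ] ((Fin N → ℝ) × ℝ) :=
    (AffineMap.id ℝ _).prod (AffineMap.const ℝ _ (1 : ℝ))
  have hu : ∀ i y, ((u (eq i) ∘ₗ e).toAffineMap.comp hat) y = u (eq i) (e (y, 1)) := fun i y => rfl
  refine ⟨Fintype.card κ, fun i => (u (eq i) ∘ₗ e).toAffineMap.comp hat, ?_, ?_, ?_, ?_, ?_⟩
  · intro i y hy hl
    rw [hu]
    exact hu1 _ y hy hl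
  · intro i a ha
    rw [hu]
    have := hev ⟨a, ha⟩
    simp only at this
    rw [this]
    exact hu2 _ _
  · intro a ha
    simp only [hu]
    rw [eq.sum_comp (fun j => u j (e (a, 1))), ← LinearMap.sum_apply, hu4]
    have := hev ⟨a, ha⟩
    simp only at this
    rw [this]
    simp [ht, v]
  · intro i
    by_contra hcon
    push Not at hcon
    apply hu3 (eq i)
    apply hzero
    intro a
    have := hcon a a.2
    rw [hu, hev] at this
    exact this
  · rw [hWdim] at hu5
    omega

end Bridge

/-- A Gorenstein polytope of dimension `d` and degree `s` with `d ≥ 2s` is isomorphic to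
a Cayley polytope of lattice polytopes in `ℝ^n` with `n ≤ 2s - 1`. -/
theorem stmt10 {N d s : ℕ} (P : Set (Fin N → ℝ))
    (hP : IsLatticePolytope P) (hGor : IsGorenstein P)
    (hd : polyDim P = d) (hs : polyDeg P = s) (h : 2 * s ≤ d) :
    ∃ (n l : ℕ) (Q : Fin l → Set (Fin n → ℝ)), n ≤ 2 * s - 1 ∧
      (∀ i, IsLatticePolytope (Q i)) ∧ LatticeIso P (cayley Q) := by
  obtain ⟨V, hVne, hVl, rfl⟩ := hP
  obtain ⟨r, hr, hrefl⟩ := hGor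
  have hcod : polyCodeg (convexHull ℝ (V : Set (Fin N → ℝ))) ≤ r := by
    refine Nat.sInf_le ⟨hr, ?_⟩
    obtain ⟨x, hx, hxl, -⟩ := hrefl
    exact fun hh => hh x hx hxl
  unfold polyDeg at hs
  rcases Nat.eq_zero_or_pos d with h0 | hpos
  · obtain ⟨n, Q, hn, hQ, hiso⟩ := cayley_of_decomp (k := 1) V hVne hVl
      (fun _ => AffineMap.const ℝ (Fin N → ℝ) (1 : ℝ))
      (fun _ _ _ _ => ⟨1, by simp⟩) (fun _ _ _ => by simp) (fun _ _ => by simp)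
      (fun _ => ⟨hVne.choose, hVne.choose_spec, by simp⟩)
    exact ⟨n, 1, Q, by omega, hQ, hiso⟩
  · obtain ⟨k, u, h1, h2, h3, h4, h5⟩ := decomp V hVne hVl r hr hrefl (by omega)
    obtain ⟨n, Q, hn, hQ, hiso⟩ := cayley_of_decomp V hVne hVl u h1 h2 h3 h4
    exact ⟨n, k, Q, by omega, hQ, hiso⟩
end
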